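/- Let 𝔐 be a weight matrix. If 𝔐 is R-regular and has R-moderate growth, then the ring of germs at 0 ∈ ℝ of complex-valued E^{𝔐}-functions (Roumieu) has property (D); if 𝔐 is B-regular and has B-moderate growth, then the ring of germs at 0 ∈ ℝ of complex-valued E^{(𝔐)}-functions (Beurling) has property (D). Here property (D) means: for every function f defined on an open neighborhood of 0 in ℝ and every integer j ≥ 1, if f^j and f^{j+1} are of the respective class on some open neighborhood of 0, then f is of that class on some open neighborhood of 0. -/

import Mathlib

open Filter Set Asymptotics MeasureTheory

noncomputable section

/-- `M` is a weight sequence: `M 0 = 1`, positive, `M 1 ≥ 1`, log-convex and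
`M k ^ (1/k) → ∞`. -/
def IsWeightSeq (M : ℕ → ℝ) : Prop :=
  M 0 = 1 ∧ (∀ k, 0 < M k) ∧ 1 ≤ M 1 ∧
    (∀ k : ℕ, 1 ≤ k → M k ^ 2 ≤ M (k - 1) * M (k + 1)) ∧
    Tendsto (fun k : ℕ => M k ^ (1 / (k : ℝ))) atTop atTop

/-- The sequence `m k = M k / k!`. -/
def mseq (M : ℕ → ℝ) : ℕ → ℝ := fun k => M k / (Nat.factorial k : ℝ)

/-- Log-convexity of a sequence. -/
def LogConvexSeq (m : ℕ → ℝ) : Prop := ∀ k : ℕ, 1 ≤ k → m k ^ 2 ≤ m (k - 1) * m (k + 1)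

/-- `m k ^ (1/k) → ∞`. -/
def RootTendsToInfty (m : ℕ → ℝ) : Prop :=
  Tendsto (fun k : ℕ => m k ^ (1 / (k : ℝ))) atTop atTop

/-- Moderate growth of a sequence. -/
def ModerateGrowth (M : ℕ → ℝ) : Prop :=
  ∃ C : ℝ, 0 < C ∧ ∀ j k : ℕ, M (j + k) ≤ C ^ (j + k) * M j * M k

/-- Derivation closedness of a sequence. -/
def DerivClosed (M : ℕ → ℝ) : Prop :=
  ∃ C : ℝ, 0 < C ∧ ∀ k : ℕ, M (k + 1) ≤ C ^ (k + 1) * M k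

/-- Non-quasianalyticity: `∑_{k≥1} M (k-1) / M k = ∑_{k≥1} 1/μ_k < ∞`. -/
def NonQuasianalytic (M : ℕ → ℝ) : Prop := Summable fun k : ℕ => M k / M (k + 1)

/-- Quasianalyticity: `∑_{k≥1} 1/μ_k = ∞`. -/
def Quasianalytic (M : ℕ → ℝ) : Prop := ¬ NonQuasianalytic M

/-- The associated function `h_m (t) = inf_k m k * t ^ k`. -/
def hFun (m : ℕ → ℝ) (t : ℝ) : ℝ := ⨅ k : ℕ, m k * t ^ k

/-- `Γ̄_m (t) = min {k | h_m t = m k * t ^ k}`. -/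
def GammaBar (m : ℕ → ℝ) (t : ℝ) : ℕ := sInf {k : ℕ | hFun m t = m k * t ^ k}

/-- `Γ̲_m (t) = min {k | m (k+1) / m k ≥ 1 / t}`. -/
def GammaLow (m : ℕ → ℝ) (t : ℝ) : ℕ := sInf {k : ℕ | 1 / t ≤ m (k + 1) / m k}

/-- The set whose supremum is `mg (M, N)`. -/
def mgSet (M N : ℕ → ℝ) : Set ℝ :=
  {x | ∃ j k : ℕ, 1 ≤ j + k ∧ x = (M (j + k) / (N j * N k)) ^ (1 / (j + k : ℝ))}

/-- `mg (M, N) = sup_{j+k ≥ 1} (M (j+k) / (N j * N k)) ^ (1/(j+k))`. -/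
def mg (M N : ℕ → ℝ) : ℝ := sSup (mgSet M N)

/-- `mg (M, N) < ∞`. -/
def MgFinite (M N : ℕ → ℝ) : Prop := BddAbove (mgSet M N)

/-- A weight sequence is regular: `m k ^ (1/k) → ∞`, derivation closed, and
`Γ̄_m (C t) ≤ Γ̲_m t` for some `C ≥ 1`. -/
def RegularWS (M : ℕ → ℝ) : Prop :=
  RootTendsToInfty (mseq M) ∧ DerivClosed M ∧
    ∃ C : ℝ, 1 ≤ C ∧ ∀ t : ℝ, 0 < t → GammaBar (mseq M) (C * t) ≤ GammaLow (mseq M) t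

/-- `f` is of class `E^{M}` (Roumieu) on the open set `U`. -/
def RoumieuOn {E : Type*} [NormedAddCommGroup E] [NormedSpace ℝ E]
    (M : ℕ → ℝ) (f : E → ℂ) (U : Set E) : Prop :=
  ContDiffOn ℝ (⊤ : ℕ∞) f U ∧
    ∀ V : Set E, IsOpen V → IsCompact (closure V) → closure V ⊆ U →
      ∃ C σ : ℝ, 0 < C ∧ 0 < σ ∧
        ∀ x ∈ V, ∀ k : ℕ, ‖iteratedFDerivWithin ℝ k f U x‖ ≤ C * σ ^ k * M k

/-- `f` is of class `E^{(M)}` (Beurling) on the open set `U`. -/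
def BeurlingOn {E : Type*} [NormedAddCommGroup E] [NormedSpace ℝ E]
    (M : ℕ → ℝ) (f : E → ℂ) (U : Set E) : Prop :=
  ContDiffOn ℝ (⊤ : ℕ∞) f U ∧
    ∀ V : Set E, IsOpen V → IsCompact (closure V) → closure V ⊆ U →
      ∀ σ : ℝ, 0 < σ → ∃ C : ℝ, 0 < C ∧
        ∀ x ∈ V, ∀ k : ℕ, ‖iteratedFDerivWithin ℝ k f U x‖ ≤ C * σ ^ k * M k

/-- A weight matrix: a nonempty, pointwise totally ordered family of weight sequences. -/
def IsWeightMatrix (W : Set (ℕ → ℝ)) : Prop :=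
  W.Nonempty ∧ (∀ M ∈ W, IsWeightSeq M) ∧
    ∀ M ∈ W, ∀ N ∈ W, (∀ k, M k ≤ N k) ∨ (∀ k, N k ≤ M k)

/-- R-regularity of a weight matrix. -/
def RRegular (W : Set (ℕ → ℝ)) : Prop :=
  (∀ M ∈ W, RootTendsToInfty (mseq M)) ∧
    (∀ M ∈ W, ∃ N ∈ W, ∃ C : ℝ, 1 ≤ C ∧ ∀ j : ℕ, M (j + 1) ≤ C ^ (j + 1) * N j) ∧
    (∀ M ∈ W, ∃ N ∈ W, ∃ C : ℝ, 1 ≤ C ∧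
      ∀ t : ℝ, 0 < t → GammaBar (mseq N) (C * t) ≤ GammaLow (mseq M) t)

/-- B-regularity of a weight matrix. -/
def BRegular (W : Set (ℕ → ℝ)) : Prop :=
  (∀ M ∈ W, RootTendsToInfty (mseq M)) ∧
    (∀ M ∈ W, ∃ N ∈ W, ∃ C : ℝ, 1 ≤ C ∧ ∀ j : ℕ, N (j + 1) ≤ C ^ j * M j) ∧
    (∀ M ∈ W, ∃ N ∈ W, ∃ C : ℝ, 1 ≤ C ∧
      ∀ t : ℝ, 0 < t → GammaBar (mseq M) (C * t) ≤ GammaLow (mseq N) t)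

/-- R-moderate growth of a weight matrix. -/
def RModerateGrowth (W : Set (ℕ → ℝ)) : Prop := ∀ M ∈ W, ∃ N ∈ W, MgFinite M N

/-- B-moderate growth of a weight matrix. -/
def BModerateGrowth (W : Set (ℕ → ℝ)) : Prop := ∀ M ∈ W, ∃ N ∈ W, MgFinite N M

/-- `f` is of class `E^{W}` (Roumieu, weight matrix) on the open set `U`. -/
def MatrixRoumieuOn {E : Type*} [NormedAddCommGroup E] [NormedSpace ℝ E]
    (W : Set (ℕ → ℝ)) (f : E → ℂ) (U : Set E) : Prop :=
  ContDiffOn ℝ (⊤ : ℕ∞) f U ∧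
    ∀ V : Set E, IsOpen V → IsCompact (closure V) → closure V ⊆ U →
      ∃ M ∈ W, ∃ C σ : ℝ, 0 < C ∧ 0 < σ ∧
        ∀ x ∈ V, ∀ k : ℕ, ‖iteratedFDerivWithin ℝ k f U x‖ ≤ C * σ ^ k * M k

/-- `f` is of class `E^{(W)}` (Beurling, weight matrix) on the open set `U`. -/
def MatrixBeurlingOn {E : Type*} [NormedAddCommGroup E] [NormedSpace ℝ E]
    (W : Set (ℕ → ℝ)) (f : E → ℂ) (U : Set E) : Prop :=
  ContDiffOn ℝ (⊤ : ℕ∞) f U ∧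
    ∀ V : Set E, IsOpen V → IsCompact (closure V) → closure V ⊆ U →
      ∀ M ∈ W, ∀ σ : ℝ, 0 < σ → ∃ C : ℝ, 0 < C ∧
        ∀ x ∈ V, ∀ k : ℕ, ‖iteratedFDerivWithin ℝ k f U x‖ ≤ C * σ ^ k * M k

/-- `ω` is a weight function. -/
def IsWeightFunction (ω : ℝ → ℝ) : Prop :=
  ContinuousOn ω (Ici 0) ∧ MonotoneOn ω (Ici 0) ∧ (∀ t ∈ Ici (0 : ℝ), 0 ≤ ω t) ∧
    ((fun t => ω (2 * t)) =O[atTop] ω) ∧ (ω =o[atTop] fun t : ℝ => t) ∧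
    ((fun t => Real.log t) =o[atTop] ω) ∧ ConvexOn ℝ (Ici 0) fun t => ω (Real.exp t)

/-- The Young conjugate `φ*_ω (s) = sup_{t ≥ 0} (s t - ω (e^t))`. -/
def phiStar (ω : ℝ → ℝ) (s : ℝ) : ℝ := sSup ((fun t => s * t - ω (Real.exp t)) '' Ici 0)

/-- Non-quasianalyticity of a weight function. -/
def NonQuasianalyticW (ω : ℝ → ℝ) : Prop := IntegrableOn (fun t => ω t / t ^ 2) (Ici 1)

/-- `f` is of class `E^{ω}` (Roumieu) on the open set `U`. -/
def OmegaRoumieuOn {E : Type*} [NormedAddCommGroup E] [NormedSpace ℝ E]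
    (ω : ℝ → ℝ) (f : E → ℂ) (U : Set E) : Prop :=
  ContDiffOn ℝ (⊤ : ℕ∞) f U ∧
    ∀ V : Set E, IsOpen V → IsCompact (closure V) → closure V ⊆ U →
      ∃ C ρ : ℝ, 0 < C ∧ 0 < ρ ∧
        ∀ x ∈ V, ∀ k : ℕ,
          ‖iteratedFDerivWithin ℝ k f U x‖ ≤ C * Real.exp (phiStar ω (ρ * k) / ρ)

/-- `f` is of class `E^{(ω)}` (Beurling) on the open set `U`. -/
def OmegaBeurlingOn {E : Type*} [NormedAddCommGroup E] [NormedSpace ℝ E]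
    (ω : ℝ → ℝ) (f : E → ℂ) (U : Set E) : Prop :=
  ContDiffOn ℝ (⊤ : ℕ∞) f U ∧
    ∀ V : Set E, IsOpen V → IsCompact (closure V) → closure V ⊆ U →
      ∀ ρ : ℝ, 0 < ρ → ∃ C : ℝ, 0 < C ∧
        ∀ x ∈ V, ∀ k : ℕ,
          ‖iteratedFDerivWithin ℝ k f U x‖ ≤ C * Real.exp (phiStar ω (ρ * k) / ρ)

/-- The open ellipse `Ω_ε` with vertices `± cosh ε` and co-vertices `± i sinh ε`. -/
def OmegaE (ε : ℝ) : Set ℂ :=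
  {z : ℂ | (z.re / Real.cosh ε) ^ 2 + (z.im / Real.sinh ε) ^ 2 < 1}

/-- The sequence space `Λ^{M}`. -/
def Lambda (M : ℕ → ℝ) : Set (ℕ → ℂ) :=
  {c | ∃ ρ : ℝ, 0 < ρ ∧ ∃ C : ℝ, ∀ k, ‖c k‖ ≤ C * ρ ^ k * M k}

/-- `L(M)`: all non-quasianalytic weight sequences `N ≥ M` with `n = N/k!` log-convex. -/
def LM (M : ℕ → ℝ) : Set (ℕ → ℝ) :=
  {N | IsWeightSeq N ∧ NonQuasianalytic N ∧ (∀ k, M k ≤ N k) ∧ LogConvexSeq (mseq N)}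

/-- A quasianalytic weight sequence `M` is intersectable if `Λ^{M} = ⋂_{N ∈ L(M)} Λ^{N}`. -/
def Intersectable (M : ℕ → ℝ) : Prop := Lambda M = ⋂ N ∈ LM M, Lambda N

/-!
Let `p = f ^ j` and `q = f ^ (j + 1)`, so that `f = q / p` off the zeros. At a point and a scale
`a`, replace `p` and `q` by Taylor polynomials `P` and `Q` whose degree `K` is chosen according to
`a`. On the real line `Q ^ j - P ^ (j + 1)` is small; it is a polynomial, so by the two constants
theorem it is small on a complex disc. The smooth quotient `U = Q P̄ / (|P|² + ε²)` is therefore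
almost a `j`-th root of `P`, and `|∂̄U|` is at most a small multiple of the logarithmic derivative
`|P' / P|`, whose integral is `O(K)`, as one sees by summing over the roots of `P`. Subtracting the
Cauchy transform of `∂̄U` yields a holomorphic `F`, still close to `U` in `L¹`, and the mean value
property makes `F ^ j - P` and `F P - Q` small; this forces `F` to be close to `f` on the real
line. Thus `f` has holomorphic approximants on complex discs of every radius `a`, the error
decaying with `a` as fast as the Taylor remainders allow. Comparing approximants at dyadic scales,
by the two constants theorem and Cauchy's estimates, gives the derivatives of `f` and their bounds.
The regularity conditions relate the degrees `K` to the weights, and moderate growth absorbs the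
powers of the error lost on the way.
-/

theorem add_I_pow_mul_mem_ball {x₀ R : ℝ} {z u : ℂ} (hz : ‖z - x₀‖ < R / 3)
    (hre : |u.re| ≤ |z.im|) (him : |u.im| ≤ |z.im|) (k : ℕ) :
    z + Complex.I ^ k * u ∈ Metric.ball (x₀ : ℂ) R := by
  have him_z : |z.im| < R / 3 := by
    simpa using (Complex.abs_im_le_norm (z - x₀)).trans_lt (by simpa using hz)
  rw [mem_ball_iff_norm]
  calc ‖z + Complex.I ^ k * u - x₀‖ ≤ ‖z - x₀‖ + ‖u‖ := by
        simpa [add_sub_right_comm] using norm_add_le (z - x₀) (Complex.I ^ k * u)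
    _ ≤ ‖z - x₀‖ + (|u.re| + |u.im|) := by gcongr; exact u.norm_le_abs_re_add_abs_im
    _ < R := by linarith

theorem exists_add_I_pow_mul_im_eq_zero {z u : ℂ} (h : |u.re| = |z.im| ∨ |u.im| = |z.im|) :
    ∃ k ∈ Finset.range 4, (z + Complex.I ^ k * u).im = 0 := by
  simp only [abs_eq_abs] at h
  rcases h with (h | h) | (h | h)
  · exact ⟨3, by simp, by simp [h, Complex.I_pow_three]⟩
  · exact ⟨1, by simp, by simp [h]⟩
  · exact ⟨2, by simp, by simp [h]⟩
  · exact ⟨0, by simp, by simp [h]⟩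

theorem prod_le_pow_mul_of_exists_le {ι : Type*} {s : Finset ι} {n : ℕ} (hs : s.card = n + 1)
    {f : ι → ℝ} {B E : ℝ} (h0 : ∀ i ∈ s, 0 ≤ f i) (hB : ∀ i ∈ s, f i ≤ B)
    {i : ι} (hi : i ∈ s) (hE : f i ≤ E) : ∏ i ∈ s, f i ≤ B ^ n * E := by
  classical
  have hB0 : 0 ≤ B := (h0 i hi).trans (hB i hi)
  rw [← Finset.prod_erase_mul s f hi]
  gcongr
  · exact h0 i hi
  · calc ∏ j ∈ s.erase i, f j ≤ ∏ _j ∈ s.erase i, B :=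
          Finset.prod_le_prod (fun j hj ↦ h0 j (Finset.mem_of_mem_erase hj))
            fun j hj ↦ hB j (Finset.mem_of_mem_erase hj)
      _ = B ^ n := by
          rw [Finset.prod_const, Finset.card_erase_of_mem hi, hs, Nat.add_sub_cancel]

/-- The product of `G` over the four quarter turns about `z` is small on the whole boundary of the
square centred at `z` with a side on the real line. -/
theorem norm_pow_four_le_of_real_bound {x₀ R B E : ℝ} {G : ℂ → ℂ}
    (hG : DifferentiableOn ℂ G (Metric.ball (x₀ : ℂ) R))
    (hB : ∀ z ∈ Metric.ball (x₀ : ℂ) R, ‖G z‖ ≤ B)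
    (hE : ∀ y : ℝ, (y : ℂ) ∈ Metric.ball (x₀ : ℂ) R → ‖G y‖ ≤ E)
    {z : ℂ} (hz : ‖z - x₀‖ < R / 3) : ‖G z‖ ^ 4 ≤ B ^ 3 * E := by
  set D := Metric.ball (x₀ : ℂ) R
  let P : ℂ → ℂ := fun u ↦ ∏ k ∈ Finset.range 4, G (z + Complex.I ^ k * u)
  have hP : ∀ u : ℂ, |u.re| ≤ |z.im| → |u.im| ≤ |z.im| →
      |u.re| = |z.im| ∨ |u.im| = |z.im| → ‖P u‖ ≤ B ^ 3 * E := fun u hre him h ↦ by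
    obtain ⟨k, hk, hk0⟩ := exists_add_I_pow_mul_im_eq_zero h
    have hreal : z + Complex.I ^ k * u = ((z + Complex.I ^ k * u).re : ℝ) :=
      Complex.ext (by simp) (by simp [hk0])
    have hmem := add_I_pow_mul_mem_ball hz hre him
    rw [norm_prod]
    refine prod_le_pow_mul_of_exists_le (by simp) (fun _ _ ↦ norm_nonneg _)
      (fun _ _ ↦ hB _ (hmem _)) hk ?_
    rw [hreal]
    exact hE _ (hreal ▸ hmem k)
  suffices h : ‖P 0‖ ≤ B ^ 3 * E by simpa [P] using h
  rcases eq_or_ne z.im 0 with h0 | h0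
  · exact hP 0 (by simp) (by simp) (by simp [h0])
  have hpos : -|z.im| < |z.im| := neg_lt_self (abs_pos.2 h0)
  set S : Set ℂ := Ioo (-|z.im|) |z.im| ×ℂ Ioo (-|z.im|) |z.im|
  have hcl : ∀ u ∈ closure S, |u.re| ≤ |z.im| ∧ |u.im| ≤ |z.im| := fun u hu ↦ by
    simpa only [S, Complex.closure_reProdIm, closure_Ioo hpos.ne, Complex.mem_reProdIm, mem_Icc,
      ← abs_le] using hu
  have hfr : ∀ u ∈ frontier S, |u.re| = |z.im| ∨ |u.im| = |z.im| := fun u hu ↦ by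
    simp only [S, Complex.frontier_reProdIm, frontier_Ioo hpos] at hu
    rcases hu with ⟨-, h | h⟩ | ⟨h | h, -⟩ <;> simp_all
  refine Complex.norm_le_of_forall_mem_frontier_norm_le
    ((Metric.isBounded_Ioo _ _).reProdIm (Metric.isBounded_Ioo _ _))
    (DifferentiableOn.diffContOnCl ?_)
    (fun u hu ↦ have h := hcl u (frontier_subset_closure hu); hP u h.1 h.2 (hfr u hu))
    (subset_closure (show (0 : ℂ) ∈ S by simp [S, Complex.mem_reProdIm, h0]))
  refine DifferentiableOn.fun_finsetProd fun k _ ↦ hG.comp (by fun_prop) fun u hu ↦ ?_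
  exact add_I_pow_mul_mem_ball hz (hcl u hu).1 (hcl u hu).2 k

/-- The Wirtinger derivative `∂̄V = (∂V/∂x + i ∂V/∂y) / 2`. -/
def dbar (V : ℂ → ℂ) (z : ℂ) : ℂ := (fderiv ℝ V z 1 + Complex.I * fderiv ℝ V z Complex.I) / 2

theorem dbar_congr {V W : ℂ → ℂ} {z : ℂ} (h : V =ᶠ[nhds z] W) : dbar V z = dbar W z := by
  simp only [dbar, h.fderiv_eq]

theorem dbar_add_const (V : ℂ → ℂ) (c z : ℂ) : dbar (fun w ↦ V w + c) z = dbar V z := by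
  simp only [dbar, fderiv_add_const]

theorem dbar_mul {f g : ℂ → ℂ} {z : ℂ} (hf : DifferentiableAt ℝ f z)
    (hg : DifferentiableAt ℝ g z) :
    dbar (fun w ↦ f w * g w) z = dbar f z * g z + f z * dbar g z := by
  simp only [dbar, fderiv_fun_mul hf hg, add_apply, smul_apply, smul_eq_mul]
  ring

theorem dbar_eq_zero {f : ℂ → ℂ} {z : ℂ} (hf : DifferentiableAt ℂ f z) : dbar f z = 0 := by
  have hI : fderiv ℂ f z Complex.I = Complex.I * fderiv ℂ f z 1 := by
    rw [← smul_eq_mul, ← map_smul, smul_eq_mul, mul_one]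
  simp only [dbar, hf.fderiv_restrictScalars ℝ, ContinuousLinearMap.coe_restrictScalars', hI]
  linear_combination fderiv ℂ f z 1 / 2 * Complex.I_mul_I

theorem dbar_const (c z : ℂ) : dbar (fun _ ↦ c) z = 0 := dbar_eq_zero (differentiableAt_const c)

theorem dbar_conj {f : ℂ → ℂ} {f' z : ℂ} (hf : HasDerivAt f f' z) :
    dbar (fun w ↦ starRingEnd ℂ (f w)) z = starRingEnd ℂ f' := by
  have h : HasFDerivAt (fun w ↦ starRingEnd ℂ (f w)) _ z :=
    (Complex.conjCLE.toContinuousLinearMap.hasFDerivAt (x := f z)).comp z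
      (hf.hasFDerivAt.restrictScalars ℝ)
  have h1 : fderiv ℝ (fun w ↦ starRingEnd ℂ (f w)) z 1 = starRingEnd ℂ f' := by simp [h.fderiv]
  have hI : fderiv ℝ (fun w ↦ starRingEnd ℂ (f w)) z Complex.I =
      -Complex.I * starRingEnd ℂ f' := by simp [h.fderiv]
  rw [dbar, h1, hI]
  linear_combination -(starRingEnd ℂ f') / 2 * Complex.I_mul_I

theorem dbar_inv {f : ℂ → ℂ} {z : ℂ} (hf : DifferentiableAt ℝ f z) (h0 : f z ≠ 0) :
    dbar (fun w ↦ (f w)⁻¹) z = -dbar f z / f z ^ 2 := by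
  have hmul := dbar_mul hf (hf.fun_inv h0)
  have hone : (fun w ↦ f w * (f w)⁻¹) =ᶠ[nhds z] fun _ ↦ 1 := by
    filter_upwards [hf.continuousAt.eventually_ne h0] with w hw using mul_inv_cancel₀ hw
  rw [dbar_congr hone, dbar_const] at hmul
  field_simp at hmul ⊢
  linear_combination -hmul

theorem continuousOn_dbar {V : ℂ → ℂ} {s : Set ℂ} (hV : ContDiffOn ℝ 1 V s)
    (hs : IsOpen s) : ContinuousOn (dbar V) s := by
  have := hV.continuousOn_fderiv_of_isOpen hs le_rfl
  unfold dbar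
  fun_prop

theorem tsupport_dbar_subset (V : ℂ → ℂ) : tsupport (dbar V) ⊆ tsupport V := by
  refine closure_minimal (fun z hz ↦ ?_) isClosed_closure
  by_contra h
  exact hz ((dbar_congr (notMem_tsupport_iff_eventuallyEq.1 h)).trans (dbar_const 0 z))

theorem add_I_mul_eq_of_norm_eq_one (L : ℂ →L[ℝ] ℂ) {u : ℂ} (hu : ‖u‖ = 1) :
    L 1 + Complex.I * L Complex.I = u * (L u + Complex.I * L (Complex.I * u)) := by
  have hL : ∀ z : ℂ, L z = z.re * L 1 + z.im * L Complex.I := fun z ↦ by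
    conv_lhs => rw [show z = z.re • (1 : ℂ) + z.im • Complex.I by simp]
    rw [map_add, map_smul, map_smul, Complex.real_smul, Complex.real_smul]
  have hsq : ((u.re : ℂ) * u.re + u.im * u.im) = 1 := by
    have h : Complex.normSq u = 1 := by rw [Complex.normSq_eq_norm_sq, hu, one_pow]
    exact_mod_cast h
  have hu' : u = u.re + u.im * Complex.I := (Complex.re_add_im u).symm
  rw [hL u, hL (Complex.I * u), Complex.I_mul_re, Complex.I_mul_im, Complex.ofReal_neg]
  generalize (u.re : ℂ) = a, (u.im : ℂ) = b, L 1 = p, L Complex.I = q at *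
  rw [hu']
  linear_combination (-p - Complex.I * q) * hsq +
    (b ^ 2 * p - a * b * q) * Complex.I_mul_I

theorem hasDerivAt_comp_circleMap {V : ℂ → ℂ} (hV : Differentiable ℝ V) (w : ℂ) (r θ : ℝ) :
    HasDerivAt (fun t ↦ V (circleMap w r t))
      (r • fderiv ℝ V (circleMap w r θ) (Complex.I * Complex.exp (θ * Complex.I))) θ := by
  refine ((hV _).hasFDerivAt.comp_hasDerivAt θ (hasDerivAt_circleMap w r θ)).congr_deriv ?_
  rw [← map_smul, Complex.real_smul]
  congr 1
  simp only [circleMap]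
  ring

theorem integral_fderiv_tangent_circleMap {V : ℂ → ℂ} (hV : ContDiff ℝ 1 V) (w : ℂ) {r : ℝ}
    (hr : 0 < r) : ∫ θ in Ioo (-Real.pi) Real.pi,
      fderiv ℝ V (circleMap w r θ) (Complex.I * Complex.exp (θ * Complex.I)) = 0 := by
  have hd := hasDerivAt_comp_circleMap (hV.differentiable one_ne_zero) w r
  have : Continuous (fderiv ℝ V) := hV.continuous_fderiv one_ne_zero
  have := continuous_circleMap w r
  have hintegral := intervalIntegral.integral_eq_sub_of_hasDerivAt (fun θ _ ↦ hd θ)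
    (Continuous.intervalIntegrable (by fun_prop) (-Real.pi) Real.pi)
  have hper : circleMap w r Real.pi = circleMap w r (-Real.pi) := by
    simpa [two_mul] using periodic_circleMap w r (-Real.pi)
  rw [hper, sub_self, intervalIntegral.integral_smul, smul_eq_zero_iff_right hr.ne',
    intervalIntegral.integral_of_le (by linarith [Real.pi_pos])] at hintegral
  rwa [← integral_Ioc_eq_integral_Ioo]

theorem integral_fderiv_radial_circleMap {V : ℂ → ℂ} (hV : ContDiff ℝ 1 V)
    (hc : HasCompactSupport V) (w : ℂ) (θ : ℝ) : ∫ r in Ioi (0 : ℝ),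
      fderiv ℝ V (circleMap w r θ) (Complex.exp (θ * Complex.I)) = -V w := by
  have hray : ∀ r : ℝ, HasDerivAt (fun s : ℝ ↦ circleMap w s θ) (Complex.exp (θ * Complex.I)) r :=
    fun r ↦ by
      simpa [circleMap] using ((Complex.ofRealCLM.hasDerivAt (x := r)).mul_const
        (Complex.exp (θ * Complex.I))).const_add w
  have hcomp : ∀ r : ℝ, deriv (fun s : ℝ ↦ V (circleMap w s θ)) r =
      fderiv ℝ V (circleMap w r θ) (Complex.exp (θ * Complex.I)) := fun r ↦
    (((hV.differentiable one_ne_zero) _).hasFDerivAt.comp_hasDerivAt r (hray r)).deriv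
  have hiso : Isometry fun r : ℝ ↦ circleMap w r θ := Isometry.of_dist_eq fun r s ↦ by
    simp [circleMap, dist_eq_norm, ← sub_mul, ← Complex.ofReal_sub, Complex.norm_exp_ofReal_mul_I]
  have hsmooth : ContDiff ℝ 1 fun r : ℝ ↦ circleMap w r θ :=
    contDiff_const.add (Complex.ofRealCLM.contDiff.mul contDiff_const)
  simpa only [Function.comp_def, hcomp, circleMap_zero_radius, Function.const_apply] using
    HasCompactSupport.integral_Ioi_deriv_eq (hV.comp hsmooth)
      (hc.comp_isClosedEmbedding hiso.isClosedEmbedding) 0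

theorem integrableOn_fderiv_circleMap {V : ℂ → ℂ} (hV : ContDiff ℝ 1 V)
    (hc : HasCompactSupport V) (w : ℂ) {g : ℝ → ℂ} (hg : Continuous g) :
    IntegrableOn (fun p : ℝ × ℝ ↦ fderiv ℝ V (circleMap w p.1 p.2) (g p.2))
      (Ioi 0 ×ˢ Ioo (-Real.pi) Real.pi) := by
  obtain ⟨R, hR⟩ := hc.isBounded.subset_closedBall w
  have hcont : Continuous fun p : ℝ × ℝ ↦ fderiv ℝ V (circleMap w p.1 p.2) (g p.2) := by
    have := hV.continuous_fderiv one_ne_zero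
    unfold circleMap
    fun_prop
  have hbox : IntegrableOn (fun p : ℝ × ℝ ↦ fderiv ℝ V (circleMap w p.1 p.2) (g p.2))
      (Icc 0 R ×ˢ Icc (-Real.pi) Real.pi) :=
    hcont.continuousOn.integrableOn_compact (isCompact_Icc.prod isCompact_Icc)
  refine hbox.of_forall_sdiff_eq_zero (measurableSet_Ioi.prod measurableSet_Ioo) ?_
  rintro ⟨r, θ⟩ ⟨⟨hr, hθ⟩, hout⟩
  have hr : 0 < r := hr
  have hRr : R < r := not_le.1 fun h ↦ hout ⟨⟨hr.le, h⟩, hθ.1.le, hθ.2.le⟩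
  have hmem : circleMap w r θ ∉ tsupport (fderiv ℝ V) := fun h ↦ by
    have hdist : dist (circleMap w r θ) w = r := by
      simp [circleMap, dist_eq_norm, Complex.norm_exp_ofReal_mul_I, abs_of_pos hr]
    exact hRr.not_ge (hdist ▸ hR (tsupport_fderiv_subset ℝ h))
  simp only [image_eq_zero_of_notMem_tsupport hmem, zero_apply]

/-- The Cauchy transform `-π⁻¹ ∫ g(z) / (z - w) dA(z)`, normalised so that it inverts `∂̄`. -/
def cauchyTransform (g : ℂ → ℂ) (w : ℂ) : ℂ := -(Real.pi : ℂ)⁻¹ * ∫ z, g z / (z - w)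

theorem integral_div_sub_eq_polar (g : ℂ → ℂ) (w : ℂ) : ∫ z, g z / (z - w) =
    ∫ p in Ioi (0 : ℝ) ×ˢ Ioo (-Real.pi) Real.pi,
      g (circleMap w p.1 p.2) / Complex.exp (p.2 * Complex.I) := by
  rw [← integral_add_left_eq_self _ w, ← Complex.integral_comp_polarCoord_symm]
  refine setIntegral_congr_fun (measurableSet_Ioi.prod measurableSet_Ioo) ?_
  rintro ⟨r, θ⟩ ⟨hr, -⟩
  have hr : (r : ℂ) ≠ 0 := by exact_mod_cast (show (0 : ℝ) < r from hr).ne'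
  have he : Complex.polarCoord.symm (r, θ) = r * Complex.exp (θ * Complex.I) := by
    simp [Complex.polarCoord_symm_apply, Complex.exp_mul_I]
  simp only [he, add_sub_cancel_left, Complex.real_smul, circleMap]
  field_simp

theorem cauchyTransform_dbar {V : ℂ → ℂ} (hV : ContDiff ℝ 1 V) (hc : HasCompactSupport V) (w : ℂ) :
    cauchyTransform (dbar V) w = V w := by
  have hpi : (Real.pi : ℂ) ≠ 0 := by exact_mod_cast Real.pi_ne_zero
  let A : ℝ × ℝ → ℂ := fun p ↦
    fderiv ℝ V (circleMap w p.1 p.2) (Complex.exp (p.2 * Complex.I))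
  let B : ℝ × ℝ → ℂ := fun p ↦
    fderiv ℝ V (circleMap w p.1 p.2) (Complex.I * Complex.exp (p.2 * Complex.I))
  have hA : IntegrableOn A (Ioi 0 ×ˢ Ioo (-Real.pi) Real.pi) :=
    integrableOn_fderiv_circleMap hV hc w (g := fun θ ↦ Complex.exp (θ * Complex.I)) (by fun_prop)
  have hB : IntegrableOn B (Ioi 0 ×ˢ Ioo (-Real.pi) Real.pi) :=
    integrableOn_fderiv_circleMap hV hc w (g := fun θ ↦ Complex.I * Complex.exp (θ * Complex.I))
      (by fun_prop)
  have hsplit : ∀ p : ℝ × ℝ, dbar V (circleMap w p.1 p.2) / Complex.exp (p.2 * Complex.I) =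
      (1 / 2 : ℂ) * (A p + Complex.I * B p) := fun p ↦ by
    have := Complex.exp_ne_zero (p.2 * Complex.I)
    rw [dbar, add_I_mul_eq_of_norm_eq_one _ (Complex.norm_exp_ofReal_mul_I p.2)]
    field_simp
    rfl
  have hBint : ∫ p in Ioi (0 : ℝ) ×ˢ Ioo (-Real.pi) Real.pi, B p = 0 := by
    rw [Measure.volume_eq_prod] at hB ⊢
    rw [setIntegral_prod _ hB]
    exact setIntegral_eq_zero_of_forall_eq_zero fun r hr ↦
      integral_fderiv_tangent_circleMap hV w hr
  have hAint : ∫ p in Ioi (0 : ℝ) ×ˢ Ioo (-Real.pi) Real.pi, A p = -(2 * Real.pi * V w) := by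
    rw [Measure.volume_eq_prod] at hA ⊢
    rw [IntegrableOn, ← Measure.prod_restrict] at hA
    rw [← Measure.prod_restrict, integral_prod_symm _ hA]
    simp only [A, integral_fderiv_radial_circleMap hV hc, setIntegral_const, Complex.real_smul,
      Real.volume_real_Ioo_of_le (show -Real.pi ≤ Real.pi by linarith [Real.pi_pos])]
    push_cast
    ring
  rw [cauchyTransform, integral_div_sub_eq_polar]
  simp only [hsplit]
  rw [integral_const_mul, integral_add hA (hB.const_mul _), integral_const_mul, hAint, hBint]
  field_simp
  ring

theorem lintegral_ball_enorm_sub_inv (a : ℂ) {R : ℝ} (hR : 0 ≤ R) :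
    ∫⁻ z in Metric.ball a R, ‖(z - a)⁻¹‖ₑ = ENNReal.ofReal (2 * Real.pi * R) := by
  have hpolar : ∀ p ∈ polarCoord.target, ENNReal.ofReal p.1 •
      (Metric.ball a R).indicator (fun z ↦ ‖(z - a)⁻¹‖ₑ) (Complex.polarCoord.symm p + a) =
      (Ioo 0 R ×ˢ Ioo (-Real.pi) Real.pi).indicator 1 p := by
    rintro ⟨r, θ⟩ ⟨hr, hθ⟩
    have hr : 0 < r := hr
    have hnorm : ‖Complex.polarCoord.symm (r, θ)‖ = r := by
      rw [Complex.norm_polarCoord_symm, abs_of_pos hr]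
    by_cases hrR : r < R
    · rw [indicator_of_mem (by simpa [hnorm, abs_of_pos hr]), indicator_of_mem
        (show (r, θ) ∈ Ioo 0 R ×ˢ Ioo (-Real.pi) Real.pi from ⟨⟨hr, hrR⟩, hθ⟩),
        ← ofReal_norm, add_sub_cancel_right, norm_inv, hnorm, smul_eq_mul,
        ← ENNReal.ofReal_mul hr.le, mul_inv_cancel₀ hr.ne', ENNReal.ofReal_one, Pi.one_apply]
    · rw [indicator_of_notMem (by simpa [hnorm, abs_of_pos hr] using hrR), indicator_of_notMem
        (fun h ↦ hrR h.1.2), smul_zero]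
  have htarget : MeasurableSet polarCoord.target := polarCoord.open_target.measurableSet
  have hsub : Ioo 0 R ×ˢ Ioo (-Real.pi) Real.pi ⊆ polarCoord.target :=
    prod_mono_left Ioo_subset_Ioi_self
  rw [← lintegral_indicator measurableSet_ball, ← lintegral_add_right_eq_self _ a,
    ← Complex.lintegral_comp_polarCoord_symm, setLIntegral_congr_fun htarget hpolar,
    lintegral_indicator_one (measurableSet_Ioo.prod measurableSet_Ioo),
    Measure.restrict_apply (measurableSet_Ioo.prod measurableSet_Ioo),
    inter_eq_self_of_subset_left hsub, Measure.volume_eq_prod, Measure.prod_prod, Real.volume_Ioo,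
    Real.volume_Ioo, ← ENNReal.ofReal_mul (by linarith)]
  congr 1
  ring

theorem setLIntegral_enorm_sub_inv_le (s : Set ℂ) (a : ℂ) :
    ∫⁻ z in s, ‖(z - a)⁻¹‖ₑ ≤ ENNReal.ofReal (2 * Real.pi) + volume s := by
  have hle : ∀ z, ‖(z - a)⁻¹‖ₑ ≤ (Metric.ball a 1).indicator (fun z ↦ ‖(z - a)⁻¹‖ₑ) z + 1 :=
    fun z ↦ by
      by_cases hz : z ∈ Metric.ball a 1
      · rw [indicator_of_mem hz]
        exact le_self_add
      · rw [indicator_of_notMem hz, zero_add, ← ofReal_norm, norm_inv, ← ENNReal.ofReal_one]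
        rw [mem_ball_iff_norm, not_lt] at hz
        exact ENNReal.ofReal_le_ofReal (inv_le_one_of_one_le₀ hz)
  calc ∫⁻ z in s, ‖(z - a)⁻¹‖ₑ
      ≤ ∫⁻ z in s, ((Metric.ball a 1).indicator (fun z ↦ ‖(z - a)⁻¹‖ₑ) z + 1) :=
        lintegral_mono hle
    _ = (∫⁻ z in s, (Metric.ball a 1).indicator (fun z ↦ ‖(z - a)⁻¹‖ₑ) z) + volume s := by
        rw [lintegral_add_right _ measurable_const, setLIntegral_one]
    _ ≤ (∫⁻ z, (Metric.ball a 1).indicator (fun z ↦ ‖(z - a)⁻¹‖ₑ) z) + volume s := by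
        gcongr
        exact Measure.restrict_le_self
    _ = ENNReal.ofReal (2 * Real.pi) + volume s := by
        rw [lintegral_indicator measurableSet_ball, lintegral_ball_enorm_sub_inv a zero_le_one,
          mul_one]

theorem enorm_neg_pi_inv_mul_le (x : ENNReal) : ‖-(Real.pi : ℂ)⁻¹‖ₑ * x ≤ x := by
  refine mul_le_of_le_one_left zero_le ?_
  rw [← ofReal_norm, norm_neg, norm_inv, Complex.norm_of_nonneg Real.pi_pos.le,
    ← ENNReal.ofReal_one]
  exact ENNReal.ofReal_le_ofReal (inv_le_one_of_one_le₀ (by linarith [Real.pi_gt_three]))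

theorem enorm_cauchyTransform_le_lintegral (g : ℂ → ℂ) (w : ℂ) :
    ‖cauchyTransform g w‖ₑ ≤ ∫⁻ z, ‖(z - w)⁻¹‖ₑ * ‖g z‖ₑ := by
  rw [cauchyTransform, enorm_mul]
  refine (enorm_neg_pi_inv_mul_le _).trans ((enorm_integral_le_lintegral_enorm _).trans_eq ?_)
  simp only [div_eq_inv_mul, enorm_mul]

theorem lintegral_enorm_cauchyTransform_le {g : ℂ → ℂ} (hg : Measurable g) (s : Set ℂ) :
    ∫⁻ w in s, ‖cauchyTransform g w‖ₑ ≤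
      (ENNReal.ofReal (2 * Real.pi) + volume s) * ∫⁻ z, ‖g z‖ₑ := by
  calc ∫⁻ w in s, ‖cauchyTransform g w‖ₑ
      ≤ ∫⁻ w in s, ∫⁻ z, ‖(z - w)⁻¹‖ₑ * ‖g z‖ₑ :=
        lintegral_mono fun w ↦ enorm_cauchyTransform_le_lintegral g w
    _ = ∫⁻ z, (∫⁻ w in s, ‖(w - z)⁻¹‖ₑ) * ‖g z‖ₑ := by
        rw [lintegral_lintegral_swap (by fun_prop)]
        refine lintegral_congr fun z ↦ ?_
        rw [← lintegral_mul_const' _ _ enorm_ne_top]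
        simp only [← neg_sub _ z, inv_neg, enorm_neg]
    _ ≤ ∫⁻ z, (ENNReal.ofReal (2 * Real.pi) + volume s) * ‖g z‖ₑ := by
        gcongr with z
        exact setLIntegral_enorm_sub_inv_le s z
    _ = _ := lintegral_const_mul _ hg.enorm

theorem enorm_cauchyTransform_le_of_eq_zero {g : ℂ → ℂ} {w : ℂ} {δ : ℝ} (hδ : 0 < δ)
    (h0 : ∀ z ∈ Metric.ball w δ, g z = 0) :
    ‖cauchyTransform g w‖ₑ ≤ ENNReal.ofReal δ⁻¹ * ∫⁻ z, ‖g z‖ₑ := by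
  refine (enorm_cauchyTransform_le_lintegral g w).trans ?_
  rw [← lintegral_const_mul' _ _ ENNReal.ofReal_ne_top]
  refine lintegral_mono fun z ↦ ?_
  by_cases hz : z ∈ Metric.ball w δ
  · simp [h0 z hz]
  · rw [mem_ball_iff_norm, not_lt] at hz
    dsimp only
    gcongr
    rw [← ofReal_norm, norm_inv]
    gcongr

theorem integrable_div_sub {g : ℂ → ℂ} (hg : Continuous g) (hc : HasCompactSupport g) (w : ℂ) :
    Integrable fun z ↦ g z / (z - w) := by
  obtain ⟨K, hK⟩ := hc.exists_bound_of_continuous hg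
  refine ⟨(hg.measurable.div (measurable_id.sub_const w)).aestronglyMeasurable, ?_⟩
  calc ∫⁻ z, ‖g z / (z - w)‖ₑ
      ≤ ∫⁻ z, (tsupport g).indicator (fun z ↦ ENNReal.ofReal K * ‖(z - w)⁻¹‖ₑ) z := by
        refine lintegral_mono fun z ↦ ?_
        by_cases hz : z ∈ tsupport g
        · rw [indicator_of_mem hz, div_eq_mul_inv, enorm_mul]
          gcongr
          exact (ofReal_norm (g z)).symm.trans_le (ENNReal.ofReal_le_ofReal (hK z))
        · simp [image_eq_zero_of_notMem_tsupport hz]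
    _ = ENNReal.ofReal K * ∫⁻ z in tsupport g, ‖(z - w)⁻¹‖ₑ := by
        rw [lintegral_indicator (isClosed_tsupport g).measurableSet,
          lintegral_const_mul' _ _ ENNReal.ofReal_ne_top]
    _ ≤ ENNReal.ofReal K * (ENNReal.ofReal (2 * Real.pi) + volume (tsupport g)) := by
        gcongr
        exact setLIntegral_enorm_sub_inv_le _ _
    _ < ⊤ := ENNReal.mul_lt_top ENNReal.ofReal_lt_top
        (ENNReal.add_lt_top.2 ⟨ENNReal.ofReal_lt_top, hc.isCompact.measure_lt_top⟩)

theorem cauchyTransform_add {g h : ℂ → ℂ} (hg : Continuous g) (hgc : HasCompactSupport g)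
    (hh : Continuous h) (hhc : HasCompactSupport h) (w : ℂ) :
    cauchyTransform (fun z ↦ g z + h z) w = cauchyTransform g w + cauchyTransform h w := by
  simp only [cauchyTransform, add_div]
  rw [integral_add (integrable_div_sub hg hgc w) (integrable_div_sub hh hhc w), mul_add]

theorem differentiableAt_cauchyTransform {g : ℂ → ℂ} (hg : Continuous g)
    (hc : HasCompactSupport g) {w : ℂ} {δ : ℝ} (hδ : 0 < δ) (h0 : ∀ z ∈ Metric.ball w δ, g z = 0) :
    DifferentiableAt ℂ (cauchyTransform g) w := by
  have hgi : Integrable g := hg.integrable_of_hasCompactSupport hc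
  have hfar : ∀ v ∈ Metric.ball w (δ / 2), ∀ z, g z ≠ 0 → δ / 2 < ‖z - v‖ := fun v hv z hz ↦ by
    have hzw : δ ≤ ‖z - w‖ := by
      by_contra! h
      exact hz (h0 z (mem_ball_iff_norm.2 h))
    rw [mem_ball_iff_norm] at hv
    linarith [norm_sub_le_norm_sub_add_norm_sub z v w]
  have hderiv := hasDerivAt_integral_of_dominated_loc_of_deriv_le (𝕜 := ℂ) (μ := volume)
    (F := fun v z ↦ g z / (z - v)) (F' := fun v z ↦ g z / (z - v) ^ 2)
    (bound := fun z ↦ ‖g z‖ / (δ / 2) ^ 2) (Metric.ball_mem_nhds w (half_pos hδ))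
    (Eventually.of_forall fun v ↦ (integrable_div_sub hg hc v).aestronglyMeasurable)
    (integrable_div_sub hg hc w)
    (hg.measurable.div ((measurable_id.sub_const w).pow_const 2)).aestronglyMeasurable
    (Eventually.of_forall fun z v hv ↦ ?_) (hgi.norm.div_const _)
    (Eventually.of_forall fun z v hv ↦ ?_)
  · exact (hderiv.2.const_mul _).differentiableAt
  · rcases eq_or_ne (g z) 0 with hz | hz
    · simp [hz]
    · rw [norm_div, norm_pow]
      have := hfar v hv z hz
      gcongr
  · rcases eq_or_ne (g z) 0 with hz | hz
    · simpa [hz] using hasDerivAt_const v (0 : ℂ)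
    · have hne : z - v ≠ 0 := norm_pos_iff.1 ((half_pos hδ).trans (hfar v hv z hz))
      simpa [div_eq_mul_inv] using (((hasDerivAt_id v).const_sub z).fun_inv hne).const_mul (g z)

theorem continuous_dbar {V : ℂ → ℂ} (hV : ContDiff ℝ 1 V) : Continuous (dbar V) := by
  simpa [continuousOn_univ] using continuousOn_dbar hV.contDiffOn isOpen_univ

theorem hasCompactSupport_dbar {V : ℂ → ℂ} (hc : HasCompactSupport V) :
    HasCompactSupport (dbar V) :=
  hc.mono' (subset_closure.trans (tsupport_dbar_subset V))

theorem contDiff_mul_of_tsupport_subset {χ U : ℂ → ℂ} {s : Set ℂ} (hχ : ContDiff ℝ 1 χ)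
    (hU : ContDiffOn ℝ 1 U s) (hs : IsOpen s) (hχs : tsupport χ ⊆ s) :
    ContDiff ℝ 1 fun z ↦ χ z * U z := by
  rw [contDiff_iff_contDiffAt]
  intro z
  by_cases hz : z ∈ tsupport χ
  · exact hχ.contDiffAt.mul (hU.contDiffAt (hs.mem_nhds (hχs hz)))
  · refine contDiffAt_const (c := (0 : ℂ)) |>.congr_of_eventuallyEq ?_
    filter_upwards [notMem_tsupport_iff_eventuallyEq.1 hz] with w hw
    simp [hw]

theorem exists_contDiff_cutoff (a : ℂ) {R : ℝ} (hR : 0 < R) :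
    ∃ χ : ℂ → ℂ, ContDiff ℝ 1 χ ∧ HasCompactSupport χ ∧ tsupport χ ⊆ Metric.ball a R ∧
      (∀ z, ‖χ z‖ ≤ 1) ∧ ∀ z ∈ Metric.ball a (R / 2), χ z = 1 := by
  let f : ContDiffBump a := ⟨R / 2, 3 * R / 4, by positivity, by linarith⟩
  have hsupp : tsupport (fun z ↦ (f z : ℂ)) ⊆ Metric.closedBall a (3 * R / 4) := by
    rw [← f.tsupport_eq]
    exact closure_mono fun z hz ↦ fun h ↦ hz (by simp [h])
  refine ⟨fun z ↦ f z, Complex.ofRealCLM.contDiff.comp f.contDiff,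
    HasCompactSupport.of_support_subset_isCompact (isCompact_closedBall a (3 * R / 4))
      (subset_closure.trans hsupp),
    hsupp.trans (Metric.closedBall_subset_ball (by linarith)), fun z ↦ ?_, fun z hz ↦ ?_⟩
  · rw [Complex.norm_of_nonneg f.nonneg]
    exact f.le_one
  · simp only [f.one_of_mem_closedBall (Metric.ball_subset_closedBall hz), Complex.ofReal_one]

theorem dbar_eq_zero_of_eqOn_const {χ : ℂ → ℂ} {c z : ℂ} {s : Set ℂ} (hs : IsOpen s)
    (hχ : ∀ w ∈ s, χ w = c) (hz : z ∈ s) : dbar χ z = 0 :=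
  (dbar_congr (eventually_of_mem (hs.mem_nhds hz) hχ)).trans (dbar_const c z)

theorem lintegral_enorm_mul_le {χ g : ℂ → ℂ} {s : Set ℂ} {K : ℝ} (hs : MeasurableSet s)
    (hχs : tsupport χ ⊆ s) (hK : ∀ z, ‖χ z‖ ≤ K) :
    ∫⁻ z, ‖χ z * g z‖ₑ ≤ ENNReal.ofReal K * ∫⁻ z in s, ‖g z‖ₑ := by
  rw [← lintegral_const_mul' _ _ ENNReal.ofReal_ne_top, ← lintegral_indicator hs]
  refine lintegral_mono fun z ↦ ?_
  by_cases hz : z ∈ s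
  · rw [indicator_of_mem hz, enorm_mul, ← ofReal_norm (χ z)]
    gcongr
    exact hK z
  · simp [image_eq_zero_of_notMem_tsupport fun h ↦ hz (hχs h)]

theorem continuous_mul_of_tsupport_subset {χ g : ℂ → ℂ} {s : Set ℂ} (hχ : Continuous χ)
    (hg : ContinuousOn g s) (hs : IsOpen s) (hχs : tsupport χ ⊆ s) :
    Continuous fun z ↦ χ z * g z :=
  (hχ.continuousOn.mul hg).continuous_of_tsupport_subset hs (tsupport_mul_subset_left.trans hχs)

theorem eq_cauchyTransform_add_cauchyTransform {χ U : ℂ → ℂ} {s : Set ℂ} (hs : IsOpen s)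
    (hχ : ContDiff ℝ 1 χ) (hc : HasCompactSupport χ) (hχs : tsupport χ ⊆ s)
    (hU : ContDiffOn ℝ 1 U s) (w : ℂ) :
    χ w * U w = cauchyTransform (fun z ↦ dbar χ z * U z) w +
      cauchyTransform (fun z ↦ χ z * dbar U z) w := by
  have hdχ := continuous_dbar hχ
  have hdχs := tsupport_dbar_subset χ
  have hmul : dbar (fun z ↦ χ z * U z) = fun z ↦ dbar χ z * U z + χ z * dbar U z := by
    funext z
    by_cases hz : z ∈ s
    · exact dbar_mul (hχ.differentiable one_ne_zero z)
        ((hU.contDiffAt (hs.mem_nhds hz)).differentiableAt one_ne_zero)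
    · have hz' : z ∉ tsupport χ := fun h ↦ hz (hχs h)
      rw [image_eq_zero_of_notMem_tsupport hz',
        image_eq_zero_of_notMem_tsupport fun h ↦ hz' (hdχs h), zero_mul, zero_mul, add_zero]
      exact image_eq_zero_of_notMem_tsupport fun h ↦
        hz' (tsupport_mul_subset_left (tsupport_dbar_subset _ h))
  rw [← cauchyTransform_add
      (continuous_mul_of_tsupport_subset hdχ hU.continuousOn hs (hdχs.trans hχs))
      (hasCompactSupport_dbar hc).mul_right
      (continuous_mul_of_tsupport_subset hχ.continuous (continuousOn_dbar hU hs) hs hχs)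
      hc.mul_right, ← hmul, cauchyTransform_dbar (contDiff_mul_of_tsupport_subset hχ hU hs hχs)
      hc.mul_right]

theorem lintegral_enorm_cauchyTransform_mul_dbar_le {χ U : ℂ → ℂ} {s : Set ℂ} (hs : IsOpen s)
    (hχ : Continuous χ) (hχs : tsupport χ ⊆ s) (hχ1 : ∀ z, ‖χ z‖ ≤ 1) (hU : ContDiffOn ℝ 1 U s)
    (t : Set ℂ) : ∫⁻ w in t, ‖cauchyTransform (fun z ↦ χ z * dbar U z) w‖ₑ ≤
      (ENNReal.ofReal (2 * Real.pi) + volume t) * ∫⁻ z in s, ‖dbar U z‖ₑ := by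
  have hcont := continuous_mul_of_tsupport_subset hχ (continuousOn_dbar hU hs) hs hχs
  refine (lintegral_enorm_cauchyTransform_le hcont.measurable t).trans (mul_le_mul_right ?_ _)
  simpa using lintegral_enorm_mul_le (g := dbar U) hs.measurableSet hχs hχ1

/-- With `χ` a cutoff, `χ U` is the sum of the Cauchy transforms of `∂̄χ U`, holomorphic where `χ`
is constant, and of `χ ∂̄U`, which is small in `L¹`. -/
theorem exists_differentiableOn_approx (a : ℂ) {R : ℝ} (hR : 0 < R) : ∃ C : ℝ, 0 ≤ C ∧
    ∀ U : ℂ → ℂ, ContDiffOn ℝ 1 U (Metric.ball a R) →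
      ∃ F : ℂ → ℂ, DifferentiableOn ℂ F (Metric.ball a (R / 4)) ∧
        (∀ w ∈ Metric.ball a (R / 4),
          ‖F w‖ₑ ≤ ENNReal.ofReal C * ∫⁻ z in Metric.ball a R, ‖U z‖ₑ) ∧
        ∫⁻ w in Metric.ball a (R / 4), ‖U w - F w‖ₑ ≤
          ENNReal.ofReal C * ∫⁻ z in Metric.ball a R, ‖dbar U z‖ₑ := by
  obtain ⟨χ, hχ, hχc, hχs, hχ1, hχeq⟩ := exists_contDiff_cutoff a hR
  have hdχ := continuous_dbar hχ
  have hdχs : tsupport (dbar χ) ⊆ Metric.ball a R := (tsupport_dbar_subset χ).trans hχs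
  have hdχc := hasCompactSupport_dbar hχc
  obtain ⟨K, hK⟩ := hdχc.exists_bound_of_continuous hdχ
  set v := (volume (Metric.ball a (R / 4))).toReal
  have hC : 0 ≤ (R / 4)⁻¹ * K ∧ 0 ≤ 2 * Real.pi + v :=
    ⟨mul_nonneg (by positivity) ((norm_nonneg _).trans (hK a)), by positivity⟩
  refine ⟨(R / 4)⁻¹ * K + (2 * Real.pi + v), add_nonneg hC.1 hC.2, fun U hU ↦ ?_⟩
  have hleft : Continuous fun z ↦ dbar χ z * U z :=
    continuous_mul_of_tsupport_subset hdχ hU.continuousOn Metric.isOpen_ball hdχs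
  have hzero : ∀ w ∈ Metric.ball a (R / 4), ∀ z ∈ Metric.ball w (R / 4), dbar χ z * U z = 0 :=
    fun w hw z hz ↦ by
      have hz' : z ∈ Metric.ball a (R / 2) :=
        Metric.ball_subset_ball' (by linarith [Metric.mem_ball.1 hw]) hz
      rw [dbar_eq_zero_of_eqOn_const Metric.isOpen_ball hχeq hz', zero_mul]
  refine ⟨cauchyTransform fun z ↦ dbar χ z * U z, fun w hw ↦
    (differentiableAt_cauchyTransform hleft hdχc.mul_right (by positivity)
      (hzero w hw)).differentiableWithinAt, fun w hw ↦ ?_, ?_⟩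
  · refine (enorm_cauchyTransform_le_of_eq_zero (by positivity) (hzero w hw)).trans ?_
    refine (mul_le_mul_right (lintegral_enorm_mul_le measurableSet_ball hdχs hK) _).trans ?_
    rw [← mul_assoc, ← ENNReal.ofReal_mul (by positivity)]
    gcongr
    linarith
  · have hdiff : ∀ w ∈ Metric.ball a (R / 4),
        ‖U w - cauchyTransform (fun z ↦ dbar χ z * U z) w‖ₑ =
          ‖cauchyTransform (fun z ↦ χ z * dbar U z) w‖ₑ := fun w hw ↦ by
      have h := eq_cauchyTransform_add_cauchyTransform Metric.isOpen_ball hχ hχc hχs hU w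
      rw [hχeq w (Metric.ball_subset_ball (by linarith) hw), one_mul] at h
      rw [h, add_sub_cancel_left]
    rw [setLIntegral_congr_fun measurableSet_ball hdiff]
    refine (lintegral_enorm_cauchyTransform_mul_dbar_le Metric.isOpen_ball hχ.continuous hχs hχ1 hU
      _).trans ?_
    rw [← ENNReal.ofReal_toReal (a := volume (Metric.ball a (R / 4))) measure_ball_lt_top.ne,
      ← ENNReal.ofReal_add (by positivity) (by positivity)]
    gcongr ENNReal.ofReal ?_ * _
    exact le_add_of_nonneg_left hC.1

theorem exists_enorm_le_lintegral (a : ℂ) {R : ℝ} (hR : 0 < R) : ∃ C : ℝ, 0 ≤ C ∧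
    ∀ G : ℂ → ℂ, DifferentiableOn ℂ G (Metric.ball a R) → ∀ w ∈ Metric.ball a (R / 4),
      ‖G w‖ₑ ≤ ENNReal.ofReal C * ∫⁻ z in Metric.ball a R, ‖G z‖ₑ := by
  obtain ⟨C, hC, happrox⟩ := exists_differentiableOn_approx a hR
  refine ⟨C, hC, fun G hG w hw ↦ ?_⟩
  have hGc : ContDiffOn ℝ 1 G (Metric.ball a R) :=
    (hG.contDiffOn Metric.isOpen_ball).restrict_scalars ℝ
  obtain ⟨F, hF, hFG, hdiff⟩ := happrox G hGc
  have hdbar : ∀ z ∈ Metric.ball a R, ‖dbar G z‖ₑ = 0 := fun z hz ↦ by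
    rw [dbar_eq_zero (hG.differentiableAt (Metric.isOpen_ball.mem_nhds hz)), enorm_zero]
  have hsub : Metric.ball a (R / 4) ⊆ Metric.ball a R := Metric.ball_subset_ball (by linarith)
  have hGF : ContinuousOn (fun z ↦ G z - F z) (Metric.ball a (R / 4)) :=
    (hG.mono hsub).continuousOn.sub hF.continuousOn
  rw [setLIntegral_congr_fun measurableSet_ball hdbar, lintegral_zero, mul_zero, nonpos_iff_eq_zero,
    lintegral_eq_zero_iff' (hGF.aestronglyMeasurable measurableSet_ball).enorm] at hdiff
  have hEq : EqOn G F (Metric.ball a (R / 4)) := by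
    refine Measure.eqOn_open_of_ae_eq (hdiff.mono fun z hz ↦ ?_) Metric.isOpen_ball
      (hG.mono hsub).continuousOn hF.continuousOn
    exact sub_eq_zero.1 (enorm_eq_zero.1 hz)
  rw [hEq hw]
  exact hFG w hw

theorem norm_pow_sub_pow_le (j : ℕ) {x y : ℂ} {B : ℝ} (hx : ‖x‖ ≤ B) (hy : ‖y‖ ≤ B) :
    ‖x ^ j - y ^ j‖ ≤ j * B ^ (j - 1) * ‖x - y‖ := by
  have hB : 0 ≤ B := (norm_nonneg x).trans hx
  rw [← (Commute.all x y).geom_sum₂_mul, norm_mul]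
  gcongr
  refine (norm_sum_le_of_le _ fun k hk ↦ (?_ : _ ≤ B ^ (j - 1))).trans_eq (by simp)
  have hk : k + (j - 1 - k) = j - 1 := by
    have := Finset.mem_range.1 hk
    omega
  calc ‖x ^ k * y ^ (j - 1 - k)‖ ≤ B ^ k * B ^ (j - 1 - k) := by
        rw [norm_mul, norm_pow, norm_pow]
        gcongr
    _ = B ^ (j - 1) := by rw [← pow_add, hk]

/-- The smooth substitute `q p̄ / (|p|² + ε²)` for the quotient `q / p`, which is also defined where
`p` vanishes. -/
def regQuot (ε : ℝ) (q p : ℂ) : ℂ := q * (starRingEnd ℂ p * (p * starRingEnd ℂ p + (ε : ℂ) ^ 2)⁻¹)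

theorem mul_conj_add_sq (ε : ℝ) (p : ℂ) :
    p * starRingEnd ℂ p + (ε : ℂ) ^ 2 = ((‖p‖ ^ 2 + ε ^ 2 : ℝ) : ℂ) := by
  rw [Complex.mul_conj, Complex.normSq_eq_norm_sq]
  push_cast
  rfl

theorem mul_conj_add_sq_ne_zero {ε : ℝ} (hε : ε ≠ 0) (p : ℂ) :
    p * starRingEnd ℂ p + (ε : ℂ) ^ 2 ≠ 0 := by
  rw [mul_conj_add_sq, Complex.ofReal_ne_zero]
  positivity

theorem norm_regQuot (ε : ℝ) (q p : ℂ) : ‖regQuot ε q p‖ = ‖q‖ * ‖p‖ / (‖p‖ ^ 2 + ε ^ 2) := by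
  rw [regQuot, mul_conj_add_sq, norm_mul, norm_mul, norm_inv, RCLike.norm_conj,
    Complex.norm_of_nonneg (by positivity)]
  ring

theorem norm_regQuot_mul_sub {ε : ℝ} (hε : ε ≠ 0) (q p : ℂ) :
    ‖regQuot ε q p * p - q‖ = ‖q‖ * ε ^ 2 / (‖p‖ ^ 2 + ε ^ 2) := by
  have hne := mul_conj_add_sq_ne_zero hε p
  have h : regQuot ε q p * p - q = -(q * (ε : ℂ) ^ 2 / (p * starRingEnd ℂ p + (ε : ℂ) ^ 2)) := by
    rw [regQuot, div_eq_mul_inv]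
    linear_combination q * mul_inv_cancel₀ hne
  rw [h, mul_conj_add_sq, norm_neg, norm_div, norm_mul, Complex.norm_of_nonneg (by positivity),
    norm_pow, Complex.norm_real, Real.norm_eq_abs, sq_abs]

theorem contDiff_regQuot {ε : ℝ} (hε : ε ≠ 0) {Q P : ℂ → ℂ} (hQ : Differentiable ℂ Q)
    (hP : Differentiable ℂ P) : ContDiff ℝ 1 fun z ↦ regQuot ε (Q z) (P z) := by
  have hPc : ContDiff ℝ 1 P := (hP.contDiff (n := 1)).restrict_scalars ℝ
  have hconj : ContDiff ℝ 1 fun z ↦ starRingEnd ℂ (P z) := Complex.conjCLE.contDiff.comp hPc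
  exact ((hQ.contDiff (n := 1)).restrict_scalars ℝ).mul (hconj.mul
    (((hPc.mul hconj).add contDiff_const).inv fun z ↦ mul_conj_add_sq_ne_zero hε (P z)))

theorem dbar_regQuot {ε : ℝ} (hε : ε ≠ 0) {Q P : ℂ → ℂ} {P' z : ℂ} (hQ : DifferentiableAt ℂ Q z)
    (hP : HasDerivAt P P' z) :
    dbar (fun w ↦ regQuot ε (Q w) (P w)) z =
      Q z * starRingEnd ℂ P' * (ε : ℂ) ^ 2 / (P z * starRingEnd ℂ (P z) + (ε : ℂ) ^ 2) ^ 2 := by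
  have hPℝ : DifferentiableAt ℝ P z := hP.differentiableAt.restrictScalars ℝ
  have hconj : DifferentiableAt ℝ (fun w ↦ starRingEnd ℂ (P w)) z :=
    Complex.conjCLE.differentiableAt.comp z hPℝ
  have hden := (hPℝ.fun_mul hconj).add_const ((ε : ℂ) ^ 2)
  have hne := mul_conj_add_sq_ne_zero hε (P z)
  simp only [regQuot]
  rw [dbar_mul (hQ.restrictScalars ℝ) (hconj.fun_mul (hden.fun_inv hne)),
    dbar_mul hconj (hden.fun_inv hne), dbar_inv hden hne, dbar_add_const, dbar_mul hPℝ hconj,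
    dbar_eq_zero hQ, dbar_eq_zero hP.differentiableAt, dbar_conj hP]
  field_simp
  ring

theorem norm_dbar_regQuot {ε : ℝ} (hε : ε ≠ 0) {Q P : ℂ → ℂ} {P' z : ℂ}
    (hQ : DifferentiableAt ℂ Q z) (hP : HasDerivAt P P' z) :
    ‖dbar (fun w ↦ regQuot ε (Q w) (P w)) z‖ =
      ‖Q z‖ * ‖P'‖ * ε ^ 2 / (‖P z‖ ^ 2 + ε ^ 2) ^ 2 := by
  rw [dbar_regQuot hε hQ hP, mul_conj_add_sq, norm_div, norm_mul, norm_mul, RCLike.norm_conj,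
    norm_pow, norm_pow, Complex.norm_real, Complex.norm_real, Real.norm_eq_abs, Real.norm_eq_abs,
    sq_abs, abs_of_nonneg (by positivity)]

section PowerRelation

variable {j : ℕ} {b d : ℝ} {p q : ℂ}

theorem exists_pow_eq_norm (hj : j ≠ 0) (p : ℂ) : ∃ b : ℝ, 0 ≤ b ∧ b ^ j = ‖p‖ :=
  ⟨‖p‖ ^ (j : ℝ)⁻¹, by positivity, Real.rpow_inv_natCast_pow (norm_nonneg p) hj⟩

theorem norm_le_of_norm_pow_sub_pow_le (hj : j ≠ 0) (hb : 0 ≤ b) (hd : 0 ≤ d) (hbp : b ^ j = ‖p‖)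
    (h : ‖q ^ j - p ^ (j + 1)‖ ≤ d ^ (j * (j + 1))) : ‖q‖ ≤ b ^ (j + 1) + d ^ (j + 1) := by
  refine le_of_pow_le_pow_left₀ hj (by positivity) ?_
  calc ‖q‖ ^ j = ‖p ^ (j + 1) + (q ^ j - p ^ (j + 1))‖ := by rw [← norm_pow, add_sub_cancel]
    _ ≤ ‖p‖ ^ (j + 1) + d ^ (j * (j + 1)) := by
      rw [← norm_pow]
      exact norm_add_le_of_le le_rfl h
    _ = (b ^ (j + 1)) ^ j + (d ^ (j + 1)) ^ j := by
      rw [← hbp]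
      ring
    _ ≤ (b ^ (j + 1) + d ^ (j + 1)) ^ j := pow_add_pow_le (by positivity) (by positivity) hj

theorem pow_succ_mul_pow_le (hj : j ≠ 0) (hb : 0 ≤ b) (hd : 0 ≤ d) :
    b ^ (j + 1) * (d ^ j) ^ 2 ≤ d ^ (j + 1) * ((b ^ j) ^ 2 + (d ^ j) ^ 2) := by
  obtain ⟨i, rfl⟩ := Nat.exists_eq_succ_of_ne_zero hj
  rcases le_total b d with hbd | hbd
  · calc b ^ (i + 1 + 1) * (d ^ (i + 1)) ^ 2 ≤ d ^ (i + 1 + 1) * (d ^ (i + 1)) ^ 2 := by gcongr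
      _ ≤ _ := by
        gcongr
        exact le_add_of_nonneg_left (by positivity)
  · calc b ^ (i + 1 + 1) * (d ^ (i + 1)) ^ 2
        = d ^ (i + 1 + 1) * (b ^ (i + 1 + 1) * d ^ i) := by ring
      _ ≤ d ^ (i + 1 + 1) * (b ^ (i + 1 + 1) * b ^ i) := by gcongr
      _ = d ^ (i + 1 + 1) * (b ^ (i + 1)) ^ 2 := by ring
      _ ≤ _ := by
        gcongr
        exact le_add_of_nonneg_right (by positivity)

theorem norm_regQuot_le (hj : j ≠ 0) (hb : 0 ≤ b) (hd : 0 < d) (hbp : b ^ j = ‖p‖)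
    (h : ‖q ^ j - p ^ (j + 1)‖ ≤ d ^ (j * (j + 1))) : ‖regQuot (d ^ j) q p‖ ≤ b + d := by
  rw [norm_regQuot, div_le_iff₀ (by positivity), ← hbp]
  calc ‖q‖ * b ^ j ≤ (b ^ (j + 1) + d ^ (j + 1)) * b ^ j := by
        gcongr
        exact norm_le_of_norm_pow_sub_pow_le hj hb hd.le hbp h
    _ = b * (b ^ j) ^ 2 + d * (b ^ j * d ^ j) := by ring
    _ ≤ b * ((b ^ j) ^ 2 + (d ^ j) ^ 2) + d * ((b ^ j) ^ 2 + (d ^ j) ^ 2) := by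
        gcongr
        · exact le_add_of_nonneg_right (by positivity)
        · nlinarith [sq_nonneg (b ^ j - d ^ j), sq_nonneg (b ^ j), sq_nonneg (d ^ j)]
    _ = _ := by ring

theorem norm_mul_sq_le (hj : j ≠ 0) (hd : 0 < d)
    (h : ‖q ^ j - p ^ (j + 1)‖ ≤ d ^ (j * (j + 1))) :
    ‖q‖ * (d ^ j) ^ 2 ≤ 2 * d ^ (j + 1) * (‖p‖ ^ 2 + (d ^ j) ^ 2) := by
  obtain ⟨b, hb, hbp⟩ := exists_pow_eq_norm hj p
  calc ‖q‖ * (d ^ j) ^ 2 ≤ (b ^ (j + 1) + d ^ (j + 1)) * (d ^ j) ^ 2 := by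
        gcongr
        exact norm_le_of_norm_pow_sub_pow_le hj hb hd.le hbp h
    _ = b ^ (j + 1) * (d ^ j) ^ 2 + d ^ (j + 1) * (d ^ j) ^ 2 := by ring
    _ ≤ d ^ (j + 1) * ((b ^ j) ^ 2 + (d ^ j) ^ 2) + d ^ (j + 1) * ((b ^ j) ^ 2 + (d ^ j) ^ 2) := by
        refine add_le_add (pow_succ_mul_pow_le hj hb hd.le) ?_
        gcongr
        exact le_add_of_nonneg_left (by positivity)
    _ = _ := by
        rw [hbp]
        ring

theorem norm_regQuot_mul_sub_le (hj : j ≠ 0) (hd : 0 < d)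
    (h : ‖q ^ j - p ^ (j + 1)‖ ≤ d ^ (j * (j + 1))) :
    ‖regQuot (d ^ j) q p * p - q‖ ≤ 2 * d ^ (j + 1) := by
  rw [norm_regQuot_mul_sub (by positivity), div_le_iff₀ (by positivity)]
  exact norm_mul_sq_le hj hd h

end PowerRelation

section ApproximateRoot

variable {j : ℕ} {d : ℝ} {p q : ℂ}

theorem norm_regQuot_le_two (hj : j ≠ 0) (hd : 0 < d) (hd1 : d ≤ 1) (hp : ‖p‖ ≤ 1)
    (h : ‖q ^ j - p ^ (j + 1)‖ ≤ d ^ (j * (j + 1))) : ‖regQuot (d ^ j) q p‖ ≤ 2 := by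
  obtain ⟨b, hb, hbp⟩ := exists_pow_eq_norm hj p
  have hb1 : b ≤ 1 := (pow_le_one_iff_of_nonneg hb hj).1 (hbp ▸ hp)
  linarith [norm_regQuot_le hj hb hd hbp h]

theorem norm_regQuot_pow_sub_le_of_norm_lt (hj : j ≠ 0) (hd : 0 < d) (hd1 : d ≤ 1) (hpd : ‖p‖ < d)
    (h : ‖q ^ j - p ^ (j + 1)‖ ≤ d ^ (j * (j + 1))) :
    ‖regQuot (d ^ j) q p ^ j - p‖ ≤ (2 ^ j + 1) * d := by
  obtain ⟨b, hb, hbp⟩ := exists_pow_eq_norm hj p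
  have hdj : d ^ j ≤ d := pow_le_of_le_one hd.le hd1 hj
  calc ‖regQuot (d ^ j) q p ^ j - p‖ ≤ ‖regQuot (d ^ j) q p‖ ^ j + ‖p‖ := by
        rw [← norm_pow]
        exact norm_sub_le _ _
    _ ≤ (b + d) ^ j + d := by
        gcongr
        exact norm_regQuot_le hj hb hd hbp h
    _ ≤ 2 ^ (j - 1) * (b ^ j + d ^ j) + d := by
        gcongr
        exact add_pow_le hb hd.le j
    _ ≤ 2 ^ (j - 1) * (d + d) + d := by
        gcongr
        exact hbp.trans_le hpd.le
    _ = (2 ^ (j - 1) * 2 + 1) * d := by ring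
    _ = (2 ^ j + 1) * d := by rw [pow_sub_one_mul hj]

theorem norm_regQuot_pow_sub_le_of_le_norm (hj : j ≠ 0) (hd : 0 < d) (hd1 : d ≤ 1) (hp : ‖p‖ ≤ 1)
    (hpd : d ≤ ‖p‖) (h : ‖q ^ j - p ^ (j + 1)‖ ≤ d ^ (j * (j + 1))) :
    ‖regQuot (d ^ j) q p ^ j - p‖ ≤ (j * 2 ^ j + 1) * d := by
  set u := regQuot (d ^ j) q p
  have hq : ‖q‖ ≤ 2 := by
    obtain ⟨b, hb, hbp⟩ := exists_pow_eq_norm hj p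
    have hb1 : b ≤ 1 := (pow_le_one_iff_of_nonneg hb hj).1 (hbp ▸ hp)
    linarith [norm_le_of_norm_pow_sub_pow_le hj hb hd.le hbp h,
      pow_le_one₀ (n := j + 1) hb hb1, pow_le_one₀ (n := j + 1) hd.le hd1]
  have hup : ‖u * p‖ ≤ 2 := by
    rw [norm_mul]
    nlinarith [norm_regQuot_le_two hj hd hd1 hp h, norm_nonneg u, norm_nonneg p]
  have hmul : ‖p‖ ^ j * ‖u ^ j - p‖ ≤ (j * 2 ^ j + 1) * d ^ (j + 1) :=
    calc ‖p‖ ^ j * ‖u ^ j - p‖ = ‖((u * p) ^ j - q ^ j) + (q ^ j - p ^ (j + 1))‖ := by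
          rw [← norm_pow, ← norm_mul]
          ring_nf
      _ ≤ j * 2 ^ (j - 1) * (2 * d ^ (j + 1)) + d ^ (j * (j + 1)) := by
          refine norm_add_le_of_le ((norm_pow_sub_pow_le j hup hq).trans ?_) h
          gcongr
          exact norm_regQuot_mul_sub_le hj hd h
      _ ≤ j * 2 ^ (j - 1) * (2 * d ^ (j + 1)) + d ^ (j + 1) :=
          add_le_add le_rfl (pow_le_pow_of_le_one hd.le hd1 (Nat.le_mul_of_pos_left _ hj.bot_lt))
      _ = (j * (2 ^ (j - 1) * 2) + 1) * d ^ (j + 1) := by ring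
      _ = (j * 2 ^ j + 1) * d ^ (j + 1) := by rw [pow_sub_one_mul hj]
  refine le_of_mul_le_mul_left ?_ (pow_pos hd j)
  calc d ^ j * ‖u ^ j - p‖ ≤ ‖p‖ ^ j * ‖u ^ j - p‖ := by gcongr
    _ ≤ (j * 2 ^ j + 1) * d ^ (j + 1) := hmul
    _ = d ^ j * ((j * 2 ^ j + 1) * d) := by ring

theorem norm_regQuot_pow_sub_le (hj : j ≠ 0) (hd : 0 < d) (hd1 : d ≤ 1) (hp : ‖p‖ ≤ 1)
    (h : ‖q ^ j - p ^ (j + 1)‖ ≤ d ^ (j * (j + 1))) :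
    ‖regQuot (d ^ j) q p ^ j - p‖ ≤ ((j + 1) * 2 ^ j) * d := by
  have hpow : (1 : ℝ) ≤ 2 ^ j := one_le_pow₀ one_le_two
  have hj1 : (1 : ℝ) ≤ j := mod_cast Nat.one_le_iff_ne_zero.2 hj
  rcases lt_or_ge ‖p‖ d with hpd | hpd
  · refine (norm_regQuot_pow_sub_le_of_norm_lt hj hd hd1 hpd h).trans ?_
    gcongr
    nlinarith
  · refine (norm_regQuot_pow_sub_le_of_le_norm hj hd hd1 hp hpd h).trans ?_
    gcongr
    linarith

/-- The point of the regularization: `∂̄` of the approximate root is controlled by the logarithmic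
derivative of `P`, whose integral over a bounded set only depends on the degree of `P`. -/
theorem norm_dbar_regQuot_le {P Q : ℂ → ℂ} {P' z : ℂ} (hj : j ≠ 0) (hd : 0 < d)
    (hQ : DifferentiableAt ℂ Q z) (hP : HasDerivAt P P' z) (hPz : P z ≠ 0)
    (h : ‖Q z ^ j - P z ^ (j + 1)‖ ≤ d ^ (j * (j + 1))) :
    ‖dbar (fun w ↦ regQuot (d ^ j) (Q w) (P w)) z‖ ≤ d * ‖P' / P z‖ := by
  rw [norm_dbar_regQuot (by positivity) hQ hP, div_le_iff₀ (by positivity), norm_div]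
  have : 0 < ‖P z‖ := norm_pos_iff.2 hPz
  have hamgm : 2 * d ^ j * ‖P z‖ ≤ ‖P z‖ ^ 2 + (d ^ j) ^ 2 := by
    nlinarith [sq_nonneg (‖P z‖ - d ^ j)]
  calc ‖Q z‖ * ‖P'‖ * (d ^ j) ^ 2 = ‖P'‖ / ‖P z‖ * (‖Q z‖ * (d ^ j) ^ 2 * ‖P z‖) := by
        field_simp
    _ ≤ ‖P'‖ / ‖P z‖ * (2 * d ^ (j + 1) * (‖P z‖ ^ 2 + (d ^ j) ^ 2) * ‖P z‖) := by
        gcongr ‖P'‖ / ‖P z‖ * (?_ * ‖P z‖)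
        exact norm_mul_sq_le hj hd h
    _ = ‖P'‖ / ‖P z‖ * (d * (‖P z‖ ^ 2 + (d ^ j) ^ 2) * (2 * d ^ j * ‖P z‖)) := by ring
    _ ≤ ‖P'‖ / ‖P z‖ * (d * (‖P z‖ ^ 2 + (d ^ j) ^ 2) * (‖P z‖ ^ 2 + (d ^ j) ^ 2)) := by
        refine mul_le_mul_of_nonneg_left ?_ (by positivity)
        exact mul_le_mul_of_nonneg_left hamgm (by positivity)
    _ = _ := by ring

theorem norm_sub_le_of_regQuot {B : ℝ} {y : ℂ} (hj : j ≠ 0) (hd : 0 < d) (hd1 : d ≤ 1)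
    (hB : 0 ≤ B) (hp : ‖p‖ ≤ 1) (h : ‖q ^ j - p ^ (j + 1)‖ ≤ d ^ (j * (j + 1))) (hy : ‖y‖ ≤ B) :
    ‖y ^ j - p‖ ≤ (j * (B + 2) ^ (j - 1) + 1) * ‖y - regQuot (d ^ j) q p‖ +
        ((j + 1) * 2 ^ j + 2) * d ∧
      ‖y * p - q‖ ≤ (j * (B + 2) ^ (j - 1) + 1) * ‖y - regQuot (d ^ j) q p‖ +
        ((j + 1) * 2 ^ j + 2) * d := by
  set u := regQuot (d ^ j) q p
  have hu : ‖u‖ ≤ B + 2 := (norm_regQuot_le_two hj hd hd1 hp h).trans (le_add_of_nonneg_left hB)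
  have hd2 : d ^ (j + 1) ≤ d := pow_le_of_le_one hd.le hd1 j.succ_ne_zero
  have hroot : ‖y ^ j - p‖ ≤ j * (B + 2) ^ (j - 1) * ‖y - u‖ + (j + 1) * 2 ^ j * d :=
    (norm_sub_le_norm_sub_add_norm_sub _ (u ^ j) _).trans
      (add_le_add (norm_pow_sub_pow_le j (hy.trans (by linarith)) hu)
        (norm_regQuot_pow_sub_le hj hd hd1 hp h))
  have hquot : ‖y * p - q‖ ≤ ‖y - u‖ + 2 * d := by
    refine (norm_sub_le_norm_sub_add_norm_sub _ (u * p) _).trans (add_le_add ?_ ?_)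
    · rw [← sub_mul, norm_mul]
      exact mul_le_of_le_one_right (norm_nonneg _) hp
    · exact (norm_regQuot_mul_sub_le hj hd h).trans (by gcongr)
  have h₁ : 0 ≤ j * (B + 2) ^ (j - 1) * ‖y - u‖ := by positivity
  have h₂ : 0 ≤ (j + 1) * 2 ^ j * d := by positivity
  constructor <;> linarith [norm_nonneg (y - u)]

end ApproximateRoot

theorem lintegral_enorm_derivative_div_le (P : Polynomial ℂ) (s : Set ℂ) :
    ∫⁻ z in s, ‖P.derivative.eval z / P.eval z‖ₑ ≤
      P.natDegree * (ENNReal.ofReal (2 * Real.pi) + volume s) := by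
  have hle (z : ℂ) : ‖P.derivative.eval z / P.eval z‖ₑ ≤
      (P.roots.map fun a ↦ ‖(z - a)⁻¹‖ₑ).sum := by
    rcases eq_or_ne (P.eval z) 0 with h0 | h0
    · simp [h0]
    rw [(IsAlgClosed.splits P).eval_derivative_div_eval_of_ne_zero h0]
    simp only [one_div]
    induction P.roots using Multiset.induction with
    | empty => simp
    | cons a s ih =>
      simp only [Multiset.map_cons, Multiset.sum_cons]
      exact (enorm_add_le _ _).trans (add_le_add_right ih _)
  have hsum (r : Multiset ℂ) : ∫⁻ z in s, (r.map fun a ↦ ‖(z - a)⁻¹‖ₑ).sum ≤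
      r.card * (ENNReal.ofReal (2 * Real.pi) + volume s) := by
    induction r using Multiset.induction with
    | empty => simp
    | cons a r ih =>
      simp only [Multiset.map_cons, Multiset.sum_cons, Multiset.card_cons, Nat.cast_add,
        Nat.cast_one]
      rw [lintegral_add_left (by fun_prop), add_comm, add_mul, one_mul]
      exact add_le_add ih (setLIntegral_enorm_sub_inv_le s a)
  refine (lintegral_mono hle).trans ((hsum P.roots).trans ?_)
  gcongr
  exact P.card_roots'

theorem lintegral_enorm_dbar_regQuot_le {j : ℕ} {d : ℝ} {s : Set ℂ} {P Q : Polynomial ℂ}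
    (hj : j ≠ 0) (hd : 0 < d) (hs : MeasurableSet s)
    (h : ∀ z ∈ s, ‖Q.eval z ^ j - P.eval z ^ (j + 1)‖ ≤ d ^ (j * (j + 1))) :
    ∫⁻ z in s, ‖dbar (fun w ↦ regQuot (d ^ j) (Q.eval w) (P.eval w)) z‖ₑ ≤
      ENNReal.ofReal d * (P.natDegree * (ENNReal.ofReal (2 * Real.pi) + volume s)) := by
  rcases eq_or_ne P 0 with rfl | hP
  · simp [regQuot, dbar_const]
  have hroots : ∀ᵐ z : ℂ, P.eval z ≠ 0 := by
    filter_upwards [measure_eq_zero_iff_ae_notMem.1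
      (P.roots.toFinset.finite_toSet.measure_zero volume)] with z hz hz0
    exact hz (by simpa using ⟨hP, hz0⟩)
  calc ∫⁻ z in s, ‖dbar (fun w ↦ regQuot (d ^ j) (Q.eval w) (P.eval w)) z‖ₑ
      ≤ ∫⁻ z in s, ENNReal.ofReal d * ‖P.derivative.eval z / P.eval z‖ₑ := by
        refine lintegral_mono_ae ?_
        filter_upwards [ae_restrict_of_ae hroots, ae_restrict_mem hs] with z hz hzs
        rw [← ofReal_norm, ← ofReal_norm, ← ENNReal.ofReal_mul hd.le]
        exact ENNReal.ofReal_le_ofReal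
          (norm_dbar_regQuot_le hj hd Q.differentiableAt (P.hasDerivAt z) hz (h z hzs))
    _ = ENNReal.ofReal d * ∫⁻ z in s, ‖P.derivative.eval z / P.eval z‖ₑ :=
        lintegral_const_mul' _ _ ENNReal.ofReal_ne_top
    _ ≤ _ := mul_le_mul_right (lintegral_enorm_derivative_div_le P s) _

theorem exists_norm_le_of_lintegral_enorm_le (a : ℂ) {R : ℝ} (hR : 0 < R) :
    ∃ C : ℝ, 0 ≤ C ∧ ∀ (G H : ℂ → ℂ) (s t e : ℝ), DifferentiableOn ℂ G (Metric.ball a R) →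
      0 ≤ s → 0 ≤ t → 0 ≤ e → (∀ z ∈ Metric.ball a R, ‖G z‖ ≤ s * ‖H z‖ + t) →
      ∫⁻ z in Metric.ball a R, ‖H z‖ₑ ≤ ENNReal.ofReal e →
      ∀ w ∈ Metric.ball a (R / 4), ‖G w‖ ≤ C * (s * e + t) := by
  obtain ⟨C, hC, hmean⟩ := exists_enorm_le_lintegral a hR
  set V := volume.real (Metric.ball a R)
  have hV : volume (Metric.ball a R) = ENNReal.ofReal V :=
    (ofReal_measureReal measure_ball_lt_top.ne).symm
  have hV0 : 0 ≤ V := measureReal_nonneg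
  refine ⟨C * (1 + V), by positivity, fun G H s t e hG hs ht he hGH hH w hw ↦ ?_⟩
  have hintegral : ∫⁻ z in Metric.ball a R, ‖G z‖ₑ ≤ ENNReal.ofReal (s * e + t * V) :=
    calc ∫⁻ z in Metric.ball a R, ‖G z‖ₑ
        ≤ ∫⁻ z in Metric.ball a R, (ENNReal.ofReal s * ‖H z‖ₑ + ENNReal.ofReal t) := by
          refine setLIntegral_mono' Metric.isOpen_ball.measurableSet fun z hz ↦ ?_
          rw [← ofReal_norm, ← ofReal_norm, ← ENNReal.ofReal_mul hs,
            ← ENNReal.ofReal_add (by positivity) ht]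
          exact ENNReal.ofReal_le_ofReal (hGH z hz)
      _ = ENNReal.ofReal s * (∫⁻ z in Metric.ball a R, ‖H z‖ₑ) + ENNReal.ofReal (t * V) := by
          rw [lintegral_add_right _ measurable_const, setLIntegral_const,
            lintegral_const_mul' _ _ ENNReal.ofReal_ne_top, hV, ENNReal.ofReal_mul ht]
      _ ≤ ENNReal.ofReal (s * e + t * V) := by
          rw [ENNReal.ofReal_add (by positivity) (by positivity), ENNReal.ofReal_mul hs]
          exact add_le_add_left (mul_le_mul_right hH _) _
  have hGw : ‖G w‖ₑ ≤ ENNReal.ofReal (C * (s * e + t * V)) := by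
    rw [ENNReal.ofReal_mul hC]
    exact (hmean G hG w hw).trans (mul_le_mul_right hintegral _)
  rw [← ofReal_norm, ENNReal.ofReal_le_ofReal_iff (by positivity)] at hGw
  refine hGw.trans ?_
  rw [mul_assoc]
  gcongr
  nlinarith [mul_nonneg hs he, mul_nonneg (mul_nonneg hs he) hV0]

theorem exists_differentiableOn_approx_regQuot {j : ℕ} (hj : j ≠ 0) (a : ℂ) {R : ℝ} (hR : 0 < R) :
    ∃ C : ℝ, 0 ≤ C ∧ ∀ (P Q : Polynomial ℂ) (d : ℝ), 0 < d → d ≤ 1 →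
      (∀ z ∈ Metric.ball a R, ‖P.eval z‖ ≤ 1) →
      (∀ z ∈ Metric.ball a R, ‖Q.eval z ^ j - P.eval z ^ (j + 1)‖ ≤ d ^ (j * (j + 1))) →
      ∃ F : ℂ → ℂ, DifferentiableOn ℂ F (Metric.ball a (R / 4)) ∧
        (∀ w ∈ Metric.ball a (R / 4), ‖F w‖ ≤ C) ∧
        ∫⁻ w in Metric.ball a (R / 4), ‖F w - regQuot (d ^ j) (Q.eval w) (P.eval w)‖ₑ ≤
          ENNReal.ofReal (C * (P.natDegree * d)) := by
  obtain ⟨C, hC, happrox⟩ := exists_differentiableOn_approx a hR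
  set V := volume.real (Metric.ball a R)
  have hV : volume (Metric.ball a R) = ENNReal.ofReal V :=
    (ofReal_measureReal measure_ball_lt_top.ne).symm
  have hV0 : 0 ≤ V := measureReal_nonneg
  have := Real.pi_pos
  refine ⟨C * (2 * Real.pi + 2 * V), by positivity, fun P Q d hd hd1 hP hPQ ↦ ?_⟩
  set U : ℂ → ℂ := fun w ↦ regQuot (d ^ j) (Q.eval w) (P.eval w)
  obtain ⟨F, hF, hFU, hclose⟩ := happrox U
    (contDiff_regQuot (pow_pos hd j).ne' Q.differentiable P.differentiable).contDiffOn
  refine ⟨F, hF, fun w hw ↦ ?_, ?_⟩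
  · have hU : ∫⁻ z in Metric.ball a R, ‖U z‖ₑ ≤ ENNReal.ofReal (2 * V) := by
      rw [ENNReal.ofReal_mul zero_le_two, ← hV, ← setLIntegral_const]
      refine setLIntegral_mono' Metric.isOpen_ball.measurableSet fun z hz ↦ ?_
      rw [← ofReal_norm]
      exact ENNReal.ofReal_le_ofReal (norm_regQuot_le_two hj hd hd1 (hP z hz) (hPQ z hz))
    have hFw : ‖F w‖ₑ ≤ ENNReal.ofReal (C * (2 * V)) := by
      rw [ENNReal.ofReal_mul hC]
      exact (hFU w hw).trans (mul_le_mul_right hU _)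
    rw [← ofReal_norm, ENNReal.ofReal_le_ofReal_iff (by positivity)] at hFw
    refine hFw.trans ?_
    gcongr
    exact le_add_of_nonneg_left (by positivity)
  · simp only [enorm_sub_rev (F _)]
    calc ∫⁻ w in Metric.ball a (R / 4), ‖U w - F w‖ₑ
        ≤ ENNReal.ofReal C * ∫⁻ z in Metric.ball a R, ‖dbar U z‖ₑ := hclose
      _ ≤ ENNReal.ofReal C * (ENNReal.ofReal d * (P.natDegree *
            (ENNReal.ofReal (2 * Real.pi) + volume (Metric.ball a R)))) :=
          mul_le_mul_right
            (lintegral_enorm_dbar_regQuot_le hj hd Metric.isOpen_ball.measurableSet hPQ) _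
      _ = ENNReal.ofReal (C * (d * (P.natDegree * (2 * Real.pi + V)))) := by
          rw [hV, ← ENNReal.ofReal_add (by positivity) hV0, ← ENNReal.ofReal_natCast,
            ← ENNReal.ofReal_mul (by positivity), ← ENNReal.ofReal_mul hd.le,
            ← ENNReal.ofReal_mul hC]
      _ ≤ _ := by
          refine ENNReal.ofReal_le_ofReal ?_
          rw [mul_assoc C, mul_comm d, mul_right_comm, mul_comm _ (P.natDegree * d)]
          gcongr
          linarith

theorem exists_holomorphic_approx_root {j : ℕ} (hj : j ≠ 0) (a : ℂ) {R : ℝ} (hR : 0 < R) :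
    ∃ C : ℝ, 0 ≤ C ∧ ∀ (P Q : Polynomial ℂ) (d : ℝ), 0 < d → d ≤ 1 →
      (∀ z ∈ Metric.ball a R, ‖P.eval z‖ ≤ 1) →
      (∀ z ∈ Metric.ball a R, ‖Q.eval z ^ j - P.eval z ^ (j + 1)‖ ≤ d ^ (j * (j + 1))) →
      ∃ F : ℂ → ℂ, DifferentiableOn ℂ F (Metric.ball a (R / 16)) ∧
        ∀ w ∈ Metric.ball a (R / 16), ‖F w‖ ≤ C ∧
          ‖F w ^ j - P.eval w‖ ≤ C * ((P.natDegree + 1) * d) ∧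
          ‖F w * P.eval w - Q.eval w‖ ≤ C * ((P.natDegree + 1) * d) := by
  obtain ⟨B, hB, happrox⟩ := exists_differentiableOn_approx_regQuot hj a hR
  obtain ⟨C, hC, hmean⟩ := exists_norm_le_of_lintegral_enorm_le a (show 0 < R / 4 by positivity)
  set s : ℝ := j * (B + 2) ^ (j - 1) + 1
  set t : ℝ := (j + 1) * 2 ^ j + 2
  refine ⟨B + C * (s * B + t), by positivity, fun P Q d hd hd1 hP hPQ ↦ ?_⟩
  obtain ⟨F, hF, hFB, hFU⟩ := happrox P Q d hd hd1 hP hPQ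
  have hsub : Metric.ball a (R / 4) ⊆ Metric.ball a R := Metric.ball_subset_ball (by linarith)
  have hsub' : Metric.ball a (R / 16) ⊆ Metric.ball a (R / 4) :=
    Metric.ball_subset_ball (by linarith)
  have hpt (z) (hz : z ∈ Metric.ball a (R / 4)) :=
    norm_sub_le_of_regQuot hj hd hd1 hB (hP z (hsub hz)) (hPQ z (hsub hz)) (hFB z hz)
  have hroot := hmean (fun w ↦ F w ^ j - P.eval w) _ s (t * d) _
    ((hF.pow j).sub P.differentiable.differentiableOn) (by positivity) (by positivity)
    (by positivity) (fun z hz ↦ (hpt z hz).1) hFU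
  have hquot := hmean (fun w ↦ F w * P.eval w - Q.eval w) _ s (t * d) _
    ((hF.mul P.differentiable.differentiableOn).sub Q.differentiable.differentiableOn)
    (by positivity) (by positivity) (by positivity) (fun z hz ↦ (hpt z hz).2) hFU
  have hconst : C * (s * (B * (P.natDegree * d)) + t * d) ≤
      (B + C * (s * B + t)) * ((P.natDegree + 1) * d) := by
    have h : 0 ≤ B * ((P.natDegree + 1) * d) + C * (s * B * d) + C * (t * P.natDegree * d) := by
      positivity
    linarith
  rw [show R / 4 / 4 = R / 16 by ring] at hroot hquot
  exact ⟨F, hF.mono hsub', fun w hw ↦ ⟨(hFB w (hsub' hw)).trans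
    (le_add_of_nonneg_right (by positivity)), (hroot w hw).trans hconst, (hquot w hw).trans hconst⟩⟩

section PowerRoots

variable {j : ℕ} {p q w x y : ℂ}

theorem norm_sub_pow_two_mul_le {D e : ℝ} (hj : j ≠ 0) (hD : 1 ≤ D) (hx : ‖x‖ ≤ D) (hy : ‖y‖ ≤ D)
    (hpow : ‖x ^ j - y ^ j‖ ≤ e) (hmul : ‖y ^ j * (x - y)‖ ≤ e) :
    ‖x - y‖ ^ (2 * j) ≤ (4 * D) ^ j * e := by
  have he : 0 ≤ e := (norm_nonneg _).trans hpow
  have hxy : ‖x - y‖ ≤ 2 * D := (norm_sub_le _ _).trans (by linarith)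
  have hxj : ‖x‖ ^ j ≤ e + ‖y‖ ^ j := by
    rw [← norm_pow, ← norm_pow]
    exact (norm_le_norm_sub_add _ _).trans (by gcongr)
  have hsum : ‖x - y‖ ^ j ≤ 2 ^ (j - 1) * (e + 2 * ‖y‖ ^ j) :=
    calc ‖x - y‖ ^ j ≤ (‖x‖ + ‖y‖) ^ j := by
          gcongr
          exact norm_sub_le _ _
      _ ≤ 2 ^ (j - 1) * (‖x‖ ^ j + ‖y‖ ^ j) := add_pow_le (norm_nonneg _) (norm_nonneg _) j
      _ ≤ 2 ^ (j - 1) * (e + 2 * ‖y‖ ^ j) := by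
          refine mul_le_mul_of_nonneg_left ?_ (by positivity)
          linarith
  rw [norm_mul, norm_pow] at hmul
  obtain ⟨i, rfl⟩ := Nat.exists_eq_succ_of_ne_zero hj
  calc ‖x - y‖ ^ (2 * (i + 1)) = ‖x - y‖ ^ i * ‖x - y‖ * ‖x - y‖ ^ (i + 1) := by ring
    _ ≤ ‖x - y‖ ^ i * ‖x - y‖ * (2 ^ i * (e + 2 * ‖y‖ ^ (i + 1))) := by gcongr; exact hsum
    _ = ‖x - y‖ ^ i * 2 ^ i * (‖x - y‖ * e + 2 * (‖y‖ ^ (i + 1) * ‖x - y‖)) := by ring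
    _ ≤ (2 * D) ^ i * 2 ^ i * (2 * D * e + 2 * e) := by gcongr
    _ ≤ (2 * D) ^ i * 2 ^ i * (2 * D * e + 2 * D * e) := by
        gcongr
        linarith
    _ = (4 * D) ^ (i + 1) * e := by
        rw [← mul_pow]
        ring

theorem norm_le_two_of_norm_pow_sub_le {E : ℝ} (hj : j ≠ 0) (hp : ‖p‖ ≤ 1) (hE1 : E ≤ 1)
    (hw : ‖w ^ j - p‖ ≤ E) : ‖w‖ ≤ 2 := by
  by_contra! h
  have hself : ‖w‖ ≤ ‖w ^ j‖ := by
    rw [norm_pow]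
    exact le_self_pow₀ (by linarith) hj
  linarith [norm_le_norm_sub_add (w ^ j) p]

theorem norm_pow_sub_pow_succ_le {E : ℝ} (hp : ‖p‖ ≤ 1) (hq : ‖q‖ ≤ 1) (hE1 : E ≤ 1)
    (hwp : ‖w ^ j - p‖ ≤ E) (hwq : ‖w ^ (j + 1) - q‖ ≤ E) :
    ‖q ^ j - p ^ (j + 1)‖ ≤ (j * 2 ^ (j - 1) + (j + 1) * 2 ^ j) * E := by
  have hw₁ : ‖w ^ j‖ ≤ 2 := by linarith [norm_le_norm_sub_add (w ^ j) p]
  have hw₂ : ‖w ^ (j + 1)‖ ≤ 2 := by linarith [norm_le_norm_sub_add (w ^ (j + 1)) q]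
  have hqw := norm_pow_sub_pow_le j (hq.trans one_le_two) hw₂
  have hwp' := norm_pow_sub_pow_le (j + 1) hw₁ (hp.trans one_le_two)
  rw [norm_sub_rev q] at hqw
  rw [Nat.add_sub_cancel, Nat.cast_add_one] at hwp'
  calc ‖q ^ j - p ^ (j + 1)‖
      = ‖(q ^ j - (w ^ (j + 1)) ^ j) + ((w ^ j) ^ (j + 1) - p ^ (j + 1))‖ := by ring_nf
    _ ≤ j * 2 ^ (j - 1) * E + (j + 1) * 2 ^ j * E :=
        norm_add_le_of_le (hqw.trans (by gcongr)) (hwp'.trans (by gcongr))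
    _ = _ := by ring

theorem norm_sub_pow_two_mul_le_of_approx {B E e : ℝ} (hj : j ≠ 0) (hp : ‖p‖ ≤ 1) (hy : ‖y‖ ≤ B)
    (hE1 : E ≤ 1) (hwp : ‖w ^ j - p‖ ≤ E) (hwq : ‖w ^ (j + 1) - q‖ ≤ E) (hyp : ‖y ^ j - p‖ ≤ e)
    (hyq : ‖y * p - q‖ ≤ e) : ‖y - w‖ ^ (2 * j) ≤ (4 * (B + 2)) ^ j * ((B + 1) * E + e) := by
  have hB : 0 ≤ B := (norm_nonneg y).trans hy
  have hE : 0 ≤ E := (norm_nonneg _).trans hwp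
  have hw : ‖w‖ ≤ B + 2 := (norm_le_two_of_norm_pow_sub_le hj hp hE1 hwp).trans (by linarith)
  refine norm_sub_pow_two_mul_le hj (by linarith) (hy.trans (by linarith)) hw ?_ ?_
  · calc ‖y ^ j - w ^ j‖ ≤ ‖y ^ j - p‖ + ‖w ^ j - p‖ := by
          rw [norm_sub_rev (w ^ j)]
          exact norm_sub_le_norm_sub_add_norm_sub _ _ _
      _ ≤ (B + 1) * E + e := by nlinarith
  · calc ‖w ^ j * (y - w)‖ = ‖y * (w ^ j - p) + ((y * p - q) - (w ^ (j + 1) - q))‖ := by ring_nf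
      _ ≤ B * E + (e + E) := by
          refine norm_add_le_of_le ?_ ((norm_sub_le _ _).trans (add_le_add hyq hwq))
          rw [norm_mul]
          gcongr
      _ = (B + 1) * E + e := by ring

end PowerRoots

theorem norm_pow_four_le_of_approx_root {j : ℕ} {E : ℝ} {P Q : Polynomial ℂ} {φ : ℝ → ℂ}
    (hP : ∀ z ∈ Metric.ball (0 : ℂ) 1, ‖P.eval z‖ ≤ 1)
    (hQ : ∀ z ∈ Metric.ball (0 : ℂ) 1, ‖Q.eval z‖ ≤ 1) (hE1 : E ≤ 1)
    (hφ : ∀ x : ℝ, |x| < 1 → ‖φ x ^ j - P.eval ↑x‖ ≤ E ∧ ‖φ x ^ (j + 1) - Q.eval ↑x‖ ≤ E)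
    {z : ℂ} (hz : z ∈ Metric.ball (0 : ℂ) (1 / 3)) :
    ‖Q.eval z ^ j - P.eval z ^ (j + 1)‖ ^ 4 ≤
      8 * ((j * 2 ^ (j - 1) + (j + 1) * 2 ^ j) * E) := by
  have hreal (x : ℝ) (hx : (x : ℂ) ∈ Metric.ball (0 : ℂ) 1) : |x| < 1 := by
    rwa [mem_ball_zero_iff, Complex.norm_real] at hx
  rw [mem_ball_zero_iff] at hz
  convert norm_pow_four_le_of_real_bound (x₀ := 0) (R := 1) (B := 2) (z := z)
    (G := fun z ↦ Q.eval z ^ j - P.eval z ^ (j + 1)) ?_ ?_ (fun x hx ↦ ?_) ?_ using 2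
  · norm_num
  · exact ((Q.differentiable.pow j).sub (P.differentiable.pow (j + 1))).differentiableOn
  · intro z hz
    rw [Complex.ofReal_zero] at hz
    calc ‖Q.eval z ^ j - P.eval z ^ (j + 1)‖ ≤ ‖Q.eval z‖ ^ j + ‖P.eval z‖ ^ (j + 1) := by
          rw [← norm_pow, ← norm_pow]
          exact norm_sub_le _ _
      _ ≤ 1 + 1 := add_le_add (pow_le_one₀ (norm_nonneg _) (hQ z hz))
          (pow_le_one₀ (norm_nonneg _) (hP z hz))
      _ = 2 := one_add_one_eq_two
  · rw [Complex.ofReal_zero] at hx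
    obtain ⟨hφP, hφQ⟩ := hφ x (hreal x hx)
    exact norm_pow_sub_pow_succ_le (hP x hx) (hQ x hx) hE1 hφP hφQ
  · simpa using hz

theorem exists_holomorphic_approx_of_pow_of_le {j : ℕ} (hj : j ≠ 0) :
    ∃ L : ℝ, 1 ≤ L ∧ ∀ (P Q : Polynomial ℂ) (φ : ℝ → ℂ) (E d : ℝ),
      (∀ z ∈ Metric.ball (0 : ℂ) 1, ‖P.eval z‖ ≤ 1) →
      (∀ z ∈ Metric.ball (0 : ℂ) 1, ‖Q.eval z‖ ≤ 1) → 0 < d → d ≤ 1 → E ≤ d →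
      8 * ((j * 2 ^ (j - 1) + (j + 1) * 2 ^ j) * E) ≤ d ^ (j * (j + 1) * 4) →
      (∀ x : ℝ, |x| < 1 → ‖φ x ^ j - P.eval ↑x‖ ≤ E ∧ ‖φ x ^ (j + 1) - Q.eval ↑x‖ ≤ E) →
      ∃ F : ℂ → ℂ, DifferentiableOn ℂ F (Metric.ball 0 (1 / 48)) ∧
        (∀ z ∈ Metric.ball (0 : ℂ) (1 / 48), ‖F z‖ ≤ L) ∧
        ∀ x : ℝ, |x| < 1 / 48 → ‖φ x - F x‖ ^ (2 * j) ≤ L * ((P.natDegree + 1) * d) := by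
  obtain ⟨B, hB, happrox⟩ :=
    exists_holomorphic_approx_root hj 0 (show (0 : ℝ) < 1 / 3 by norm_num)
  rw [show (1 : ℝ) / 3 / 16 = 1 / 48 by norm_num] at happrox
  have hL : 1 ≤ (4 * (B + 2)) ^ j * (2 * B + 1) :=
    one_le_mul_of_one_le_of_one_le (one_le_pow₀ (by linarith)) (by linarith)
  refine ⟨B + (4 * (B + 2)) ^ j * (2 * B + 1), by linarith,
    fun P Q φ E d hP hQ hd hd1 hEd hE hφ ↦ ?_⟩
  have hsub : Metric.ball (0 : ℂ) (1 / 3) ⊆ Metric.ball 0 1 :=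
    Metric.ball_subset_ball (by norm_num)
  have hPQ (z) (hz : z ∈ Metric.ball (0 : ℂ) (1 / 3)) :
      ‖Q.eval z ^ j - P.eval z ^ (j + 1)‖ ≤ d ^ (j * (j + 1)) := by
    refine le_of_pow_le_pow_left₀ four_ne_zero (by positivity) ?_
    rw [← pow_mul]
    exact (norm_pow_four_le_of_approx_root hP hQ (hEd.trans hd1) hφ hz).trans hE
  obtain ⟨F, hF, hFw⟩ := happrox P Q d hd hd1 (fun z hz ↦ hP z (hsub hz)) hPQ
  refine ⟨F, hF, fun z hz ↦ (hFw z hz).1.trans (by linarith), fun x hx ↦ ?_⟩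
  have hx1 : |x| < 1 := hx.trans (by norm_num)
  have hball {r : ℝ} (hr : |x| < r) : (x : ℂ) ∈ Metric.ball (0 : ℂ) r := by
    rwa [mem_ball_zero_iff, Complex.norm_real]
  obtain ⟨hFB, hFP, hFQ⟩ := hFw x (hball hx)
  have hNd : d ≤ (P.natDegree + 1) * d := le_mul_of_one_le_left hd.le (by simp)
  rw [norm_sub_rev]
  calc ‖F x - φ x‖ ^ (2 * j)
      ≤ (4 * (B + 2)) ^ j * ((B + 1) * E + B * ((P.natDegree + 1) * d)) :=
        norm_sub_pow_two_mul_le_of_approx hj (hP x (hball hx1)) hFB (hEd.trans hd1) (hφ x hx1).1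
          (hφ x hx1).2 hFP hFQ
    _ ≤ (4 * (B + 2)) ^ j *
          ((B + 1) * ((P.natDegree + 1) * d) + B * ((P.natDegree + 1) * d)) := by
        gcongr
        exact hEd.trans hNd
    _ = (4 * (B + 2)) ^ j * (2 * B + 1) * ((P.natDegree + 1) * d) := by ring
    _ ≤ _ := by
        gcongr
        exact le_add_of_nonneg_left hB

theorem exists_holomorphic_approx_of_pow {j : ℕ} (hj : j ≠ 0) :
    ∃ (c C E₀ : ℝ) (n : ℕ), 0 < c ∧ 1 ≤ C ∧ 0 < E₀ ∧ E₀ ≤ 1 ∧ n ≠ 0 ∧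
      ∀ (P Q : Polynomial ℂ) (φ : ℝ → ℂ) (E : ℝ),
        (∀ z ∈ Metric.ball (0 : ℂ) 1, ‖P.eval z‖ ≤ 1) →
        (∀ z ∈ Metric.ball (0 : ℂ) 1, ‖Q.eval z‖ ≤ 1) → 0 < E → E ≤ E₀ →
        (∀ x : ℝ, |x| < 1 → ‖φ x ^ j - P.eval ↑x‖ ≤ E ∧ ‖φ x ^ (j + 1) - Q.eval ↑x‖ ≤ E) →
        ∃ F : ℂ → ℂ, DifferentiableOn ℂ F (Metric.ball 0 c) ∧
          (∀ z ∈ Metric.ball (0 : ℂ) c, ‖F z‖ ≤ C) ∧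
          ∀ x : ℝ, |x| < c → ‖φ x - F x‖ ^ n ≤ C * (P.natDegree + 1) ^ n * E := by
  obtain ⟨L, hL, happrox⟩ := exists_holomorphic_approx_of_pow_of_le hj
  set K : ℝ := 8 * (j * 2 ^ (j - 1) + (j + 1) * 2 ^ j)
  have hK1 : 1 ≤ K := by
    have h : (1 : ℝ) ≤ (j + 1) * 2 ^ j :=
      one_le_mul_of_one_le_of_one_le (by simp) (one_le_pow₀ one_le_two)
    have h' : (0 : ℝ) ≤ j * 2 ^ (j - 1) := by positivity
    linarith
  set m : ℕ := j * (j + 1) * 4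
  have hm : m ≠ 0 := by positivity
  refine ⟨1 / 48, L ^ m * K, 1 / K, 2 * j * m, by norm_num,
    one_le_mul_of_one_le_of_one_le (one_le_pow₀ hL) hK1, by positivity,
    div_le_one_of_le₀ hK1 (by positivity), by positivity, fun P Q φ E hP hQ hE hE₀ hφ ↦ ?_⟩
  rw [le_div_iff₀' (by positivity)] at hE₀
  obtain ⟨d, hd, hdE⟩ : ∃ d : ℝ, 0 < d ∧ d ^ m = K * E :=
    ⟨(K * E) ^ (m : ℝ)⁻¹, by positivity, Real.rpow_inv_natCast_pow (by positivity) hm⟩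
  have hd1 : d ≤ 1 := (pow_le_one_iff_of_nonneg hd.le hm).1 (hdE.trans_le hE₀)
  have hEd : E ≤ d :=
    calc E ≤ K * E := le_mul_of_one_le_left hE.le hK1
      _ ≤ d := hdE.symm.trans_le (pow_le_of_le_one hd.le hd1 hm)
  obtain ⟨F, hF, hFB, hFφ⟩ := happrox P Q φ E d hP hQ hd hd1 hEd
    (by linarith [mul_assoc 8 (j * 2 ^ (j - 1) + (j + 1) * 2 ^ j : ℝ) E]) hφ
  refine ⟨F, hF, fun z hz ↦ (hFB z hz).trans ?_, fun x hx ↦ ?_⟩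
  · calc L ≤ L ^ m := le_self_pow₀ hL hm
      _ ≤ L ^ m * K := le_mul_of_one_le_right (by positivity) hK1
  · calc ‖φ x - F x‖ ^ (2 * j * m) = (‖φ x - F x‖ ^ (2 * j)) ^ m := pow_mul _ _ _
      _ ≤ (L * ((P.natDegree + 1) * d)) ^ m := by
          gcongr
          exact hFφ x hx
      _ = L ^ m * K * (P.natDegree + 1) ^ m * E := by
          rw [mul_pow, mul_pow, hdE]
          ring
      _ ≤ L ^ m * K * (P.natDegree + 1) ^ (2 * j * m) * E := by
          gcongr
          · simp
          · exact Nat.le_mul_of_pos_left _ (by positivity)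

/-- `F` is a holomorphic approximation of `f : ℝ → ℂ` at scale `ρ` around `x`: it is bounded by `C`
on the disc of radius `ρ` and differs from `f` by at most `e` on the real diameter. -/
structure HolomorphicApprox (f : ℝ → ℂ) (C e x ρ : ℝ) (F : ℂ → ℂ) : Prop where
  differentiableOn : DifferentiableOn ℂ F (Metric.ball (x : ℂ) ρ)
  norm_le : ∀ z ∈ Metric.ball (x : ℂ) ρ, ‖F z‖ ≤ C
  norm_sub_le : ∀ y : ℝ, |y - x| < ρ → ‖f y - F y‖ ≤ e

namespace HolomorphicApprox

variable {f : ℝ → ℂ} {C e x x' ρ R δ : ℝ} {F F₁ F₂ : ℂ → ℂ}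

theorem mono (h : HolomorphicApprox f C e x ρ F) {e' : ℝ} (he : e ≤ e')
    (hR : |x' - x| + R ≤ ρ) : HolomorphicApprox f C e' x' R F := by
  have hsub : Metric.ball (x' : ℂ) R ⊆ Metric.ball (x : ℂ) ρ := by
    refine Metric.ball_subset_ball' ?_
    rwa [Complex.dist_of_im_eq (by simp), Complex.ofReal_re, Complex.ofReal_re, Real.dist_eq,
      add_comm]
  exact ⟨h.differentiableOn.mono hsub, fun z hz ↦ h.norm_le z (hsub hz),
    fun y hy ↦ (h.norm_sub_le y (by linarith [abs_sub_le y x' x])).trans he⟩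

theorem norm_sub_le_of_norm_lt (h₁ : HolomorphicApprox f C (δ ^ 4) x R F₁)
    (h₂ : HolomorphicApprox f C (δ ^ 4) x R F₂) (hC : 1 ≤ C) (hδ : 0 ≤ δ) {z : ℂ}
    (hz : ‖z - x‖ < R / 3) : ‖F₁ z - F₂ z‖ ≤ 2 * C * δ := by
  have hreal (y : ℝ) (hy : (y : ℂ) ∈ Metric.ball (x : ℂ) R) :
      ‖F₁ y - F₂ y‖ ≤ 2 * δ ^ 4 := by
    rw [Metric.mem_ball, Complex.dist_of_im_eq (by simp), Real.dist_eq] at hy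
    calc ‖F₁ y - F₂ y‖ ≤ ‖F₁ y - f y‖ + ‖f y - F₂ y‖ := norm_sub_le_norm_sub_add_norm_sub ..
      _ ≤ δ ^ 4 + δ ^ 4 :=
        add_le_add (norm_sub_rev (F₁ y) (f y) ▸ h₁.norm_sub_le y hy) (h₂.norm_sub_le y hy)
      _ = 2 * δ ^ 4 := by ring
  have htwo : ‖F₁ z - F₂ z‖ ^ 4 ≤ (2 * C) ^ 3 * (2 * δ ^ 4) :=
    norm_pow_four_le_of_real_bound (G := fun z ↦ F₁ z - F₂ z)
      (h₁.differentiableOn.sub h₂.differentiableOn)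
      (fun w hw ↦ (_root_.norm_sub_le _ _).trans (by linarith [h₁.norm_le w hw, h₂.norm_le w hw]))
      hreal hz
  refine le_of_pow_le_pow_left₀ four_ne_zero (by positivity) (htwo.trans ?_)
  calc (2 * C) ^ 3 * (2 * δ ^ 4) = 16 * (C ^ 3 * δ ^ 4) * 1 := by ring
    _ ≤ 16 * (C ^ 3 * δ ^ 4) * C := by gcongr
    _ = (2 * C * δ) ^ 4 := by ring

theorem norm_iteratedDeriv_sub_le (h₁ : HolomorphicApprox f C (δ ^ 4) x R F₁)
    (h₂ : HolomorphicApprox f C (δ ^ 4) x R F₂) (hC : 1 ≤ C) (hδ : 0 ≤ δ) (hR : 0 < R) (k : ℕ) :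
    ‖iteratedDeriv k F₁ x - iteratedDeriv k F₂ x‖ ≤ k.factorial * (4 / R) ^ k * (2 * C * δ) := by
  have hsub : Metric.closedBall (x : ℂ) (R / 4) ⊆ Metric.ball (x : ℂ) R :=
    Metric.closedBall_subset_ball (by linarith)
  have hnhds : Metric.ball (x : ℂ) R ∈ nhds (x : ℂ) := Metric.ball_mem_nhds _ hR
  have hcauchy := Complex.norm_iteratedDeriv_le_of_forall_mem_sphere_norm_le k
    (show 0 < R / 4 by positivity)
    ((h₁.differentiableOn.sub h₂.differentiableOn).diffContOnCl_ball hsub)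
    (fun z hz ↦ h₁.norm_sub_le_of_norm_lt h₂ hC hδ
      (by rw [mem_sphere_iff_norm.1 hz]; linarith))
  rw [iteratedDeriv_sub (h₁.differentiableOn.analyticAt hnhds).contDiffAt
    (h₂.differentiableOn.analyticAt hnhds).contDiffAt] at hcauchy
  refine hcauchy.trans_eq ?_
  rw [div_pow, div_pow]
  field_simp

theorem norm_iteratedDeriv_le (h : HolomorphicApprox f C e x ρ F) (hρ : 0 < ρ) (k : ℕ) :
    ‖iteratedDeriv k F x‖ ≤ k.factorial * (2 / ρ) ^ k * C := by
  have hsub : Metric.closedBall (x : ℂ) (ρ / 2) ⊆ Metric.ball (x : ℂ) ρ :=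
    Metric.closedBall_subset_ball (by linarith)
  refine (Complex.norm_iteratedDeriv_le_of_forall_mem_sphere_norm_le k
    (show 0 < ρ / 2 by positivity) (h.differentiableOn.diffContOnCl_ball hsub)
    (fun z hz ↦ h.norm_le z (hsub (Metric.sphere_subset_closedBall hz)))).trans_eq ?_
  rw [div_pow, div_pow]
  field_simp

theorem hasDerivAt_iteratedDeriv (h : HolomorphicApprox f C e x ρ F) (k : ℕ) {y : ℝ}
    (hy : |y - x| < ρ) :
    HasDerivAt (fun t : ℝ ↦ iteratedDeriv k F t) (iteratedDeriv (k + 1) F y) y := by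
  have hmem : (y : ℂ) ∈ Metric.ball (x : ℂ) ρ := by
    rwa [Metric.mem_ball, Complex.dist_of_im_eq (by simp), Real.dist_eq]
  have hF : AnalyticAt ℂ F y := h.differentiableOn.analyticAt (Metric.isOpen_ball.mem_nhds hmem)
  have hk : AnalyticAt ℂ (iteratedDeriv k F) y := by
    rw [iteratedDeriv_eq_iterate]
    exact hF.iterated_deriv k
  rw [iteratedDeriv_succ]
  exact hk.differentiableAt.hasDerivAt.comp_ofReal

end HolomorphicApprox

section DyadicLimits

variable {E : Type*} [NormedAddCommGroup E]

theorem exists_forall_norm_sub_le_of_dyadic [CompleteSpace E] {u : ℕ → E} {B : ℕ → ℝ} {r : ℝ}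
    (hr : 0 ≤ r) (hB : ∀ l, 0 ≤ B l)
    (hu : ∀ l i, ‖u i - u (i + 1)‖ ≤ B l * (r / 2 ^ i) ^ (l + 1)) :
    ∃ a, ∀ l i, ‖u i - a‖ ≤ 2 * B l * (r / 2 ^ i) ^ (l + 1) := by
  have hgeom (l i n : ℕ) :
      dist (u (i + n)) (u (i + (n + 1))) ≤ 2 * B l * (r / 2 ^ i) ^ (l + 1) / 2 / 2 ^ n := by
    rw [dist_eq_norm]
    refine (hu l (i + n)).trans ?_
    calc B l * (r / 2 ^ (i + n)) ^ (l + 1)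
        = B l * (r / 2 ^ i) ^ (l + 1) * (1 / 2 ^ n) ^ (l + 1) := by
          rw [mul_assoc, ← mul_pow, div_mul_div_comm, mul_one, ← pow_add 2 i n]
      _ ≤ B l * (r / 2 ^ i) ^ (l + 1) * (1 / 2 ^ n) := by
          have := hB l
          refine mul_le_mul_of_nonneg_left (pow_le_of_le_one (by positivity) ?_ l.succ_ne_zero)
            (by positivity)
          exact div_le_one_of_le₀ (one_le_pow₀ one_le_two) (by positivity)
      _ = 2 * B l * (r / 2 ^ i) ^ (l + 1) / 2 / 2 ^ n := by ring
  obtain ⟨a, ha⟩ := cauchySeq_tendsto_of_complete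
    (cauchySeq_of_le_geometric_two (by simpa only [zero_add] using hgeom 0 0))
  refine ⟨a, fun l i ↦ ?_⟩
  have hshift : Tendsto (fun n ↦ u (i + n)) atTop (nhds a) := by
    simpa only [add_comm i] using (tendsto_add_atTop_iff_nat i).2 ha
  simpa only [pow_zero, div_one, add_zero, dist_eq_norm] using
    dist_le_of_le_geometric_two_of_tendsto (hgeom l i) hshift 0

variable [NormedSpace ℝ E]

theorem norm_sub_sub_smul_le {ψ ψ₁ ψ₂ : ℝ → E} {x y B : ℝ}
    (hψ : ∀ t ∈ uIcc x y, HasDerivAt ψ (ψ₁ t) t) (hψ₁ : ∀ t ∈ uIcc x y, HasDerivAt ψ₁ (ψ₂ t) t)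
    (hψ₂ : ∀ t ∈ uIcc x y, ‖ψ₂ t‖ ≤ B) :
    ‖ψ y - ψ x - (y - x) • ψ₁ x‖ ≤ B * |y - x| ^ 2 := by
  have hconv : Convex ℝ (uIcc x y) := convex_uIcc x y
  have hB : 0 ≤ B := (norm_nonneg _).trans (hψ₂ x left_mem_uIcc)
  have hderiv (t : ℝ) (ht : t ∈ uIcc x y) : ‖ψ₁ t - ψ₁ x‖ ≤ B * |y - x| := by
    refine (hconv.norm_image_sub_le_of_norm_hasDerivWithin_le
      (fun s hs ↦ (hψ₁ s hs).hasDerivWithinAt) hψ₂ left_mem_uIcc ht).trans ?_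
    exact mul_le_mul_of_nonneg_left (abs_sub_left_of_mem_uIcc ht) hB
  have hsub (t : ℝ) (ht : t ∈ uIcc x y) :
      HasDerivWithinAt (fun s ↦ ψ s - (s - x) • ψ₁ x) (ψ₁ t - ψ₁ x) (uIcc x y) t := by
    have hlin : HasDerivAt (fun s : ℝ ↦ (s - x) • ψ₁ x) ((1 : ℝ) • ψ₁ x) t :=
      ((hasDerivAt_id t).sub_const x).smul_const _
    rw [one_smul] at hlin
    exact ((hψ t ht).sub hlin).hasDerivWithinAt
  have hmain := hconv.norm_image_sub_le_of_norm_hasDerivWithin_le hsub hderiv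
    left_mem_uIcc right_mem_uIcc
  simp only [sub_self, zero_smul, sub_zero, Real.norm_eq_abs] at hmain
  rwa [sub_right_comm, pow_two, ← mul_assoc]

theorem exists_dyadic_le_two_mul {h s : ℝ} (hh : 0 < h) (hs : h ≤ s) :
    ∃ i : ℕ, h ≤ s / 2 ^ i ∧ s / 2 ^ i ≤ 2 * h := by
  have hs0 : 0 < s := hh.trans_le hs
  obtain ⟨i, hlow, hup⟩ := exists_nat_pow_near_of_lt_one (x := h / s) (y := 1 / 2)
    (by positivity) (div_le_one_of_le₀ hs hs0.le) (by norm_num) (by norm_num)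
  rw [lt_div_iff₀ hs0, one_div, inv_pow, pow_succ, inv_mul_lt_iff₀ (by positivity)] at hlow
  rw [div_le_iff₀ hs0, one_div, inv_pow, ← div_eq_inv_mul] at hup
  refine ⟨i, hup, ?_⟩
  rw [div_le_iff₀ (by positivity)]
  linarith

theorem norm_sub_sub_smul_le_of_dyadic_approx {g : ℝ → E} {g' : E} {x y r κ A : ℝ} (hr : 0 < r)
    (hκ : 0 < κ) {ψ ψ₁ ψ₂ : ℕ → ℝ → E}
    (hψ : ∀ i t, |t - x| ≤ κ * (r / 2 ^ i) → HasDerivAt (ψ i) (ψ₁ i t) t)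
    (hψ₁ : ∀ i t, |t - x| ≤ κ * (r / 2 ^ i) → HasDerivAt (ψ₁ i) (ψ₂ i t) t)
    (hψ₂ : ∀ i t, |t - x| ≤ κ * (r / 2 ^ i) → ‖ψ₂ i t‖ ≤ A)
    (hg : ∀ i t, |t - x| ≤ κ * (r / 2 ^ i) → ‖g t - ψ i t‖ ≤ A * (r / 2 ^ i) ^ 2)
    (hg' : ∀ i, ‖g' - ψ₁ i x‖ ≤ A * (r / 2 ^ i)) (hy : |y - x| ≤ κ * r) :
    ‖g y - g x - (y - x) • g'‖ ≤ A * (2 * (2 / κ) ^ 2 + 1 + 2 / κ) * |y - x| ^ 2 := by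
  have hself (i : ℕ) : |x - x| ≤ κ * (r / 2 ^ i) := by
    rw [sub_self, abs_zero]
    positivity
  have hA : 0 ≤ A := (norm_nonneg _).trans (hψ₂ 0 x (hself 0))
  rcases eq_or_ne y x with rfl | hne
  · simp
  obtain ⟨i, hup, hlow⟩ := exists_dyadic_le_two_mul (abs_pos.2 (sub_ne_zero.2 hne)) hy
  rw [mul_div_assoc] at hup hlow
  have hscale : r / 2 ^ i ≤ 2 / κ * |y - x| := by
    rwa [div_mul_eq_mul_div, le_div_iff₀' hκ]
  have hseg (t : ℝ) (ht : t ∈ uIcc x y) : |t - x| ≤ κ * (r / 2 ^ i) :=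
    (abs_sub_left_of_mem_uIcc ht).trans hup
  have htaylor := norm_sub_sub_smul_le (fun t ht ↦ hψ i t (hseg t ht))
    (fun t ht ↦ hψ₁ i t (hseg t ht)) (fun t ht ↦ hψ₂ i t (hseg t ht))
  have hslope : ‖(y - x) • (g' - ψ₁ i x)‖ ≤ |y - x| * (A * (r / 2 ^ i)) := by
    rw [norm_smul, Real.norm_eq_abs]
    exact mul_le_mul_of_nonneg_left (hg' i) (abs_nonneg _)
  calc ‖g y - g x - (y - x) • g'‖
      = ‖(g y - ψ i y) - (g x - ψ i x) + (ψ i y - ψ i x - (y - x) • ψ₁ i x)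
          - (y - x) • (g' - ψ₁ i x)‖ := by
        congr 1
        module
    _ ≤ A * (r / 2 ^ i) ^ 2 + A * (r / 2 ^ i) ^ 2 + A * |y - x| ^ 2
          + |y - x| * (A * (r / 2 ^ i)) :=
        norm_sub_le_of_le (norm_add_le_of_le
          (norm_sub_le_of_le (hg i y hup) (hg i x (hself i))) htaylor) hslope
    _ ≤ A * (2 / κ * |y - x|) ^ 2 + A * (2 / κ * |y - x|) ^ 2 + A * |y - x| ^ 2
          + |y - x| * (A * (2 / κ * |y - x|)) := by gcongr
    _ = A * (2 * (2 / κ) ^ 2 + 1 + 2 / κ) * |y - x| ^ 2 := by ring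

theorem hasDerivAt_of_dyadic_approx {g : ℝ → E} {g' : E} {x r κ A : ℝ} (hr : 0 < r) (hκ : 0 < κ)
    {ψ ψ₁ ψ₂ : ℕ → ℝ → E}
    (hψ : ∀ i t, |t - x| ≤ κ * (r / 2 ^ i) → HasDerivAt (ψ i) (ψ₁ i t) t)
    (hψ₁ : ∀ i t, |t - x| ≤ κ * (r / 2 ^ i) → HasDerivAt (ψ₁ i) (ψ₂ i t) t)
    (hψ₂ : ∀ i t, |t - x| ≤ κ * (r / 2 ^ i) → ‖ψ₂ i t‖ ≤ A)
    (hg : ∀ i t, |t - x| ≤ κ * (r / 2 ^ i) → ‖g t - ψ i t‖ ≤ A * (r / 2 ^ i) ^ 2)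
    (hg' : ∀ i, ‖g' - ψ₁ i x‖ ≤ A * (r / 2 ^ i)) : HasDerivAt g g' x := by
  have hO : (fun y ↦ g y - g x - (y - x) • g') =O[nhds x] fun y ↦ ‖y - x‖ ^ 2 := by
    refine IsBigO.of_bound (A * (2 * (2 / κ) ^ 2 + 1 + 2 / κ)) ?_
    filter_upwards [Metric.closedBall_mem_nhds x (show 0 < κ * r by positivity)] with y hy
    rw [norm_pow, norm_norm]
    exact norm_sub_sub_smul_le_of_dyadic_approx hr hκ hψ hψ₁ hψ₂ hg hg' hy
  rw [hasDerivAt_iff_isLittleO]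
  exact hO.trans_isLittleO (isLittleO_pow_sub_sub x one_lt_two)

end DyadicLimits

/-- `F x a` is a holomorphic approximation of `f` at scale `c * a` around `x`, for all `x ∈ I` and
`0 < a ≤ r`, with an error that is `O(a ^ k)` for every `k` uniformly in `x`. The fourth power
compensates for the loss in the two constants estimate `norm_pow_four_le_of_real_bound`. -/
def IsHolomorphicApproxFamily (f : ℝ → ℂ) (I : Set ℝ) (r c C : ℝ) (β : ℕ → ℝ)
    (F : ℝ → ℝ → ℂ → ℂ) : Prop :=
  ∀ x ∈ I, ∀ a, 0 < a → a ≤ r → ∀ k : ℕ,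
    HolomorphicApprox f C ((β k * a ^ k) ^ 4) x (c * a) (F x a)

/-- `G k x` is the limit of the `k`-th derivatives at `x` of the functions `F x a` along the scales
`a = r / 2 ^ i`, with the rate of convergence that a holomorphic approximation family provides. -/
def IsDyadicJet (I : Set ℝ) (r c C : ℝ) (β : ℕ → ℝ) (F : ℝ → ℝ → ℂ → ℂ) (G : ℕ → ℝ → ℂ) : Prop :=
  ∀ x ∈ I, ∀ k l i : ℕ, ‖iteratedDeriv k (F x (r / 2 ^ i)) x - G k x‖ ≤
    2 * (k.factorial * (8 / c) ^ k * (2 * C * β (l + 1 + k))) * (r / 2 ^ i) ^ (l + 1)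

section Gluing

variable {f : ℝ → ℂ} {I : Set ℝ} {r c C : ℝ} {β : ℕ → ℝ} {F : ℝ → ℝ → ℂ → ℂ} {G : ℕ → ℝ → ℂ}

theorem IsHolomorphicApproxFamily.norm_iteratedDeriv_sub_le
    (hF : IsHolomorphicApproxFamily f I r c C β F) (hc : 0 < c) (hC : 1 ≤ C) (hβ : ∀ k, 0 ≤ β k)
    {x y a b : ℝ} (hx : x ∈ I) (hy : y ∈ I) (hb : 0 < b) (hba : b ≤ a) (hab : a ≤ 2 * b)
    (har : a ≤ r) (hyx : |y - x| ≤ c / 2 * a) (k l : ℕ) :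
    ‖iteratedDeriv k (F x a) y - iteratedDeriv k (F y b) y‖ ≤
      k.factorial * (8 / c) ^ k * (2 * C * β (l + k)) * a ^ l := by
  have ha : 0 < a := hb.trans_le hba
  have hβlk := hβ (l + k)
  have h₁ : HolomorphicApprox f C ((β (l + k) * a ^ (l + k)) ^ 4) y (c / 2 * a) (F x a) :=
    (hF x hx a ha har (l + k)).mono le_rfl (by linarith)
  have h₂ : HolomorphicApprox f C ((β (l + k) * a ^ (l + k)) ^ 4) y (c / 2 * a) (F y b) := by
    refine (hF y hy b hb (hba.trans har) (l + k)).mono (by gcongr) ?_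
    rw [sub_self, abs_zero, zero_add]
    nlinarith
  refine (h₁.norm_iteratedDeriv_sub_le h₂ hC (by positivity) (by positivity) k).trans_eq ?_
  rw [show 4 / (c / 2 * a) = 8 / c / a by field_simp; norm_num, div_pow _ a, pow_add]
  field_simp

theorem IsHolomorphicApproxFamily.exists_isDyadicJet
    (hF : IsHolomorphicApproxFamily f I r c C β F) (hr : 0 < r) (hc : 0 < c) (hC : 1 ≤ C)
    (hβ : ∀ k, 0 ≤ β k) : ∃ G, IsDyadicJet I r c C β F G := by
  suffices h : ∀ x ∈ I, ∀ k, ∃ a, ∀ l i, ‖iteratedDeriv k (F x (r / 2 ^ i)) x - a‖ ≤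
      2 * (k.factorial * (8 / c) ^ k * (2 * C * β (l + 1 + k))) * (r / 2 ^ i) ^ (l + 1) by
    choose! G hG using h
    exact ⟨fun k x ↦ G x k, hG⟩
  intro x hx k
  refine exists_forall_norm_sub_le_of_dyadic hr.le
    (fun l ↦ by have := hβ (l + 1 + k); positivity) fun l i ↦ ?_
  have hi : r / 2 ^ i = 2 * (r / 2 ^ (i + 1)) := by
    rw [pow_succ]
    field_simp
  have hpos : 0 < r / 2 ^ (i + 1) := by positivity
  refine hF.norm_iteratedDeriv_sub_le hc hC hβ hx hx hpos (by linarith) hi.le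
    (div_le_self hr.le (one_le_pow₀ one_le_two)) ?_ k (l + 1)
  rw [sub_self, abs_zero]
  positivity

theorem tendsto_div_two_pow (r : ℝ) : Tendsto (fun i : ℕ ↦ r / 2 ^ i) atTop (nhds 0) :=
  tendsto_const_nhds.div_atTop (tendsto_pow_atTop_atTop_of_one_lt one_lt_two)

theorem IsDyadicJet.zero_eq (hG : IsDyadicJet I r c C β F G)
    (hF : IsHolomorphicApproxFamily f I r c C β F) (hr : 0 < r) (hc : 0 < c) {x : ℝ}
    (hx : x ∈ I) : G 0 x = f x := by
  have hlim : Tendsto (fun i : ℕ ↦ F x (r / 2 ^ i) x) atTop (nhds (G 0 x)) := by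
    rw [tendsto_iff_norm_sub_tendsto_zero]
    refine squeeze_zero (fun _ ↦ norm_nonneg _) (fun i ↦ hG x hx 0 0 i) ?_
    simpa using (tendsto_div_two_pow r).const_mul _
  refine tendsto_nhds_unique hlim ?_
  rw [tendsto_iff_norm_sub_tendsto_zero]
  refine squeeze_zero (g := fun i : ℕ ↦ (β 1 * (r / 2 ^ i) ^ 1) ^ 4)
    (fun _ ↦ norm_nonneg _) (fun i ↦ ?_) ?_
  · rw [norm_sub_rev]
    refine (hF x hx (r / 2 ^ i) (by positivity)
      (div_le_self hr.le (one_le_pow₀ one_le_two)) 1).norm_sub_le x ?_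
    rw [sub_self, abs_zero]
    positivity
  · simpa using ((tendsto_div_two_pow r).const_mul (β 1)).pow 4

theorem IsDyadicJet.norm_le (hG : IsDyadicJet I r c C β F G)
    (hF : IsHolomorphicApproxFamily f I r c C β F) (hr : 0 < r) (hc : 0 < c) (hC : 1 ≤ C) {x : ℝ}
    (hx : x ∈ I) (k : ℕ) :
    ‖G k x‖ ≤ k.factorial * (8 / c) ^ k * (C * (1 / r) ^ k + 4 * C * β (k + 1) * r) := by
  have hlim := hG x hx k 0 0
  rw [pow_zero, div_one, zero_add, pow_one, add_comm 1 k, norm_sub_rev] at hlim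
  have hcauchy : ‖iteratedDeriv k (F x r) x‖ ≤ k.factorial * (2 / (c * r)) ^ k * C :=
    (hF x hx r hr le_rfl k).norm_iteratedDeriv_le (by positivity) k
  calc ‖G k x‖ ≤ ‖G k x - iteratedDeriv k (F x r) x‖ + ‖iteratedDeriv k (F x r) x‖ :=
        norm_le_norm_sub_add ..
    _ ≤ 2 * (k.factorial * (8 / c) ^ k * (2 * C * β (k + 1))) * r
          + k.factorial * (8 / (c * r)) ^ k * C := by
        refine add_le_add hlim (hcauchy.trans ?_)
        gcongr
        norm_num
    _ = k.factorial * (8 / c) ^ k * (C * (1 / r) ^ k + 4 * C * β (k + 1) * r) := by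
        rw [show 8 / (c * r) = 8 / c * (1 / r) by field_simp, mul_pow]
        ring

theorem IsDyadicJet.exists_norm_iteratedDeriv_le (hG : IsDyadicJet I r c C β F G)
    (hF : IsHolomorphicApproxFamily f I r c C β F) (hr : 0 < r) (hc : 0 < c) (hC : 1 ≤ C)
    (hβ : ∀ k, 0 ≤ β k) (k : ℕ) :
    ∃ A, ∀ x ∈ I, ∀ y ∈ I, ∀ i : ℕ, |y - x| ≤ c / 2 * (r / 2 ^ i) →
      ‖iteratedDeriv k (F x (r / 2 ^ i)) y‖ ≤ A := by
  refine ⟨k.factorial * (8 / c) ^ k * (2 * C * β (0 + k))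
    + (2 * (k.factorial * (8 / c) ^ k * (2 * C * β (1 + k))) * r
    + k.factorial * (8 / c) ^ k * (C * (1 / r) ^ k + 4 * C * β (k + 1) * r)),
    fun x hx y hy i hyx ↦ ?_⟩
  have hi : r / 2 ^ i ≤ r := div_le_self hr.le (one_le_pow₀ one_le_two)
  have hpos : 0 < r / 2 ^ i := by positivity
  have hcmp := hF.norm_iteratedDeriv_sub_le hc hC hβ hx hy hpos le_rfl (by linarith) hi hyx k 0
  rw [pow_zero, mul_one] at hcmp
  have hlim : ‖iteratedDeriv k (F y (r / 2 ^ i)) y - G k y‖ ≤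
      2 * (k.factorial * (8 / c) ^ k * (2 * C * β (1 + k))) * r := by
    have hlim := hG y hy k 0 i
    rw [zero_add, pow_one] at hlim
    refine hlim.trans (mul_le_mul_of_nonneg_left hi ?_)
    have := hβ (1 + k)
    positivity
  refine (norm_le_norm_sub_add _ (iteratedDeriv k (F y (r / 2 ^ i)) y)).trans
    (add_le_add hcmp ((norm_le_norm_sub_add _ (G k y)).trans (add_le_add hlim ?_)))
  exact hG.norm_le hF hr hc hC hy k

theorem IsDyadicJet.exists_norm_sub_iteratedDeriv_le (hG : IsDyadicJet I r c C β F G)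
    (hF : IsHolomorphicApproxFamily f I r c C β F) (hr : 0 < r) (hc : 0 < c) (hC : 1 ≤ C)
    (hβ : ∀ k, 0 ≤ β k) (k : ℕ) :
    ∃ A, ∀ x ∈ I, ∀ y ∈ I, ∀ i : ℕ, |y - x| ≤ c / 2 * (r / 2 ^ i) →
      ‖G k y - iteratedDeriv k (F x (r / 2 ^ i)) y‖ ≤ A * (r / 2 ^ i) ^ 2 := by
  refine ⟨3 * (k.factorial * (8 / c) ^ k * (2 * C * β (2 + k))), fun x hx y hy i hyx ↦ ?_⟩
  have hpos : 0 < r / 2 ^ i := by positivity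
  have hcmp := hF.norm_iteratedDeriv_sub_le hc hC hβ hx hy hpos le_rfl (by linarith)
    (div_le_self hr.le (one_le_pow₀ one_le_two)) hyx k 2
  rw [norm_sub_rev] at hcmp ⊢
  rw [norm_sub_rev] at hcmp
  refine (norm_sub_le_norm_sub_add_norm_sub _ (iteratedDeriv k (F y (r / 2 ^ i)) y) _).trans ?_
  exact (add_le_add hcmp (hG y hy k 1 i)).trans_eq (by ring)

theorem IsDyadicJet.hasDerivAt (hG : IsDyadicJet I r c C β F G)
    (hF : IsHolomorphicApproxFamily f I r c C β F) (hI : IsOpen I) (hr : 0 < r) (hc : 0 < c)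
    (hC : 1 ≤ C) (hβ : ∀ k, 0 ≤ β k) {x : ℝ} (hx : x ∈ I) (k : ℕ) :
    HasDerivAt (G k) (G (k + 1) x) x := by
  obtain ⟨ε, hε, hεI⟩ := Metric.nhds_basis_closedBall.mem_iff.1 (hI.mem_nhds hx)
  obtain ⟨A₀, hA₀⟩ := hG.exists_norm_iteratedDeriv_le hF hr hc hC hβ (k + 2)
  obtain ⟨A₁, hA₁⟩ := hG.exists_norm_sub_iteratedDeriv_le hF hr hc hC hβ k
  set A₂ := 2 * ((k + 1).factorial * (8 / c) ^ (k + 1) * (2 * C * β (0 + 1 + (k + 1))))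
  set A := max A₀ (max A₁ A₂)
  have hnear {i : ℕ} {t : ℝ} (ht : |t - x| ≤ min (c / 2) (ε / r) * (r / 2 ^ i)) :
      t ∈ I ∧ |t - x| ≤ c / 2 * (r / 2 ^ i) ∧ |t - x| < c * (r / 2 ^ i) := by
    have hpos : 0 < r / 2 ^ i := by positivity
    have ht₁ := ht.trans (mul_le_mul_of_nonneg_right (min_le_left _ _) hpos.le)
    refine ⟨hεI ?_, ht₁, by nlinarith⟩
    calc |t - x| ≤ min (c / 2) (ε / r) * (r / 2 ^ i) := ht
      _ ≤ ε / r * r := by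
        gcongr
        · exact min_le_right _ _
        · exact div_le_self hr.le (one_le_pow₀ one_le_two)
      _ = ε := div_mul_cancel₀ _ hr.ne'
  have happrox (i : ℕ) := hF x hx (r / 2 ^ i) (by positivity)
    (div_le_self hr.le (one_le_pow₀ one_le_two)) 0
  refine hasDerivAt_of_dyadic_approx (κ := min (c / 2) (ε / r)) (A := A) hr (by positivity)
    (ψ := fun i t ↦ iteratedDeriv k (F x (r / 2 ^ i)) t)
    (ψ₁ := fun i t ↦ iteratedDeriv (k + 1) (F x (r / 2 ^ i)) t)
    (ψ₂ := fun i t ↦ iteratedDeriv (k + 2) (F x (r / 2 ^ i)) t)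
    (fun i t ht ↦ (happrox i).hasDerivAt_iteratedDeriv k (hnear ht).2.2)
    (fun i t ht ↦ (happrox i).hasDerivAt_iteratedDeriv (k + 1) (hnear ht).2.2)
    (fun i t ht ↦ (hA₀ x hx t (hnear ht).1 i (hnear ht).2.1).trans (le_max_left _ _))
    (fun i t ht ↦ (hA₁ x hx t (hnear ht).1 i (hnear ht).2.1).trans ?_) (fun i ↦ ?_)
  · gcongr
    exact (le_max_left _ _).trans (le_max_right _ _)
  · rw [norm_sub_rev]
    refine (hG x hx (k + 1) 0 i).trans ?_
    rw [zero_add, pow_one]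
    gcongr
    exact (le_max_right _ _).trans (le_max_right _ _)

theorem IsHolomorphicApproxFamily.exists_hasDerivAt_norm_le
    (hF : IsHolomorphicApproxFamily f I r c C β F) (hI : IsOpen I) (hr : 0 < r) (hc : 0 < c)
    (hC : 1 ≤ C) (hβ : ∀ k, 0 ≤ β k) :
    ∃ G : ℕ → ℝ → ℂ, (∀ x ∈ I, G 0 x = f x) ∧
      (∀ x ∈ I, ∀ k, HasDerivAt (G k) (G (k + 1) x) x) ∧
      ∀ x ∈ I, ∀ k, ‖G k x‖ ≤
        k.factorial * (8 / c) ^ k * (C * (1 / r) ^ k + 4 * C * β (k + 1) * r) := by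
  obtain ⟨G, hG⟩ := hF.exists_isDyadicJet hr hc hC hβ
  exact ⟨G, fun x hx ↦ hG.zero_eq hF hr hc hx, fun x hx ↦ hG.hasDerivAt hF hI hr hc hC hβ hx,
    fun x hx ↦ hG.norm_le hF hr hc hC hx⟩

end Gluing

section Weights

variable {M M' N L L' m n : ℕ → ℝ} {A B C : ℝ}

theorem IsWeightSeq.mseq_pos (hM : IsWeightSeq M) (k : ℕ) : 0 < mseq M k :=
  div_pos (hM.2.1 k) (by positivity)

theorem IsWeightSeq.mseq_zero (hM : IsWeightSeq M) : mseq M 0 = 1 := by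
  simp [mseq, hM.1]

theorem IsWeightSeq.monotone (hM : IsWeightSeq M) : Monotone M := by
  obtain ⟨hzero, hpos, hone, hconvex, -⟩ := hM
  refine monotone_nat_of_le_succ fun k ↦ ?_
  induction k with
  | zero => exact hzero.trans_le hone
  | succ k ih =>
    have hsq : M (k + 1) ^ 2 ≤ M k * M (k + 2) := hconvex (k + 1) (by lia)
    refine le_of_mul_le_mul_left ?_ (hpos (k + 1))
    calc M (k + 1) * M (k + 1) = M (k + 1) ^ 2 := (sq _).symm
      _ ≤ M k * M (k + 2) := hsq
      _ ≤ M (k + 1) * M (k + 2) := mul_le_mul_of_nonneg_right ih (hpos _).le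

theorem RootTendsToInfty.eventually_pow_le (hroot : RootTendsToInfty n) (hn : ∀ k, 0 < n k)
    {t : ℝ} (ht : 0 ≤ t) : ∀ᶠ k in atTop, t ^ k ≤ n k := by
  filter_upwards [hroot.eventually_ge_atTop t, eventually_ne_atTop 0] with k hk hk₀
  calc t ^ k ≤ (n k ^ (1 / (k : ℝ))) ^ k := by gcongr
    _ = n k := by rw [one_div, Real.rpow_inv_natCast_pow (hn k).le hk₀]

theorem exists_pos_forall_le_mul_of_eventually_le (hn : ∀ k, 0 < n k)
    (hle : ∀ᶠ k in atTop, m k ≤ n k) : ∃ D, 0 < D ∧ ∀ k, m k ≤ D * n k := by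
  have hbdd : BddAbove (range fun k ↦ m k / n k) :=
    (isBoundedUnder_of_eventually_le (a := 1) <|
      hle.mono fun k hk ↦ (div_le_one (hn k)).2 hk).bddAbove_range
  obtain ⟨D, hD⟩ := hbdd
  refine ⟨max D 1, by positivity, fun k ↦ ?_⟩
  exact (div_le_iff₀ (hn k)).1 ((hD (mem_range_self k)).trans (le_max_left _ _))

theorem RootTendsToInfty.tendsto_mul_pow (hroot : RootTendsToInfty n) (hn : ∀ k, 0 < n k)
    {t : ℝ} (ht : 0 < t) : Tendsto (fun k ↦ n k * t ^ k) atTop atTop := by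
  refine tendsto_atTop_mono' _ ?_ (tendsto_pow_atTop_atTop_of_one_lt (one_lt_two (α := ℝ)))
  filter_upwards [hroot.eventually_pow_le hn (t := 2 / t) (by positivity)] with k hk
  calc (2 : ℝ) ^ k = (2 / t) ^ k * t ^ k := by rw [← mul_pow, div_mul_cancel₀ _ ht.ne']
    _ ≤ n k * t ^ k := by gcongr

theorem apply_gammaBar_mul_pow_le (hn : ∀ k, 0 < n k) (hroot : RootTendsToInfty n)
    {t : ℝ} (ht : 0 < t) (k : ℕ) : n (GammaBar n t) * t ^ GammaBar n t ≤ n k * t ^ k := by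
  have htendsto := hroot.tendsto_mul_pow hn ht
  rw [← Nat.cofinite_eq_atTop] at htendsto
  obtain ⟨k₀, hk₀⟩ := htendsto.exists_forall_le
  have hbdd : BddBelow (range fun k ↦ n k * t ^ k) := ⟨_, forall_mem_range.2 hk₀⟩
  have hattained : {k | hFun n t = n k * t ^ k}.Nonempty :=
    ⟨k₀, le_antisymm (ciInf_le hbdd k₀) (le_ciInf hk₀)⟩
  have hmem : hFun n t = n (GammaBar n t) * t ^ GammaBar n t := Nat.sInf_mem hattained
  exact hmem ▸ ciInf_le hbdd k

theorem mul_pow_le_one_of_le_gammaLow (hm : ∀ k, 0 < m k) (hm₀ : m 0 = 1) {t : ℝ} (ht : 0 < t)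
    {k : ℕ} (hk : k ≤ GammaLow m t) : m k * t ^ k ≤ 1 := by
  induction k with
  | zero => simp [hm₀]
  | succ k ih =>
    have hlt : m (k + 1) / m k < 1 / t := not_le.1 (Nat.notMem_of_lt_sInf hk)
    rw [div_lt_div_iff₀ (hm k) ht, one_mul] at hlt
    calc m (k + 1) * t ^ (k + 1) = (m (k + 1) * t) * t ^ k := by ring
      _ ≤ m k * t ^ k := by gcongr
      _ ≤ 1 := ih (by lia)

theorem apply_le_apply_mul_pow_of_div_le {ℓ : ℝ} (hm : ∀ k, 0 < m k) {K i : ℕ} (hKi : K ≤ i)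
    (hratio : ∀ k < i, m (k + 1) / m k ≤ ℓ) : m i ≤ m K * ℓ ^ (i - K) := by
  induction i, hKi using Nat.le_induction with
  | base => simp
  | succ i hKi ih =>
    have hstep : m (i + 1) ≤ ℓ * m i := (div_le_iff₀ (hm i)).1 (hratio i (by lia))
    have hℓ : 0 < ℓ := (div_pos (hm _) (hm _)).trans_le (hratio i (by lia))
    calc m (i + 1) ≤ ℓ * m i := hstep
      _ ≤ ℓ * (m K * ℓ ^ (i - K)) := by
        gcongr
        exact ih fun k hk ↦ hratio k (by lia)
      _ = m K * ℓ ^ (i + 1 - K) := by rw [Nat.sub_add_comm hKi]; ring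

/- Strong induction: with `1 / t` the largest ratio `m (k + 1) / m k` below `i`, the index
`GammaBar n (C * t)` lies below `i`, and it minimises `n k * (C * t) ^ k`. -/
theorem le_pow_mul_of_gammaBar_le_gammaLow (hm : ∀ k, 0 < m k) (hn : ∀ k, 0 < n k)
    (hm₀ : m 0 = 1) (hn₀ : n 0 = 1) (hroot : RootTendsToInfty n) (hC : 1 ≤ C)
    (hΓ : ∀ t : ℝ, 0 < t → GammaBar n (C * t) ≤ GammaLow m t) (i : ℕ) : m i ≤ C ^ i * n i := by
  induction i using Nat.strong_induction_on with | _ i ih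
  rcases Nat.eq_zero_or_pos i with rfl | hi
  · simp [hm₀, hn₀]
  obtain ⟨j, hj, hmax⟩ := Finset.exists_max_image (Finset.range i) (fun k ↦ m (k + 1) / m k)
    ⟨0, Finset.mem_range.2 hi⟩
  simp only [Finset.mem_range] at hj hmax
  set ℓ := m (j + 1) / m j with hℓdef
  have hℓ : 0 < ℓ := div_pos (hm _) (hm _)
  set K := GammaBar n (C * (1 / ℓ))
  have hKj : K ≤ j := (hΓ (1 / ℓ) (by positivity)).trans <| Nat.sInf_le <| by
    simp only [mem_ofPred_eq, one_div, inv_inv]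
    exact hℓdef.le
  have hKi : K ≤ i := by lia
  calc m i ≤ m K * ℓ ^ (i - K) := apply_le_apply_mul_pow_of_div_le hm hKi hmax
    _ ≤ (C ^ K * n K) * ℓ ^ (i - K) := by
      gcongr
      exact ih K (by lia)
    _ = (n K * (C * (1 / ℓ)) ^ K) * ℓ ^ i := by
      rw [← pow_sub_mul_pow ℓ hKi, one_div, mul_pow, inv_pow]
      field_simp
    _ ≤ (n i * (C * (1 / ℓ)) ^ i) * ℓ ^ i := by
      gcongr ?_ * _
      exact apply_gammaBar_mul_pow_le hn hroot (by positivity) i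
    _ = C ^ i * n i := by
      rw [one_div, mul_pow, inv_pow]
      field_simp

theorem MgFinite.exists_forall_le (hmg : MgFinite N L) (hN : ∀ k, 0 < N k) (hL : ∀ k, 0 < L k) :
    ∃ B, 1 ≤ B ∧ ∀ i k, 1 ≤ i + k → N (i + k) ≤ B ^ (i + k) * (L i * L k) := by
  obtain ⟨B, hB⟩ := hmg
  refine ⟨max B 1, le_max_right _ _, fun i k hik ↦ ?_⟩
  have hdiv : 0 ≤ N (i + k) / (L i * L k) := (div_pos (hN _) (mul_pos (hL i) (hL k))).le
  rw [← div_le_iff₀ (mul_pos (hL i) (hL k))]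
  calc N (i + k) / (L i * L k)
      = ((N (i + k) / (L i * L k)) ^ (1 / (i + k : ℝ))) ^ (i + k) := by
        rw [one_div, ← Nat.cast_add, Real.rpow_inv_natCast_pow hdiv (by lia)]
    _ ≤ max B 1 ^ (i + k) := by
        gcongr
        exact (hB ⟨i, k, hik, rfl⟩).trans (le_max_left _ _)

theorem MgFinite.exists_mseq_two_mul_le (hmg : MgFinite N L) (hN : IsWeightSeq N)
    (hL : IsWeightSeq L) : ∃ B, 1 ≤ B ∧ ∀ k, mseq N (2 * k) ≤ B ^ k * mseq L k ^ 2 := by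
  obtain ⟨B, hB, hle⟩ := hmg.exists_forall_le hN.2.1 hL.2.1
  refine ⟨B ^ 2, one_le_pow₀ hB, fun k ↦ ?_⟩
  rcases Nat.eq_zero_or_pos k with rfl | hk
  · simp [hN.mseq_zero, hL.mseq_zero]
  have hfact : (k.factorial : ℝ) * k.factorial ≤ (k + k).factorial := mod_cast
    Nat.le_of_dvd (Nat.factorial_pos _) (Nat.factorial_mul_factorial_dvd_factorial_add k k)
  have hLk := hL.2.1 k
  calc mseq N (2 * k) = N (k + k) / (k + k).factorial := by rw [mseq, two_mul]
    _ ≤ (B ^ (k + k) * (L k * L k)) / (k.factorial * k.factorial) := by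
      gcongr
      exact hle k k (by lia)
    _ = (B ^ 2) ^ k * mseq L k ^ 2 := by rw [mseq, ← pow_mul, ← two_mul]; ring

theorem mseq_two_pow_succ_mul_le {q : ℕ} (hL : ∀ k, 0 < mseq L k)
    (hNL : ∀ k, mseq N (2 ^ q * k) ≤ A ^ k * mseq L k ^ 2 ^ q) (hA : 0 ≤ A)
    (hLL' : ∀ k, mseq L (2 * k) ≤ B ^ k * mseq L' k ^ 2) (k : ℕ) :
    mseq N (2 ^ (q + 1) * k) ≤ (A ^ 2 * B ^ 2 ^ q) ^ k * mseq L' k ^ 2 ^ (q + 1) := by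
  have := hL (2 * k)
  calc mseq N (2 ^ (q + 1) * k) = mseq N (2 ^ q * (2 * k)) := by rw [pow_succ, mul_assoc]
    _ ≤ A ^ (2 * k) * mseq L (2 * k) ^ 2 ^ q := hNL _
    _ ≤ A ^ (2 * k) * (B ^ k * mseq L' k ^ 2) ^ 2 ^ q := by
      gcongr
      exact hLL' k
    _ = (A ^ 2 * B ^ 2 ^ q) ^ k * mseq L' k ^ 2 ^ (q + 1) := by
      rw [pow_succ' 2 q, mul_pow (B ^ k), mul_pow (A ^ 2), ← pow_mul A, ← pow_mul B, ← pow_mul B,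
        ← pow_mul (mseq L' k), mul_comm k (2 ^ q), mul_assoc]

theorem RModerateGrowth.exists_mseq_two_pow_mul_le {W : Set (ℕ → ℝ)} (hmg : RModerateGrowth W)
    (hW : ∀ M ∈ W, IsWeightSeq M) (q : ℕ) (hN : N ∈ W) :
    ∃ L ∈ W, ∃ A, 1 ≤ A ∧ ∀ k, mseq N (2 ^ q * k) ≤ A ^ k * mseq L k ^ 2 ^ q := by
  induction q with
  | zero => exact ⟨N, hN, 1, le_rfl, fun k ↦ by simp⟩
  | succ q ih =>
    obtain ⟨L, hL, A, hA, hNL⟩ := ih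
    obtain ⟨L', hL', hLL'⟩ := hmg L hL
    obtain ⟨B, hB, hB'⟩ := hLL'.exists_mseq_two_mul_le (hW L hL) (hW L' hL')
    exact ⟨L', hL', A ^ 2 * B ^ 2 ^ q, one_le_mul_of_one_le_of_one_le (one_le_pow₀ hA)
      (one_le_pow₀ hB), mseq_two_pow_succ_mul_le (hW L hL).mseq_pos hNL (by positivity) hB'⟩

theorem BModerateGrowth.exists_mseq_two_pow_mul_le {W : Set (ℕ → ℝ)} (hmg : BModerateGrowth W)
    (hW : ∀ M ∈ W, IsWeightSeq M) (q : ℕ) (hL : L ∈ W) :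
    ∃ N ∈ W, ∃ A, 1 ≤ A ∧ ∀ k, mseq N (2 ^ q * k) ≤ A ^ k * mseq L k ^ 2 ^ q := by
  induction q generalizing L with
  | zero => exact ⟨L, hL, 1, le_rfl, fun k ↦ by simp⟩
  | succ q ih =>
    obtain ⟨L₁, hL₁, hL₁L⟩ := hmg L hL
    obtain ⟨N, hN, A, hA, hNL₁⟩ := ih hL₁
    obtain ⟨B, hB, hB'⟩ := hL₁L.exists_mseq_two_mul_le (hW L₁ hL₁) (hW L hL)
    exact ⟨N, hN, A ^ 2 * B ^ 2 ^ q, one_le_mul_of_one_le_of_one_le (one_le_pow₀ hA)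
      (one_le_pow₀ hB), mseq_two_pow_succ_mul_le (hW L₁ hL₁).mseq_pos hNL₁ (by positivity) hB'⟩

/-- `HasTaylorDegrees Q A M n` says that for every scaled radius `t` there is a degree `K` at which
a function with derivatives bounded by `M` is well approximated by its Taylor polynomial: the
Taylor coefficients up to `K` decay geometrically, and the remainder bound
`M (K + 1) / K! * t ^ (K + 1)` is geometrically small in `K` and at most a multiple of
`(n k * (A * t) ^ k) ^ Q` for every `k`. -/
def HasTaylorDegrees (Q : ℕ) (A : ℝ) (M n : ℕ → ℝ) : Prop :=
  ∀ t : ℝ, 0 < t → ∃ K : ℕ, (∀ k ≤ K, mseq M k * t ^ k ≤ A * (1 / 2) ^ k) ∧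
    M (K + 1) / K.factorial * t ^ (K + 1) ≤ A * t * (1 / 2) ^ K ∧
    ∀ k, M (K + 1) / K.factorial * t ^ (K + 1) ≤ A * t * (n k * (A * t) ^ k) ^ Q

theorem mseq_mul_pow_le_of_le_gammaLow (hM : IsWeightSeq M) {t : ℝ} (hB : 0 < B) (ht : 0 < t)
    {k : ℕ} (hk : k ≤ GammaLow (mseq M) (2 * B * t)) : mseq M k * (B * t) ^ k ≤ (1 / 2) ^ k := by
  calc mseq M k * (B * t) ^ k = (mseq M k * (2 * B * t) ^ k) * (1 / 2) ^ k := by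
        rw [mul_assoc, ← mul_pow]
        congr 2
        ring
    _ ≤ 1 * (1 / 2) ^ k := by
        gcongr
        exact mul_pow_le_one_of_le_gammaLow hM.mseq_pos hM.mseq_zero (by positivity) hk
    _ = (1 / 2) ^ k := one_mul _

/- The degree at the radius `t` is `GammaBar (mseq N) (2 * B * C * t)`. -/
theorem hasTaylorDegrees_mseq (hM : IsWeightSeq M) (hM' : IsWeightSeq M') (hN : IsWeightSeq N)
    (hroot : RootTendsToInfty (mseq N)) (hB : 1 ≤ B) (hC : 1 ≤ C)
    (hMM' : ∀ k, M (k + 1) ≤ B ^ (k + 1) * M' k)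
    (hΓ : ∀ t : ℝ, 0 < t → GammaBar (mseq N) (C * t) ≤ GammaLow (mseq M') t) :
    HasTaylorDegrees 1 (2 * B * C) M (mseq N) := by
  intro t ht
  have hBA : B ≤ 2 * B * C := by nlinarith
  have hM'pos := hM'.mseq_pos
  have hNpos := hN.mseq_pos
  set K := GammaBar (mseq N) (C * (2 * B * t))
  have hsmall {k : ℕ} (hk : k ≤ K) : mseq M' k * (B * t) ^ k ≤ (1 / 2) ^ k :=
    mseq_mul_pow_le_of_le_gammaLow hM' (by positivity) ht (hk.trans (hΓ _ (by positivity)))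
  have hrem : M (K + 1) / K.factorial * t ^ (K + 1) ≤ B * t * (mseq M' K * (B * t) ^ K) := by
    calc M (K + 1) / K.factorial * t ^ (K + 1)
        ≤ (B ^ (K + 1) * M' K) / K.factorial * t ^ (K + 1) := by
          gcongr
          exact hMM' K
      _ = B * t * (mseq M' K * (B * t) ^ K) := by rw [mseq, mul_pow]; ring
  refine ⟨K, fun k hk ↦ ?_, ?_, fun k ↦ ?_⟩
  · calc mseq M k * t ^ k ≤ (B ^ (k + 1) * M' k / k.factorial) * t ^ k := by
          rw [mseq]
          gcongr
          exact (hM.monotone k.le_succ).trans (hMM' k)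
      _ = B * (mseq M' k * (B * t) ^ k) := by rw [mseq, mul_pow]; ring
      _ ≤ 2 * B * C * (1 / 2) ^ k :=
          mul_le_mul hBA (hsmall hk) (mul_nonneg (hM'pos k).le (by positivity)) (by positivity)
  · refine hrem.trans ?_
    exact mul_le_mul (by gcongr) (hsmall le_rfl) (mul_nonneg (hM'pos K).le (by positivity))
      (by positivity)
  · have hle : mseq M' K * (B * t) ^ K ≤ mseq N k * (2 * B * C * t) ^ k := by
      calc mseq M' K * (B * t) ^ K ≤ (C ^ K * mseq N K) * (2 * B * t) ^ K := by
            have := hNpos K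
            gcongr
            · exact le_pow_mul_of_gammaBar_le_gammaLow hM'pos hNpos hM'.mseq_zero hN.mseq_zero
                hroot hC hΓ K
            · linarith
        _ = mseq N K * (C * (2 * B * t)) ^ K := by rw [mul_pow C]; ring
        _ ≤ mseq N k * (C * (2 * B * t)) ^ k :=
            apply_gammaBar_mul_pow_le hNpos hroot (by positivity) k
        _ = mseq N k * (2 * B * C * t) ^ k := by ring
    rw [pow_one]
    refine hrem.trans ?_
    exact mul_le_mul (by gcongr) hle (mul_nonneg (hM'pos K).le (by positivity)) (by positivity)

theorem HasTaylorDegrees.pow {Q : ℕ} (h : HasTaylorDegrees 1 A M n) (hQ : Q ≠ 0) (hA : 0 ≤ A)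
    (hB : 1 ≤ B) (hm : ∀ k, 0 ≤ m k) (hnm : ∀ k, n (Q * k) ≤ B ^ k * m k ^ Q) :
    HasTaylorDegrees Q (A * B) M m := by
  have hAB : A ≤ A * B := le_mul_of_one_le_right hA hB
  intro t ht
  obtain ⟨K, hcoeff, hgeom, hrem⟩ := h t ht
  refine ⟨K, fun k hk ↦ (hcoeff k hk).trans (by gcongr), hgeom.trans (by gcongr), fun k ↦ ?_⟩
  have := hm k
  calc M (K + 1) / K.factorial * t ^ (K + 1)
      ≤ A * t * (n (Q * k) * (A * t) ^ (Q * k)) := by simpa only [pow_one] using hrem (Q * k)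
    _ ≤ A * t * (((B ^ k) ^ Q * m k ^ Q) * (A * t) ^ (Q * k)) := by
      gcongr
      refine (hnm k).trans ?_
      gcongr
      exact le_self_pow₀ (one_le_pow₀ hB) hQ
    _ = A * t * (m k * (A * B * t) ^ k) ^ Q := by
      rw [mul_comm Q k, pow_mul, ← mul_pow, ← mul_pow, mul_right_comm A B t, mul_pow (A * t)]
      ring
    _ ≤ A * B * t * (m k * (A * B * t) ^ k) ^ Q := by gcongr

/-- The three weight sequences of the main estimate: `M` bounds the derivatives of the powers of
`f`, the remainders of their Taylor polynomials are bounded by powers `mseq L k ^ Q` for all `k`,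
and `L'` bounds the derivatives of `f`. -/
structure WeightChain (Q : ℕ) (A : ℝ) (M L L' : ℕ → ℝ) : Prop where
  one_le : 1 ≤ A
  pos : ∀ k, 0 < M k
  mseq_pos : ∀ k, 0 < mseq L k
  pos' : ∀ k, 0 < L' k
  root : RootTendsToInfty (mseq L')
  hasTaylorDegrees : HasTaylorDegrees Q A M (mseq L)
  succ_le : ∀ k, L (k + 1) ≤ A ^ (k + 1) * L' k

theorem exists_weightChain {Q : ℕ} (hQ : Q ≠ 0) (hM : IsWeightSeq M) (hM' : IsWeightSeq M')
    (hN : IsWeightSeq N) (hL : IsWeightSeq L) (hL' : IsWeightSeq L')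
    (hrootN : RootTendsToInfty (mseq N)) (hrootL' : RootTendsToInfty (mseq L'))
    (hMM' : ∃ B, 1 ≤ B ∧ ∀ k, M (k + 1) ≤ B ^ (k + 1) * M' k)
    (hΓ : ∃ C, 1 ≤ C ∧ ∀ t : ℝ, 0 < t → GammaBar (mseq N) (C * t) ≤ GammaLow (mseq M') t)
    (hNL : ∃ D, 1 ≤ D ∧ ∀ k, mseq N (Q * k) ≤ D ^ k * mseq L k ^ Q)
    (hLL' : ∃ E, 1 ≤ E ∧ ∀ k, L (k + 1) ≤ E ^ (k + 1) * L' k) :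
    ∃ A, WeightChain Q A M L L' := by
  obtain ⟨B, hB, hMM'⟩ := hMM'
  obtain ⟨C, hC, hΓ⟩ := hΓ
  obtain ⟨D, hD, hNL⟩ := hNL
  obtain ⟨E, hE, hLL'⟩ := hLL'
  have hBC : 1 ≤ 2 * B * C := by nlinarith
  have hDE : 1 ≤ max D E := hD.trans (le_max_left _ _)
  have hE_le : E ≤ 2 * B * C * max D E :=
    (le_max_right _ _).trans (le_mul_of_one_le_left (by positivity) hBC)
  refine ⟨2 * B * C * max D E, one_le_mul_of_one_le_of_one_le hBC hDE, hM.2.1, hL.mseq_pos,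
    hL'.2.1, hrootL', ?_, fun k ↦ (hLL' k).trans ?_⟩
  · refine (hasTaylorDegrees_mseq hM hM' hN hrootN hB hC hMM' hΓ).pow hQ (by positivity) hDE
      (fun k ↦ (hL.mseq_pos k).le) fun k ↦ (hNL k).trans ?_
    have := hL.mseq_pos k
    gcongr
    exact le_max_left _ _
  · have := hL'.2.1 k
    gcongr

theorem RRegular.exists_weightChain {W : Set (ℕ → ℝ)} (hreg : RRegular W)
    (hmg : RModerateGrowth W) (hW : ∀ M ∈ W, IsWeightSeq M) (q : ℕ) (hM : M ∈ W) :
    ∃ L, ∃ L' ∈ W, ∃ A, WeightChain (2 ^ q) A M L L' := by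
  obtain ⟨hroot, hderiv, hΓ⟩ := hreg
  obtain ⟨M', hM', hMM'⟩ := hderiv M hM
  obtain ⟨N, hN, hM'N⟩ := hΓ M' hM'
  obtain ⟨L, hL, hNL⟩ := hmg.exists_mseq_two_pow_mul_le hW q hN
  obtain ⟨L', hL', hLL'⟩ := hderiv L hL
  exact ⟨L, L', hL', _root_.exists_weightChain (by positivity) (hW M hM) (hW M' hM') (hW N hN)
    (hW L hL) (hW L' hL') (hroot N hN) (hroot L' hL') hMM' hM'N hNL hLL'⟩

theorem BRegular.exists_succ_le {W : Set (ℕ → ℝ)} (hreg : BRegular W)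
    (hW : ∀ M ∈ W, IsWeightSeq M) (hL' : L' ∈ W) :
    ∃ L ∈ W, ∃ B, 1 ≤ B ∧ ∀ k, L (k + 1) ≤ B ^ (k + 1) * L' k := by
  obtain ⟨L, hL, B, hB, hle⟩ := hreg.2.1 L' hL'
  refine ⟨L, hL, B, hB, fun k ↦ (hle k).trans ?_⟩
  exact mul_le_mul_of_nonneg_right (pow_le_pow_right₀ hB k.le_succ) ((hW L' hL').2.1 k).le

theorem BRegular.exists_weightChain {W : Set (ℕ → ℝ)} (hreg : BRegular W)
    (hmg : BModerateGrowth W) (hW : ∀ M ∈ W, IsWeightSeq M) (q : ℕ) (hL' : L' ∈ W) :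
    ∃ M ∈ W, ∃ L A, WeightChain (2 ^ q) A M L L' := by
  obtain ⟨L, hL, hLL'⟩ := hreg.exists_succ_le hW hL'
  obtain ⟨N, hN, hNL⟩ := hmg.exists_mseq_two_pow_mul_le hW q hL
  obtain ⟨M', hM', hM'N⟩ := hreg.2.2 N hN
  obtain ⟨M, hM, hMM'⟩ := hreg.exists_succ_le hW hM'
  exact ⟨M, hM, L, _root_.exists_weightChain (by positivity) (hW M hM) (hW M' hM') (hW N hN)
    (hW L hL) (hW L' hL') (hreg.1 N hN) (hreg.1 L' hL') hMM' hM'N hNL hLL'⟩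

end Weights

section Taylor

/-- The function `g` is smooth on `U` and obeys the estimate `‖g⁽ᵏ⁾‖ ≤ C σᵏ Mₖ` there, which is
the one defining the classes `E^{𝔐}`. The derivatives are the unrestricted ones, so this is meant
for open `U`. -/
structure HasDerivBounds (M : ℕ → ℝ) (C σ : ℝ) (g : ℝ → ℂ) (U : Set ℝ) : Prop where
  contDiffOn : ContDiffOn ℝ (⊤ : ℕ∞) g U
  norm_le : ∀ x ∈ U, ∀ k, ‖iteratedDeriv k g x‖ ≤ C * σ ^ k * M k

variable {M M' : ℕ → ℝ} {C C' σ σ' : ℝ} {g : ℝ → ℂ} {U V : Set ℝ}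

theorem HasDerivBounds.mono (h : HasDerivBounds M C σ g U) (hVU : V ⊆ U) (hC : 0 ≤ C)
    (hσ : 0 ≤ σ) (hM : ∀ k, 0 ≤ M k) (hCC' : C ≤ C') (hσσ' : σ ≤ σ') (hMM' : ∀ k, M k ≤ M' k) :
    HasDerivBounds M' C' σ' g V := by
  refine ⟨h.contDiffOn.mono hVU, fun x hx k ↦ (h.norm_le x (hVU hx) k).trans ?_⟩
  exact mul_le_mul (mul_le_mul hCC' (pow_le_pow_left₀ hσ hσσ' k) (by positivity) (hC.trans hCC'))
    (hMM' k) (hM k) (mul_nonneg (hC.trans hCC') (pow_nonneg (hσ.trans hσσ') k))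

theorem HasDerivBounds.const_mul (h : HasDerivBounds M C σ g U) (a : ℂ) :
    HasDerivBounds M (‖a‖ * C) σ (fun x ↦ a * g x) U := by
  refine ⟨contDiffOn_const.mul h.contDiffOn, fun x hx k ↦ ?_⟩
  rw [iteratedDeriv_const_mul_field, norm_mul, mul_assoc ‖a‖, mul_assoc ‖a‖]
  exact mul_le_mul_of_nonneg_left (h.norm_le x hx k) (norm_nonneg a)

theorem norm_iteratedFDerivWithin_eq_norm_iteratedDeriv (hU : IsOpen U) {x : ℝ} (hx : x ∈ U)
    (k : ℕ) : ‖iteratedFDerivWithin ℝ k g U x‖ = ‖iteratedDeriv k g x‖ := by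
  rw [norm_iteratedFDerivWithin_eq_norm_iteratedDerivWithin, iteratedDerivWithin_of_isOpen hU hx]

theorem hasDerivBounds_of_norm_iteratedFDerivWithin_le (hg : ContDiffOn ℝ (⊤ : ℕ∞) g U)
    (hU : IsOpen U) (hVU : V ⊆ U)
    (hle : ∀ x ∈ V, ∀ k, ‖iteratedFDerivWithin ℝ k g U x‖ ≤ C * σ ^ k * M k) :
    HasDerivBounds M C σ g V :=
  ⟨hg.mono hVU, fun x hx k ↦
    (norm_iteratedFDerivWithin_eq_norm_iteratedDeriv hU (hVU hx) k).symm.trans_le (hle x hx k)⟩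

theorem HasDerivBounds.norm_iteratedFDerivWithin_le (h : HasDerivBounds M C σ g U)
    (hU : IsOpen U) {x : ℝ} (hx : x ∈ U) (k : ℕ) :
    ‖iteratedFDerivWithin ℝ k g U x‖ ≤ C * σ ^ k * M k :=
  (norm_iteratedFDerivWithin_eq_norm_iteratedDeriv hU hx k).trans_le (h.norm_le x hx k)

theorem hasDerivBounds_of_hasDerivAt {G : ℕ → ℝ → ℂ} (hU : IsOpen U) (hG₀ : ∀ x ∈ U, G 0 x = g x)
    (hG : ∀ x ∈ U, ∀ k, HasDerivAt (G k) (G (k + 1) x) x)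
    (hle : ∀ x ∈ U, ∀ k, ‖G k x‖ ≤ C * σ ^ k * M k) : HasDerivBounds M C σ g U := by
  have heq : ∀ k, EqOn (iteratedDeriv k g) (G k) U := by
    intro k
    induction k with
    | zero => exact fun x hx ↦ by rw [iteratedDeriv_zero, hG₀ x hx]
    | succ k ih =>
      intro x hx
      rw [iteratedDeriv_succ, (ih.eventuallyEq_of_mem (hU.mem_nhds hx)).deriv_eq]
      exact (hG x hx k).deriv
  refine ⟨contDiffOn_of_differentiableOn_deriv fun k _ ↦ ?_, fun x hx k ↦ ?_⟩
  · have hdiff : DifferentiableOn ℝ (G k) U :=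
      fun x hx ↦ (hG x hx k).differentiableAt.differentiableWithinAt
    exact hdiff.congr fun x hx ↦ (iteratedDerivWithin_of_isOpen hU hx).trans (heq k hx)
  · rw [heq k hx]
    exact hle x hx k

theorem norm_sub_taylorWithinEval_le {E : Type*} [NormedAddCommGroup E] [NormedSpace ℝ E]
    {f : ℝ → E} {n : ℕ} {x y B : ℝ} (hU : IsOpen U) (hf : ContDiffOn ℝ (n + 1) f U)
    (hxy : uIcc x y ⊆ U) (hB : ∀ t ∈ uIcc x y, ‖iteratedDeriv (n + 1) f t‖ ≤ B) :
    ‖f y - taylorWithinEval f n U x y‖ ≤ B * |y - x| ^ (n + 1) / n.factorial := by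
  have hderiv : ∀ t ∈ uIcc x y, HasDerivWithinAt (fun s ↦ taylorWithinEval f n U s y)
      (((n.factorial : ℝ)⁻¹ * (y - t) ^ n) • iteratedDeriv (n + 1) f t) (uIcc x y) t := by
    intro t ht
    rw [← iteratedDerivWithin_of_isOpen hU (hxy ht)]
    exact (hasDerivWithinAt_taylorWithinEval hU.uniqueDiffOn self_mem_nhdsWithin (hxy ht)
      subset_rfl (hf.of_le (by norm_cast; omega)) (hf.differentiableOn_iteratedDerivWithin
        (by norm_cast; omega) hU.uniqueDiffOn t (hxy ht))).mono hxy
  have hbound : ∀ t ∈ uIcc x y,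
      ‖((n.factorial : ℝ)⁻¹ * (y - t) ^ n) • iteratedDeriv (n + 1) f t‖
        ≤ (n.factorial : ℝ)⁻¹ * |y - x| ^ n * B := by
    intro t ht
    rw [norm_smul, norm_mul, norm_inv, norm_pow, RCLike.norm_natCast, Real.norm_eq_abs]
    refine mul_le_mul ?_ (hB t ht) (norm_nonneg _) (by positivity)
    gcongr _ * ?_ ^ n
    exact abs_sub_right_of_mem_uIcc ht
  have hmean := (convex_uIcc x y).norm_image_sub_le_of_norm_hasDerivWithin_le hderiv hbound
    left_mem_uIcc right_mem_uIcc
  rw [taylorWithinEval_self, Real.norm_eq_abs] at hmean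
  exact hmean.trans_eq (by ring)

/-- The Taylor polynomial of degree `K` of the function `w ↦ g (x + a w)` at `0`, as a polynomial
with complex argument. -/
def scaledTaylorPolynomial (g : ℝ → ℂ) (x a : ℝ) (K : ℕ) : Polynomial ℂ :=
  ∑ k ∈ Finset.range (K + 1),
    Polynomial.monomial k ((a : ℂ) ^ k / k.factorial * iteratedDeriv k g x)

theorem natDegree_scaledTaylorPolynomial_le (g : ℝ → ℂ) (x a : ℝ) (K : ℕ) :
    (scaledTaylorPolynomial g x a K).natDegree ≤ K :=
  Polynomial.natDegree_sum_le_of_forall_le _ _ fun _ hk ↦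
    (Polynomial.natDegree_monomial_le _).trans (Nat.le_of_lt_succ (Finset.mem_range.1 hk))

theorem eval_scaledTaylorPolynomial_ofReal (hU : IsOpen U) {x : ℝ} (hx : x ∈ U) (a : ℝ) (K : ℕ)
    (w : ℝ) :
    (scaledTaylorPolynomial g x a K).eval (w : ℂ) = taylorWithinEval g K U x (x + a * w) := by
  rw [scaledTaylorPolynomial, Polynomial.eval_finsetSum, taylor_within_apply]
  refine Finset.sum_congr rfl fun k _ ↦ ?_
  rw [Polynomial.eval_monomial, iteratedDerivWithin_of_isOpen hU hx, Complex.real_smul]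
  push_cast
  ring

theorem HasDerivBounds.norm_eval_scaledTaylorPolynomial_le (h : HasDerivBounds M C σ g U)
    {x a A : ℝ} (hx : x ∈ U) (ha : 0 ≤ a) (hC : 0 ≤ C) (hA : 0 ≤ A) {K : ℕ}
    (hK : ∀ k ≤ K, mseq M k * (σ * a) ^ k ≤ A * (1 / 2) ^ k) {z : ℂ} (hz : ‖z‖ ≤ 1) :
    ‖(scaledTaylorPolynomial g x a K).eval z‖ ≤ 2 * A * C := by
  have hterm : ∀ k ∈ Finset.range (K + 1),
      ‖(Polynomial.monomial k ((a : ℂ) ^ k / k.factorial * iteratedDeriv k g x)).eval z‖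
        ≤ C * A * (1 / 2) ^ k := by
    intro k hk
    rw [Polynomial.eval_monomial, norm_mul, norm_mul, norm_div, norm_pow, norm_pow,
      Complex.norm_natCast, Complex.norm_of_nonneg ha]
    calc a ^ k / k.factorial * ‖iteratedDeriv k g x‖ * ‖z‖ ^ k
        ≤ a ^ k / k.factorial * ‖iteratedDeriv k g x‖ * 1 := by
          gcongr
          exact pow_le_one₀ (norm_nonneg z) hz
      _ ≤ a ^ k / k.factorial * (C * σ ^ k * M k) * 1 := by
          gcongr
          exact h.norm_le x hx k
      _ = C * (mseq M k * (σ * a) ^ k) := by rw [mseq, mul_pow]; ring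
      _ ≤ C * (A * (1 / 2) ^ k) :=
          mul_le_mul_of_nonneg_left (hK k (Nat.le_of_lt_succ (Finset.mem_range.1 hk))) hC
      _ = C * A * (1 / 2) ^ k := by ring
  have hgeom : ∑ k ∈ Finset.range (K + 1), (1 / 2 : ℝ) ^ k ≤ 2 :=
    (summable_geometric_two.sum_le_tsum _ fun k _ ↦ by positivity).trans_eq tsum_geometric_two
  rw [scaledTaylorPolynomial, Polynomial.eval_finsetSum]
  refine (norm_sum_le_of_le _ hterm).trans ?_
  rw [← Finset.mul_sum]
  exact (mul_le_mul_of_nonneg_left hgeom (mul_nonneg hC hA)).trans_eq (by ring)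

theorem HasDerivBounds.norm_sub_eval_scaledTaylorPolynomial_le (h : HasDerivBounds M C σ g U)
    (hU : IsOpen U) {x a : ℝ} (ha : 0 < a) (hball : Metric.ball x a ⊆ U) (K : ℕ) {w : ℝ}
    (hw : |w| < 1) :
    ‖g (x + a * w) - (scaledTaylorPolynomial g x a K).eval (w : ℂ)‖
      ≤ C * (M (K + 1) / K.factorial * (σ * a) ^ (K + 1)) := by
  have hx : x ∈ Metric.ball x a := Metric.mem_ball_self ha
  have haw : |a * w| ≤ a := by
    rw [abs_mul, abs_of_pos ha]
    exact mul_le_of_le_one_right ha.le hw.le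
  have hy : x + a * w ∈ Metric.ball x a := by
    rw [Metric.mem_ball, Real.dist_eq, add_sub_cancel_left, abs_mul, abs_of_pos ha]
    exact mul_lt_of_lt_one_right ha hw
  have hxy : uIcc x (x + a * w) ⊆ U :=
    ((convex_ball x a).ordConnected.uIcc_subset hx hy).trans hball
  have hB : 0 ≤ C * σ ^ (K + 1) * M (K + 1) := (norm_nonneg _).trans (h.norm_le x (hball hx) _)
  rw [eval_scaledTaylorPolynomial_ofReal hU (hball hx)]
  calc ‖g (x + a * w) - taylorWithinEval g K U x (x + a * w)‖
      ≤ C * σ ^ (K + 1) * M (K + 1) * |x + a * w - x| ^ (K + 1) / K.factorial :=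
        norm_sub_taylorWithinEval_le hU (h.contDiffOn.of_le (by exact_mod_cast le_top)) hxy
          fun t ht ↦ h.norm_le t (hxy ht) _
    _ ≤ C * σ ^ (K + 1) * M (K + 1) * a ^ (K + 1) / K.factorial := by
        rw [add_sub_cancel_left]
        gcongr
    _ = C * (M (K + 1) / K.factorial * (σ * a) ^ (K + 1)) := by rw [mul_pow]; ring

end Taylor

section PropertyD

theorem exists_add_one_pow_mul_half_pow_le (p : ℕ) :
    ∃ D : ℝ, 1 ≤ D ∧ ∀ K : ℕ, ((K : ℝ) + 1) ^ p * (1 / 2) ^ K ≤ D := by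
  have htendsto : Tendsto (fun n : ℕ ↦ (n : ℝ) ^ p * (1 / 2 : ℝ) ^ n) atTop (nhds 0) :=
    tendsto_pow_const_mul_const_pow_of_lt_one p (by norm_num) (by norm_num)
  obtain ⟨D, hD⟩ := htendsto.bddAbove_range
  refine ⟨max 1 (2 * D), le_max_left _ _, fun K ↦ le_max_of_le_right ?_⟩
  have hK := hD ⟨K + 1, rfl⟩
  simp only [Nat.cast_add, Nat.cast_one, pow_succ] at hK
  linarith

theorem exists_pow_le_mul_of_pow_le {C : ℝ} (hC : 1 ≤ C) {n p : ℕ} (hn : n ≠ 0)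
    (hnp : 2 * n ≤ p) :
    ∃ B : ℝ, 1 ≤ B ∧ ∀ (K : ℕ) (X E : ℝ), 0 ≤ X → 0 ≤ E → E ≤ (1 / 2) ^ K →
      X ^ n ≤ C * (K + 1) ^ n * E → X ^ p ≤ B * E := by
  obtain ⟨D, hD, hKD⟩ := exists_add_one_pow_mul_half_pow_le (2 * n)
  have hCD : 1 ≤ C ^ 2 * D := one_le_mul_of_one_le_of_one_le (one_le_pow₀ hC) hD
  refine ⟨(C ^ 2 * D) ^ (p - 2 * n + 1), one_le_pow₀ hCD, fun K X E hX hE hEK hXE ↦ ?_⟩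
  have hX2 : X ^ (2 * n) ≤ C ^ 2 * D * E :=
    calc X ^ (2 * n) = (X ^ n) ^ 2 := by rw [← pow_mul, mul_comm]
      _ ≤ (C * (K + 1) ^ n * E) ^ 2 := by gcongr
      _ = C ^ 2 * ((K + 1) ^ (2 * n) * E) * E := by ring
      _ ≤ C ^ 2 * ((K + 1) ^ (2 * n) * (1 / 2) ^ K) * E := by gcongr
      _ ≤ C ^ 2 * D * E := by
        gcongr
        exact hKD K
  have hX1 : X ≤ C ^ 2 * D := by
    by_contra! hlt
    have hX_le : X ≤ X ^ (2 * n) := le_self_pow₀ (hCD.trans hlt.le) (by positivity)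
    have hE1 : E ≤ 1 := hEK.trans (pow_le_one₀ (by norm_num) (by norm_num))
    exact absurd (hX_le.trans (hX2.trans (mul_le_of_le_one_right (by positivity) hE1))) hlt.not_ge
  calc X ^ p = X ^ (p - 2 * n) * X ^ (2 * n) := by rw [← pow_add, Nat.sub_add_cancel hnp]
    _ ≤ (C ^ 2 * D) ^ (p - 2 * n) * (C ^ 2 * D * E) := by gcongr
    _ = (C ^ 2 * D) ^ (p - 2 * n + 1) * E := by ring

theorem exists_holomorphicApprox_of_pow {j : ℕ} (hj : j ≠ 0) :
    ∃ (c C B E₀ : ℝ) (q : ℕ), 0 < c ∧ 1 ≤ C ∧ 1 ≤ B ∧ 0 < E₀ ∧ E₀ ≤ 1 ∧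
      ∀ (P Q : Polynomial ℂ) (φ : ℝ → ℂ) (E : ℝ) (K : ℕ), P.natDegree ≤ K →
        (∀ z : ℂ, ‖z‖ ≤ 1 → ‖P.eval z‖ ≤ 1) → (∀ z : ℂ, ‖z‖ ≤ 1 → ‖Q.eval z‖ ≤ 1) →
        0 < E → E ≤ E₀ * (1 / 2) ^ K →
        (∀ w : ℝ, |w| < 1 → ‖φ w ^ j - P.eval ↑w‖ ≤ E ∧ ‖φ w ^ (j + 1) - Q.eval ↑w‖ ≤ E) →
        ∃ F, ∀ e, 0 ≤ e → B * E ≤ e ^ 2 ^ q → HolomorphicApprox φ C e 0 c F := by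
  obtain ⟨c, C, E₀, n, hc, hC, hE₀, hE₀1, hn, happrox⟩ := exists_holomorphic_approx_of_pow hj
  obtain ⟨B, hB, hpow⟩ := exists_pow_le_mul_of_pow_le hC hn (2 * n).lt_two_pow_self.le
  refine ⟨c, C, B, E₀, 2 * n, hc, hC, hB, hE₀, hE₀1, fun P Q φ E K hPK hP hQ hE hEK hφ ↦ ?_⟩
  have hhalf : (1 / 2 : ℝ) ^ K ≤ 1 := pow_le_one₀ (by norm_num) (by norm_num)
  obtain ⟨F, hF, hFC, hFφ⟩ := happrox P Q φ E
    (fun z hz ↦ hP z (mem_ball_zero_iff.1 hz).le) (fun z hz ↦ hQ z (mem_ball_zero_iff.1 hz).le) hE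
    (hEK.trans (mul_le_of_le_one_right hE₀.le hhalf)) hφ
  refine ⟨F, fun e he hBe ↦ ⟨by rwa [Complex.ofReal_zero], by rwa [Complex.ofReal_zero],
    fun y hy ↦ le_of_pow_le_pow_left₀ (by positivity) he (le_trans ?_ hBe)⟩⟩
  rw [sub_zero] at hy
  refine hpow K _ E (norm_nonneg _) hE.le
    (hEK.trans (mul_le_of_le_one_left (by positivity) hE₀1)) ((hFφ y hy).trans ?_)
  gcongr

theorem HolomorphicApprox.rescale {f : ℝ → ℂ} {C e x a c : ℝ} {F : ℂ → ℂ}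
    (h : HolomorphicApprox (fun w ↦ f (x + a * w)) C e 0 c F) (ha : 0 < a) :
    HolomorphicApprox f C e x (c * a) (fun z ↦ F ((z - x) / a)) := by
  have hmaps : MapsTo (fun z : ℂ ↦ (z - x) / a) (Metric.ball (x : ℂ) (c * a))
      (Metric.ball ((0 : ℝ) : ℂ) c) := by
    intro z hz
    rw [Complex.ofReal_zero, mem_ball_zero_iff, norm_div, Complex.norm_of_nonneg ha.le,
      div_lt_iff₀ ha, ← dist_eq_norm]
    exact hz
  refine ⟨h.differentiableOn.comp (by fun_prop) hmaps, fun z hz ↦ h.norm_le _ (hmaps hz),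
    fun y hy ↦ ?_⟩
  have hbound := h.norm_sub_le ((y - x) / a) (by
    rwa [sub_zero, abs_div, abs_of_pos ha, div_lt_iff₀ ha])
  rw [mul_div_cancel₀ _ ha.ne', add_sub_cancel] at hbound
  simpa only [Complex.ofReal_div, Complex.ofReal_sub] using hbound

variable {A B C σ r c x₀ : ℝ} {M L L' n : ℕ → ℝ} {f g : ℝ → ℂ} {I U : Set ℝ} {W : Set (ℕ → ℝ)}

theorem HasTaylorDegrees.exists_remainder_le {Q : ℕ} (h : HasTaylorDegrees Q A M n)
    (hM : ∀ k, 0 < M k) (hn : ∀ k, 0 ≤ n k) (hA : 0 ≤ A) (hC : 0 < C) {t E₀ : ℝ} (ht : 0 < t)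
    (hCt : C * (A * t) ≤ E₀) (hE₀ : E₀ ≤ 1) :
    ∃ (K : ℕ) (E : ℝ), E = C * (M (K + 1) / K.factorial * t ^ (K + 1)) ∧ 0 < E ∧
      (∀ k ≤ K, mseq M k * t ^ k ≤ A * (1 / 2) ^ k) ∧ E ≤ E₀ * (1 / 2) ^ K ∧
      ∀ k, E ≤ (n k * (A * t) ^ k) ^ Q := by
  obtain ⟨K, hcoeff, hgeom, hrem⟩ := h t ht
  have := hM (K + 1)
  refine ⟨K, _, rfl, by positivity, hcoeff, ?_, fun k ↦ ?_⟩
  · calc C * (M (K + 1) / K.factorial * t ^ (K + 1)) ≤ C * (A * t * (1 / 2) ^ K) :=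
          mul_le_mul_of_nonneg_left hgeom hC.le
      _ = C * (A * t) * (1 / 2) ^ K := by ring
      _ ≤ E₀ * (1 / 2) ^ K := by gcongr
  · have := hn k
    calc C * (M (K + 1) / K.factorial * t ^ (K + 1)) ≤ C * (A * t * (n k * (A * t) ^ k) ^ Q) :=
          mul_le_mul_of_nonneg_left (hrem k) hC.le
      _ = C * (A * t) * (n k * (A * t) ^ k) ^ Q := by ring
      _ ≤ (n k * (A * t) ^ k) ^ Q := mul_le_of_le_one_left (by positivity) (hCt.trans hE₀)

theorem exists_isHolomorphicApproxFamily {j : ℕ} (hj : j ≠ 0) :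
    ∃ (c C₀ B E₀ : ℝ) (q : ℕ), 0 < c ∧ 1 ≤ C₀ ∧ 1 ≤ B ∧ 0 < E₀ ∧
      ∀ {A C σ r x₀ : ℝ} {M n : ℕ → ℝ} {f : ℝ → ℂ}, HasTaylorDegrees (2 ^ (q + 2)) A M n →
        (∀ k, 0 < M k) → (∀ k, 0 ≤ n k) → 0 ≤ A → 0 < C → 0 < σ → 2 * A * C ≤ 1 →
        C * (A * (σ * r)) ≤ E₀ → HasDerivBounds M C σ (f ^ j) (Metric.ball x₀ (2 * r)) →
        HasDerivBounds M C σ (f ^ (j + 1)) (Metric.ball x₀ (2 * r)) →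
        ∃ F, IsHolomorphicApproxFamily f (Metric.ball x₀ r) r c C₀
          (fun k ↦ B * n k * (A * σ) ^ k) F := by
  obtain ⟨c, C₀, B, E₀, q, hc, hC₀, hB, hE₀, hE₀1, happrox⟩ := exists_holomorphicApprox_of_pow hj
  refine ⟨c, C₀, B, E₀, q, hc, hC₀, hB, hE₀, fun {A C σ r x₀ M n f} hdeg hM hn hA hC hσ hAC hr
    hfj hfj' ↦ ?_⟩
  suffices h : ∀ x ∈ Metric.ball x₀ r, ∀ a, 0 < a → a ≤ r → ∃ F, ∀ k,
      HolomorphicApprox f C₀ ((B * n k * (A * σ) ^ k * a ^ k) ^ 4) x (c * a) F by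
    choose! F hF using h
    exact ⟨F, hF⟩
  intro x hx a ha har
  have hball : Metric.ball x a ⊆ Metric.ball x₀ (2 * r) :=
    Metric.ball_subset_ball' (by linarith [Metric.mem_ball.1 hx])
  obtain ⟨K, E, hE_eq, hE, hcoeff, hEK, hEk⟩ := hdeg.exists_remainder_le hM hn hA hC
    (mul_pos hσ ha) (le_trans (by gcongr) hr) hE₀1
  have hpoly {g : ℝ → ℂ} (hg : HasDerivBounds M C σ g (Metric.ball x₀ (2 * r))) (z : ℂ)
      (hz : ‖z‖ ≤ 1) : ‖(scaledTaylorPolynomial g x a K).eval z‖ ≤ 1 :=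
    (hg.norm_eval_scaledTaylorPolynomial_le (hball (Metric.mem_ball_self ha)) ha.le hC.le hA
      hcoeff hz).trans hAC
  have hrem {g : ℝ → ℂ} (hg : HasDerivBounds M C σ g (Metric.ball x₀ (2 * r))) (w : ℝ)
      (hw : |w| < 1) : ‖g (x + a * w) - (scaledTaylorPolynomial g x a K).eval ↑w‖ ≤ E :=
    hE_eq ▸ hg.norm_sub_eval_scaledTaylorPolynomial_le Metric.isOpen_ball ha hball K hw
  obtain ⟨F, hF⟩ := happrox _ _ (fun w ↦ f (x + a * w)) E K
    (natDegree_scaledTaylorPolynomial_le _ _ _ _) (hpoly hfj) (hpoly hfj') hE hEK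
    fun w hw ↦ ⟨hrem hfj w hw, hrem hfj' w hw⟩
  have hBE (k : ℕ) : B * E ≤ ((B * n k * (A * σ) ^ k * a ^ k) ^ 4) ^ 2 ^ q := by
    calc B * E ≤ B ^ 2 ^ (q + 2) * (n k * (A * (σ * a)) ^ k) ^ 2 ^ (q + 2) :=
          mul_le_mul (le_self_pow₀ hB (by positivity)) (hEk k) hE.le (by positivity)
      _ = ((B * n k * (A * σ) ^ k * a ^ k) ^ 4) ^ 2 ^ q := by
          rw [← mul_pow, ← mul_assoc A, mul_pow (A * σ), ← pow_mul, pow_add, mul_comm (2 ^ q)]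
          ring
  exact ⟨_, fun k ↦ (hF _ (by positivity) (hBE k)).rescale ha⟩

theorem WeightChain.exists_one_div_pow_le {Q : ℕ} (h : WeightChain Q A M L L') (hσ : 0 < σ)
    (hr : 0 < r) : ∃ D, 0 < D ∧ ∀ k : ℕ, k.factorial * (1 / r) ^ k ≤ D * σ ^ k * L' k := by
  have hpos (k : ℕ) : 0 < mseq L' k := div_pos (h.pos' k) (by positivity)
  obtain ⟨D, hD, hle⟩ := exists_pos_forall_le_mul_of_eventually_le hpos
    (h.root.eventually_pow_le hpos (show 0 ≤ 1 / r / σ by positivity))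
  refine ⟨D, hD, fun k ↦ ?_⟩
  calc k.factorial * (1 / r) ^ k = k.factorial * σ ^ k * (1 / r / σ) ^ k := by
        rw [mul_assoc, ← mul_pow, mul_div_cancel₀ _ hσ.ne']
    _ ≤ k.factorial * σ ^ k * (D * mseq L' k) := mul_le_mul_of_nonneg_left (hle k) (by positivity)
    _ = D * σ ^ k * L' k := by
        rw [mseq]
        field_simp

theorem WeightChain.factorial_mul_mseq_succ_le {Q : ℕ} (h : WeightChain Q A M L L') (k : ℕ) :
    k.factorial * mseq L (k + 1) ≤ A ^ (k + 1) * L' k := by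
  have hL := h.mseq_pos (k + 1)
  calc k.factorial * mseq L (k + 1) ≤ (k + 1).factorial * mseq L (k + 1) := by
        gcongr
        exact k.le_succ
    _ = L (k + 1) := mul_div_cancel₀ _ (by positivity)
    _ ≤ A ^ (k + 1) * L' k := h.succ_le k

theorem WeightChain.exists_hasDerivBounds {Q : ℕ} (h : WeightChain Q A M L L')
    {F : ℝ → ℝ → ℂ → ℂ} (hF : IsHolomorphicApproxFamily f I r c C
      (fun k ↦ B * mseq L k * (A * σ) ^ k) F)
    (hI : IsOpen I) (hr : 0 < r) (hc : 0 < c) (hC : 1 ≤ C) (hB : 0 ≤ B) (hσ : 0 < σ) :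
    ∃ C', 0 < C' ∧ HasDerivBounds L' C' (8 / c * A ^ 2 * σ) f I := by
  have hA : 0 < A := zero_lt_one.trans_le h.one_le
  obtain ⟨D, hD, hDle⟩ := h.exists_one_div_pow_le (show 0 < A ^ 2 * σ by positivity) hr
  obtain ⟨G, hG₀, hG, hGle⟩ := hF.exists_hasDerivAt_norm_le hI hr hc hC fun k ↦ by
    have := h.mseq_pos k
    positivity
  refine ⟨C * D + 4 * C * B * (A ^ 2 * σ) * r, by positivity,
    hasDerivBounds_of_hasDerivAt hI hG₀ hG fun x hx k ↦ (hGle x hx k).trans ?_⟩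
  calc k.factorial * (8 / c) ^ k *
        (C * (1 / r) ^ k + 4 * C * (B * mseq L (k + 1) * (A * σ) ^ (k + 1)) * r)
      = (8 / c) ^ k * (C * (k.factorial * (1 / r) ^ k) +
          4 * C * B * (A * σ) ^ (k + 1) * r * (k.factorial * mseq L (k + 1))) := by ring
    _ ≤ (8 / c) ^ k * (C * (D * (A ^ 2 * σ) ^ k * L' k) +
          4 * C * B * (A * σ) ^ (k + 1) * r * (A ^ (k + 1) * L' k)) := by
        gcongr _ * (_ * ?_ + _ * ?_)
        · exact hDle k
        · exact h.factorial_mul_mseq_succ_le k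
    _ = _ := by
        rw [mul_assoc (8 / c), mul_pow (8 / c), mul_pow A, mul_pow (A ^ 2) σ k, ← pow_mul]
        ring

theorem HasDerivBounds.const_mul_pow {i : ℕ} (h : HasDerivBounds M C σ (f ^ i) U) (hi : i ≠ 0)
    (hM : ∀ k, 0 ≤ M k) (hC : 0 ≤ C) (hσ : 0 ≤ σ) {a : ℝ} (ha : 0 ≤ a) (ha1 : a ≤ 1) :
    HasDerivBounds M (a * C) σ ((fun x ↦ a * f x) ^ i) U := by
  have heq : (fun x ↦ (a : ℂ) * f x) ^ i = fun x ↦ (a : ℂ) ^ i * (f ^ i) x := by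
    ext x
    exact mul_pow _ _ _
  rw [heq]
  refine (h.const_mul _).mono subset_rfl (by positivity) hσ hM ?_ le_rfl fun k ↦ le_rfl
  rw [norm_pow, Complex.norm_of_nonneg ha]
  gcongr
  exact pow_le_of_le_one ha ha1 hi

theorem HasDerivBounds.of_const_mul {a : ℂ} (ha : a ≠ 0)
    (h : HasDerivBounds M C σ (fun x ↦ a * f x) U) : HasDerivBounds M (‖a⁻¹‖ * C) σ f U := by
  simpa only [inv_mul_cancel_left₀ ha] using h.const_mul a⁻¹

theorem exists_pos_mul_le {C u v : ℝ} (hC : 0 < C) (hu : 0 < u) (hv : 0 < v) :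
    ∃ a : ℝ, 0 < a ∧ a ≤ 1 ∧ a * C ≤ u ∧ a * C ≤ v := by
  refine ⟨min 1 (min (u / C) (v / C)), by positivity, min_le_left _ _, ?_, ?_⟩
  · exact (le_div_iff₀ hC).1 ((min_le_right _ _).trans (min_le_left _ _))
  · exact (le_div_iff₀ hC).1 ((min_le_right _ _).trans (min_le_right _ _))

theorem exists_hasDerivBounds_of_pow {j : ℕ} (hj : j ≠ 0) :
    ∃ (q : ℕ) (c : ℝ), 0 < c ∧ ∀ {A C σ r x₀ : ℝ} {M L L' : ℕ → ℝ} {f : ℝ → ℂ},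
      WeightChain (2 ^ q) A M L L' → 0 < C → 0 < σ → 0 < r →
      HasDerivBounds M C σ (f ^ j) (Metric.ball x₀ (2 * r)) →
      HasDerivBounds M C σ (f ^ (j + 1)) (Metric.ball x₀ (2 * r)) →
      ∃ C', 0 < C' ∧ HasDerivBounds L' C' (c * A ^ 2 * σ) f (Metric.ball x₀ r) := by
  obtain ⟨c, C₀, B, E₀, q, hc, hC₀, hB, hE₀, hfamily⟩ := exists_isHolomorphicApproxFamily hj
  refine ⟨q + 2, 8 / c, by positivity, fun {A C σ r x₀ M L L' f} hchain hC hσ hr hfj hfj' ↦ ?_⟩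
  have hA : 0 < A := zero_lt_one.trans_le hchain.one_le
  have hM (k : ℕ) : 0 ≤ M k := (hchain.pos k).le
  obtain ⟨a, ha, ha1, hau, hav⟩ := exists_pos_mul_le hC (show 0 < 1 / (2 * A) by positivity)
    (show 0 < E₀ / (A * (σ * r)) by positivity)
  obtain ⟨F, hF⟩ := hfamily hchain.hasTaylorDegrees hchain.pos (fun k ↦ (hchain.mseq_pos k).le)
    hA.le (mul_pos ha hC) hσ ((le_div_iff₀' (by positivity)).1 hau)
    ((le_div_iff₀ (by positivity)).1 hav) (hfj.const_mul_pow hj hM hC.le hσ.le ha.le ha1)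
    (hfj'.const_mul_pow j.succ_ne_zero hM hC.le hσ.le ha.le ha1)
  obtain ⟨C', hC', hbounds⟩ :=
    hchain.exists_hasDerivBounds hF Metric.isOpen_ball hr hc hC₀ (zero_le_one.trans hB) hσ
  have ha0 : (a : ℂ) ≠ 0 := by exact_mod_cast ha.ne'
  exact ⟨_, mul_pos (norm_pos_iff.2 (inv_ne_zero ha0)) hC', hbounds.of_const_mul ha0⟩

theorem MatrixRoumieuOn.exists_hasDerivBounds (h : MatrixRoumieuOn W g U) (hU : IsOpen U)
    (hr : Metric.closedBall x₀ r ⊆ U) :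
    ∃ M ∈ W, ∃ C σ, 0 < C ∧ 0 < σ ∧ HasDerivBounds M C σ g (Metric.ball x₀ r) := by
  obtain ⟨M, hM, C, σ, hC, hσ, hle⟩ := h.2 (Metric.ball x₀ r) Metric.isOpen_ball
    Metric.isBounded_ball.isCompact_closure (Metric.closure_ball_subset_closedBall.trans hr)
  exact ⟨M, hM, C, σ, hC, hσ, hasDerivBounds_of_norm_iteratedFDerivWithin_le h.1 hU
    (Metric.ball_subset_closedBall.trans hr) hle⟩

theorem MatrixBeurlingOn.exists_hasDerivBounds (h : MatrixBeurlingOn W g U) (hU : IsOpen U)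
    (hr : Metric.closedBall x₀ r ⊆ U) (hM : M ∈ W) (hσ : 0 < σ) :
    ∃ C, 0 < C ∧ HasDerivBounds M C σ g (Metric.ball x₀ r) := by
  obtain ⟨C, hC, hle⟩ := h.2 (Metric.ball x₀ r) Metric.isOpen_ball
    Metric.isBounded_ball.isCompact_closure (Metric.closure_ball_subset_closedBall.trans hr)
    M hM σ hσ
  exact ⟨C, hC, hasDerivBounds_of_norm_iteratedFDerivWithin_le h.1 hU
    (Metric.ball_subset_closedBall.trans hr) hle⟩

theorem matrixRoumieuOn_of_hasDerivBounds (h : HasDerivBounds M C σ g U) (hU : IsOpen U)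
    (hM : M ∈ W) (hC : 0 < C) (hσ : 0 < σ) : MatrixRoumieuOn W g U :=
  ⟨h.contDiffOn, fun _ _ _ hVU ↦ ⟨M, hM, C, σ, hC, hσ, fun _ hx ↦
    h.norm_iteratedFDerivWithin_le hU (hVU (subset_closure hx))⟩⟩

theorem matrixBeurlingOn_of_hasDerivBounds (hW : W.Nonempty) (hU : IsOpen U)
    (h : ∀ M ∈ W, ∀ σ : ℝ, 0 < σ → ∃ C, 0 < C ∧ HasDerivBounds M C σ g U) :
    MatrixBeurlingOn W g U := by
  obtain ⟨M₀, hM₀⟩ := hW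
  obtain ⟨C₀, -, h₀⟩ := h M₀ hM₀ 1 one_pos
  refine ⟨h₀.contDiffOn, fun V _ _ hVU M hM σ hσ ↦ ?_⟩
  obtain ⟨C, hC, hbounds⟩ := h M hM σ hσ
  exact ⟨C, hC, fun x hx ↦ hbounds.norm_iteratedFDerivWithin_le hU (hVU (subset_closure hx))⟩

theorem IsWeightMatrix.exists_hasDerivBounds_of_two (hW : IsWeightMatrix W) {g₁ g₂ : ℝ → ℂ}
    (h₁ : ∃ M ∈ W, ∃ C σ, 0 < C ∧ 0 < σ ∧ HasDerivBounds M C σ g₁ U)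
    (h₂ : ∃ M ∈ W, ∃ C σ, 0 < C ∧ 0 < σ ∧ HasDerivBounds M C σ g₂ U) :
    ∃ M ∈ W, ∃ C σ, 0 < C ∧ 0 < σ ∧ HasDerivBounds M C σ g₁ U ∧ HasDerivBounds M C σ g₂ U := by
  obtain ⟨M₁, hM₁, C₁, σ₁, hC₁, hσ₁, h₁⟩ := h₁
  obtain ⟨M₂, hM₂, C₂, σ₂, hC₂, hσ₂, h₂⟩ := h₂
  have hnonneg {M : ℕ → ℝ} (hM : M ∈ W) (k : ℕ) : 0 ≤ M k := ((hW.2.1 M hM).2.1 k).le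
  obtain ⟨M, hM, h₁M, h₂M⟩ : ∃ M ∈ W, (∀ k, M₁ k ≤ M k) ∧ ∀ k, M₂ k ≤ M k := by
    rcases hW.2.2 M₁ hM₁ M₂ hM₂ with hle | hle
    · exact ⟨M₂, hM₂, hle, fun _ ↦ le_rfl⟩
    · exact ⟨M₁, hM₁, fun _ ↦ le_rfl, hle⟩
  exact ⟨M, hM, max C₁ C₂, max σ₁ σ₂, lt_max_of_lt_left hC₁, lt_max_of_lt_left hσ₁,
    h₁.mono subset_rfl hC₁.le hσ₁.le (hnonneg hM₁) (le_max_left _ _) (le_max_left _ _) h₁M,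
    h₂.mono subset_rfl hC₂.le hσ₂.le (hnonneg hM₂) (le_max_right _ _) (le_max_right _ _) h₂M⟩

theorem exists_pos_closedBall_subset {V : Set ℝ} (hU : IsOpen U) (hV : IsOpen V) (hxU : x₀ ∈ U)
    (hxV : x₀ ∈ V) :
    ∃ r, 0 < r ∧ Metric.closedBall x₀ (2 * r) ⊆ U ∧ Metric.closedBall x₀ (2 * r) ⊆ V := by
  obtain ⟨ε, hε, hsub⟩ :=
    Metric.nhds_basis_closedBall.mem_iff.1 (inter_mem (hU.mem_nhds hxU) (hV.mem_nhds hxV))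
  exact ⟨ε / 2, half_pos hε, by rwa [mul_div_cancel₀ _ two_ne_zero, ← subset_inter_iff]⟩

theorem MatrixRoumieuOn.of_pow {V : Set ℝ} {j : ℕ} (hW : IsWeightMatrix W) (hreg : RRegular W)
    (hmg : RModerateGrowth W) (hj : j ≠ 0) (hU : IsOpen U) (hV : IsOpen V) (hr : 0 < r)
    (hrU : Metric.closedBall x₀ (2 * r) ⊆ U) (hrV : Metric.closedBall x₀ (2 * r) ⊆ V)
    (hfj : MatrixRoumieuOn W (f ^ j) U) (hfj' : MatrixRoumieuOn W (f ^ (j + 1)) V) :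
    MatrixRoumieuOn W f (Metric.ball x₀ r) := by
  obtain ⟨q, c, hc, hroot⟩ := exists_hasDerivBounds_of_pow hj
  obtain ⟨M, hM, C, σ, hC, hσ, hbounds, hbounds'⟩ := hW.exists_hasDerivBounds_of_two
    (hfj.exists_hasDerivBounds hU hrU) (hfj'.exists_hasDerivBounds hV hrV)
  obtain ⟨L, L', hL', A, hchain⟩ := hreg.exists_weightChain hmg hW.2.1 q hM
  have hA : 0 < A := zero_lt_one.trans_le hchain.one_le
  obtain ⟨C', hC', hf⟩ := hroot hchain hC hσ hr hbounds hbounds'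
  exact matrixRoumieuOn_of_hasDerivBounds hf Metric.isOpen_ball hL' hC' (by positivity)

theorem MatrixBeurlingOn.of_pow {V : Set ℝ} {j : ℕ} (hW : IsWeightMatrix W) (hreg : BRegular W)
    (hmg : BModerateGrowth W) (hj : j ≠ 0) (hU : IsOpen U) (hV : IsOpen V) (hr : 0 < r)
    (hrU : Metric.closedBall x₀ (2 * r) ⊆ U) (hrV : Metric.closedBall x₀ (2 * r) ⊆ V)
    (hfj : MatrixBeurlingOn W (f ^ j) U) (hfj' : MatrixBeurlingOn W (f ^ (j + 1)) V) :
    MatrixBeurlingOn W f (Metric.ball x₀ r) := by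
  obtain ⟨q, c, hc, hroot⟩ := exists_hasDerivBounds_of_pow hj
  refine matrixBeurlingOn_of_hasDerivBounds hW.1 Metric.isOpen_ball fun L' hL' σ hσ ↦ ?_
  obtain ⟨M, hM, L, A, hchain⟩ := hreg.exists_weightChain hmg hW.2.1 q hL'
  have hcA : 0 < c * A ^ 2 := mul_pos hc (pow_pos (zero_lt_one.trans_le hchain.one_le) 2)
  have hσ' : 0 < σ / (c * A ^ 2) := div_pos hσ hcA
  obtain ⟨C₁, hC₁, h₁⟩ := hfj.exists_hasDerivBounds hU hrU hM hσ'
  obtain ⟨C₂, hC₂, h₂⟩ := hfj'.exists_hasDerivBounds hV hrV hM hσ'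
  have hM₀ (k : ℕ) : 0 ≤ M k := (hchain.pos k).le
  have hf := hroot hchain (lt_max_of_lt_left hC₁) hσ' hr
    (h₁.mono subset_rfl hC₁.le hσ'.le hM₀ (le_max_left _ C₂) le_rfl fun _ ↦ le_rfl)
    (h₂.mono subset_rfl hC₂.le hσ'.le hM₀ (le_max_right C₁ _) le_rfl fun _ ↦ le_rfl)
  rwa [mul_div_cancel₀ _ hcA.ne'] at hf

end PropertyD

/-- for a weight matrix `W`, if `W` is R-regular of R-moderate growth then
the ring of germs at `0 ∈ ℝ` of `E^{W}`-functions (Roumieu) has property (D); if `W` is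
B-regular of B-moderate growth then the Beurling ring has property (D). -/
theorem statement9 (W : Set (ℕ → ℝ)) (hW : IsWeightMatrix W) :
    (RRegular W → RModerateGrowth W →
      ∀ f : ℝ → ℂ, ∀ j : ℕ, 1 ≤ j →
        (∃ U : Set ℝ, IsOpen U ∧ (0 : ℝ) ∈ U ∧ MatrixRoumieuOn W (f ^ j) U) →
        (∃ U : Set ℝ, IsOpen U ∧ (0 : ℝ) ∈ U ∧ MatrixRoumieuOn W (f ^ (j + 1)) U) →
        ∃ U : Set ℝ, IsOpen U ∧ (0 : ℝ) ∈ U ∧ MatrixRoumieuOn W f U) ∧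
    (BRegular W → BModerateGrowth W →
      ∀ f : ℝ → ℂ, ∀ j : ℕ, 1 ≤ j →
        (∃ U : Set ℝ, IsOpen U ∧ (0 : ℝ) ∈ U ∧ MatrixBeurlingOn W (f ^ j) U) →
        (∃ U : Set ℝ, IsOpen U ∧ (0 : ℝ) ∈ U ∧ MatrixBeurlingOn W (f ^ (j + 1)) U) →
        ∃ U : Set ℝ, IsOpen U ∧ (0 : ℝ) ∈ U ∧ MatrixBeurlingOn W f U) := by
  constructor
  · rintro hreg hmg f j hj ⟨U, hU, h0U, hfj⟩ ⟨V, hV, h0V, hfj'⟩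
    obtain ⟨r, hr, hrU, hrV⟩ := exists_pos_closedBall_subset hU hV h0U h0V
    exact ⟨Metric.ball 0 r, Metric.isOpen_ball, Metric.mem_ball_self hr,
      .of_pow hW hreg hmg (Nat.one_le_iff_ne_zero.1 hj) hU hV hr hrU hrV hfj hfj'⟩
  · rintro hreg hmg f j hj ⟨U, hU, h0U, hfj⟩ ⟨V, hV, h0V, hfj'⟩
    obtain ⟨r, hr, hrU, hrV⟩ := exists_pos_closedBall_subset hU hV h0U h0V
    exact ⟨Metric.ball 0 r, Metric.isOpen_ball, Metric.mem_ball_self hr,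
      .of_pow hW hreg hmg (Nat.one_le_iff_ne_zero.1 hj) hU hV hr hrU hrV hfj hfj'⟩
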